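/- arXiv:2205.06685 — 3 statements merged into one kernel-verified Lean document; each statement's English description precedes it below -/
import Mathlib

section
/- Let (U_n) be defined by U_0 = 0, U_1 = 1, U_2 = -1 and U_{n+3} + U_{n+2} + U_{n+1} + 2U_n = 0 (characteristic polynomial f = x^3 + x^2 + x + 2, disc(f) = -83). Then for any prime p not in {2, 3, 47, 83}, p divides U_{p-1} if and only if there exist integers X, Y with 4p = X^2 + 83Y^2. -/
abbrev Eis := QuadraticAlgebra ℤ (-1) (-1)

namespace Eis
open QuadraticAlgebra

theorem ext' {x y : Eis} (h1 : x.re = y.re) (h2 : x.im = y.im) : x = y := QuadraticAlgebra.ext h1 h2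

theorem om_sq : (omega : Eis) * omega = -1 - omega := by
  apply ext' <;> simp

theorem hom_om {K : Type*} [CommRing K] (φ : Eis →+* K) : φ omega ^ 2 = -1 - φ omega := by
  rw [pow_two, ← map_mul, om_sq]; simp

theorem hom_apply {K : Type*} [CommRing K] (φ : Eis →+* K) (z : Eis) :
    φ z = (z.re : K) + z.im * φ omega := by
  have : z = (z.re : Eis) + (z.im : Eis) * omega := by
    apply ext' <;> simp
  conv_lhs => rw [this]
  simp

theorem star_apply {K : Type*} [CommRing K] (φ : Eis →+* K) (z : Eis) :
    φ (star z) = (z.re : K) + z.im * (-1 - φ omega) := by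
  rw [hom_apply]; simp; ring

theorem exists_hom (K : Type*) [Field K] [IsAlgClosed K] : Nonempty (Eis →+* K) := by
  obtain ⟨w, hw⟩ := IsAlgClosed.exists_root (Polynomial.X ^ 2 + Polynomial.X + 1 : Polynomial K) (by
    have : (Polynomial.X ^ 2 + Polynomial.X + 1 : Polynomial K).degree = 2 := by compute_degree!
    rw [this]; decide)
  simp at hw
  exact ⟨(QuadraticAlgebra.lift (R := ℤ) (A := K) ⟨w, by simp; linear_combination hw⟩).toRingHom⟩

def nrm (z : Eis) : ℤ := z.re ^ 2 - z.re * z.im + z.im ^ 2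

theorem mul_star' (z : Eis) : z * star z = (nrm z : Eis) := by
  apply ext'
  · rw [re_intCast]; simp [nrm]; ring
  · rw [im_intCast]; simp [nrm]; ring

theorem nrm_mul (x y : Eis) : nrm (x * y) = nrm x * nrm y := by
  simp [nrm]; ring

theorem nrm_eq_zero {z : Eis} (h : nrm z = 0) : z = 0 := by
  unfold nrm at h
  have h1 : z.re = 0 := by nlinarith [sq_nonneg (2 * z.im - z.re), sq_nonneg z.re]
  have h2 : z.im = 0 := by rw [h1] at h; nlinarith [sq_nonneg z.im]
  exact ext' h1 h2

theorem nrm_nonneg (z : Eis) : 0 ≤ nrm z := by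
  unfold nrm; nlinarith [sq_nonneg (2 * z.im - z.re), sq_nonneg z.re]

theorem hom_inj {K : Type*} [Field K] [CharZero K] (φ : Eis →+* K) : Function.Injective φ := by
  rw [injective_iff_map_eq_zero]
  intro z hz
  have : φ (z * star z) = 0 := by rw [map_mul, hz, zero_mul]
  rw [mul_star'] at this
  simp at this
  exact nrm_eq_zero this

instance : IsDomain Eis := by
  obtain ⟨φ⟩ := exists_hom ℂ
  exact (hom_inj φ).isDomain φ

theorem om_prim : IsPrimitiveRoot (omega : Eis) 3 := by
  refine (IsPrimitiveRoot.iff_orderOf).2 (orderOf_eq_prime ?_ ?_)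
  · rw [pow_succ, pow_two, om_sq, sub_mul, om_sq]; ring
  · intro h; have := congrArg QuadraticAlgebra.im h; simp at this

theorem hom_frob {p : ℕ} [Fact p.Prime] (hp3 : p ≠ 3) {K : Type*} [Field K] [CharP K p]
    (φ : Eis →+* K) (z : Eis) : φ z ^ (p ^ 2) = φ z := by
  have hw3 : φ omega ^ 3 = 1 := by rw [← map_pow, om_prim.pow_eq_one, map_one]
  have hmod : p ^ 2 % 3 = 1 := by
    have : p % 3 ≠ 0 := fun h => hp3 (((Nat.prime_dvd_prime_iff_eq Nat.prime_three Fact.out).1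
      (Nat.dvd_of_mod_eq_zero h)).symm)
    have : p % 3 = 1 ∨ p % 3 = 2 := by omega
    rcases this with h | h <;> simp [Nat.pow_mod, h]
  have hw : φ omega ^ (p ^ 2) = φ omega := by
    rw [← Nat.div_add_mod (p ^ 2) 3, hmod, pow_succ, pow_mul, hw3]; simp
  rw [hom_apply φ z, ← iterateFrobenius_def, map_add, map_mul, map_intCast, map_intCast,
    iterateFrobenius_def, hw]

theorem three_ne_zero' {p : ℕ} [Fact p.Prime] (hp3 : p ≠ 3) {K : Type*} [Field K] [CharP K p] :
    (3 : K) ≠ 0 := by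
  intro h
  have := (CharP.cast_eq_zero_iff K p 3).1 (by exact_mod_cast h)
  exact hp3 ((Nat.prime_dvd_prime_iff_eq Fact.out Nat.prime_three).1 this)

theorem cube_root_inj {p : ℕ} [Fact p.Prime] (hp3 : p ≠ 3) {K : Type*} [Field K] [CharP K p]
    (φ : Eis →+* K) {z : Eis} (hz : z ^ 3 = 1) (h : φ z = 1) : z = 1 := by
  by_contra hne
  have h0 : (z - 1) * (z ^ 2 + z + 1) = 0 := by linear_combination hz
  have h1 : z ^ 2 + z + 1 = 0 := (mul_eq_zero.1 h0).resolve_left (sub_ne_zero.2 hne)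
  have h2 := congrArg φ h1
  simp [h] at h2
  exact three_ne_zero' (K := K) hp3 (by linear_combination h2)

/-- Cubic character with its Jacobi sum. -/
theorem exists_char (q : ℕ) [Fact q.Prime] (hq : q % 3 = 1) :
    ∃ (χ : MulChar (ZMod q) Eis) (J : Eis), orderOf χ = 3 ∧ nrm J = q ∧ J = jacobiSum χ χ ∧
      (star J = jacobiSum χ⁻¹ χ⁻¹) ∧ (3 ∣ J.re + 1) ∧ 3 ∣ J.im := by
  obtain ⟨χ, hχ⟩ := MulChar.exists_mulChar_orderOf (ZMod q) (n := 3)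
    (by rw [ZMod.card]; omega) om_prim
  have hχ3 : χ ^ 3 = 1 := by rw [← hχ]; exact pow_orderOf_eq_one χ
  have hχ1 : χ ≠ 1 := by intro h; rw [h] at hχ; simp at hχ
  have hχ2 : χ * χ ≠ 1 := by
    intro h; apply hχ1
    have : χ ^ 3 = χ * χ * χ := by rw [pow_succ, pow_two]
    rw [h, hχ3] at this; simpa using this.symm
  have hinv : jacobiSum χ⁻¹ χ⁻¹ = star (jacobiSum χ χ) := by
    have : χ⁻¹ = χ.ringHomComp (starRingEnd Eis) := by
      apply eq_comm.1
      refine eq_inv_of_mul_eq_one_left ?_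
      refine MulChar.ext fun a => ?_
      have h3 : χ a ^ 3 = 1 := by
        have := congrArg (fun c : MulChar (ZMod q) Eis => c a) hχ3
        simpa [MulChar.pow_apply_coe] using this
      have hn : nrm (χ a) = 1 := by
        have h1 : nrm (χ a) ^ 3 = 1 := by
          have : nrm ((χ a) ^ 3) = nrm (χ a) ^ 3 := by
            rw [pow_succ, pow_two, nrm_mul, nrm_mul]; ring
          rw [← this, h3]; simp [nrm]
        have h2 := nrm_nonneg (χ a)
        nlinarith [sq_nonneg (nrm (χ a)), sq_nonneg (nrm (χ a) + 1)]
      have := mul_star' (χ a)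
      rw [hn] at this
      rw [MulChar.one_apply_coe, MulChar.mul_apply, MulChar.ringHomComp_apply, mul_comm]
      rw [Int.cast_one] at this
      exact this
    rw [this, jacobiSum_ringHomComp]; rfl
  refine ⟨χ, jacobiSum χ χ, hχ, ?_, rfl, hinv.symm, ?_⟩
  · have hm : jacobiSum χ χ * jacobiSum χ⁻¹ χ⁻¹ = (q : Eis) := by
      obtain ⟨φ⟩ := exists_hom ℂ
      apply hom_inj φ
      have hi := hom_inj φ
      have hc : ringChar ℂ ≠ ringChar (ZMod q) := by
        rw [ZMod.ringChar_zmod_n, ringChar.eq_zero]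
        exact (Fact.out : q.Prime).ne_zero.symm
      have := jacobiSum_mul_jacobiSum_inv (F := ZMod q) (F' := ℂ) hc
        (χ := χ.ringHomComp φ) (φ := χ.ringHomComp φ)
        ((MulChar.ringHomComp_ne_one_iff hi).2 hχ1) ((MulChar.ringHomComp_ne_one_iff hi).2 hχ1)
        (by rw [← MulChar.ringHomComp_mul]; exact (MulChar.ringHomComp_ne_one_iff hi).2 hχ2)
      rw [MulChar.ringHomComp_inv, jacobiSum_ringHomComp, jacobiSum_ringHomComp] at this
      rw [map_mul, this]; simp
    rw [hinv, mul_star'] at hm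
    have := congrArg QuadraticAlgebra.re hm
    simpa using this
  · obtain ⟨z, -, hz⟩ := exists_jacobiSum_eq_neg_one_add (n := 3) (by norm_num) hχ3 hχ3
      (by rw [ZMod.card]; omega) om_prim
    have h2 : ((omega : Eis) - 1) ^ 2 = -3 * omega := by
      have := om_sq; linear_combination this
    rw [h2] at hz
    rw [hz]
    constructor
    · simp
    · simp

end Eis

namespace Eis
open QuadraticAlgebra

theorem sq_sub_one {p : ℕ} [Fact p.Prime] (hp3 : p ≠ 3) : 3 * ((p ^ 2 - 1) / 3) = p ^ 2 - 1 := by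
  have hmod : p ^ 2 % 3 = 1 := by
    have : p % 3 ≠ 0 := fun h => hp3 (((Nat.prime_dvd_prime_iff_eq Nat.prime_three Fact.out).1
      (Nat.dvd_of_mod_eq_zero h)).symm)
    have : p % 3 = 1 ∨ p % 3 = 2 := by omega
    rcases this with h | h <;> simp [Nat.pow_mod, h]
  omega

theorem pow_sub_one {p : ℕ} [Fact p.Prime] {K : Type*} [Field K] {x y : K} (hx : x ≠ 0)
    (h : x ^ (p ^ 2) = y * x) : x ^ (p ^ 2 - 1) = y := by
  have hpos : 0 < p ^ 2 := pow_pos (Fact.out : p.Prime).pos 2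
  apply mul_right_cancel₀ hx
  rw [← h, ← pow_succ, Nat.sub_add_cancel hpos]

theorem recip {q : ℕ} [Fact q.Prime] {χ : MulChar (ZMod q) Eis} {J : Eis}
    (hχ : orderOf χ = 3) (hn : nrm J = q) (hJ : J = jacobiSum χ χ)
    {p : ℕ} [Fact p.Prime] (hp3 : p ≠ 3) (hpq : p ≠ q)
    {K : Type*} [Field K] [CharP K p] [IsAlgClosed K] (φ : Eis →+* K) :
    φ (J ^ 2 * star J) ^ ((p ^ 2 - 1) / 3) = φ (χ (p : ZMod q)) := by
  have hχ3 : χ ^ 3 = 1 := by rw [← hχ]; exact pow_orderOf_eq_one χ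
  have hχ1 : χ ≠ 1 := by intro h; rw [h] at hχ; simp at hχ
  have hv : ∀ a : (ZMod q)ˣ, χ a ^ 3 = 1 := fun a => by
    rw [← MulChar.pow_apply_coe, hχ3, MulChar.one_apply_coe]
  have hqK : (q : K) ≠ 0 := by
    intro h
    have := (CharP.cast_eq_zero_iff K p q).1 h
    exact hpq ((Nat.prime_dvd_prime_iff_eq Fact.out Fact.out).1 this)
  set X := χ.ringHomComp φ with hX
  have hX3 : X ^ 3 = 1 := by
    rw [hX, MulChar.ringHomComp_pow, hχ3, MulChar.ringHomComp_one]
  have hX1 : X ≠ 1 := by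
    intro h
    apply hχ1
    refine MulChar.ext fun a => ?_
    rw [MulChar.one_apply_coe]
    apply cube_root_inj hp3 φ (hv a)
    have := congrArg (fun c : MulChar (ZMod q) K => c a) h
    simpa [hX, MulChar.ringHomComp_apply] using this
  have hXo : orderOf X = 3 := orderOf_eq_prime hX3 hX1
  have : NeZero (q : K) := ⟨hqK⟩
  obtain ⟨ζ, hζ⟩ := HasEnoughRootsOfUnity.exists_primitiveRoot K q
  let ψ := AddChar.zmodChar q ((IsPrimitiveRoot.iff_def ζ q).mp hζ).left
  have hψ : ψ.IsPrimitive := AddChar.zmodChar_primitive_of_primitive_root q hζ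
  have hXv : ∀ a : (ZMod q)ˣ, X a ^ 3 = 1 := fun a => by
    rw [← MulChar.pow_apply_coe, hX3, MulChar.one_apply_coe]
  have hneg : X (-1) = 1 := by
    have h1 : X (-1) ^ 3 = 1 := by simpa using hXv (-1)
    have h2 : X (-1) ^ 2 = 1 := by rw [← map_pow]; simp
    calc X (-1) = X (-1) ^ 3 := by rw [pow_succ, h2, one_mul]
      _ = 1 := h1
  have hG3 : gaussSum X ψ ^ 3 = φ (J ^ 2 * star J) := by
    have := gaussSum_pow_eq_prod_jacobiSum (χ := X) (ψ := ψ) (by omega) hψ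
    rw [hXo] at this
    rw [this, hneg, ZMod.card]
    have h1 : (q : K) = φ (J * star J) := by rw [mul_star', hn]; simp
    have h2 : ∏ i ∈ Finset.Ico 1 (3 - 1), jacobiSum X (X ^ i) = φ J := by
      have : Finset.Ico 1 (3 - 1) = {1} := by decide
      rw [this, Finset.prod_singleton, pow_one, hX, jacobiSum_ringHomComp, hJ]
    rw [h1, h2, one_mul, ← map_mul]
    congr 1; ring
  have hG0 : gaussSum X ψ ≠ 0 := by
    intro h
    rw [h] at hG3
    have h1 : φ (J * star J) = q := by rw [mul_star', hn]; simp
    have h2 : φ J * φ (J * star J) = 0 := by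
      rw [← map_mul, show J * (J * star J) = J ^ 2 * star J by ring, ← hG3]; simp
    rw [h1] at h2
    have h3 : φ J = 0 := (mul_eq_zero.1 h2).resolve_right hqK
    rw [map_mul, h3, zero_mul] at h1
    exact hqK h1.symm
  have hpu : IsUnit (p : ZMod q) := by
    rw [isUnit_iff_ne_zero]
    intro h
    have := (ZMod.natCast_eq_zero_iff p q).1 h
    exact hpq ((Nat.prime_dvd_prime_iff_eq Fact.out Fact.out).1 this).symm
  have hXp3 : X p ^ 3 = 1 := by simpa using hXv hpu.unit
  have hF : gaussSum X ψ ^ (p ^ 2) = X p * gaussSum X ψ := by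
    have hXp : X ^ (p ^ 2) = X := by
      have := sq_sub_one (p := p) hp3
      have h2 : p ^ 2 = 3 * ((p ^ 2 - 1) / 3) + 1 := by
        have : 0 < p ^ 2 := pow_pos (Fact.out : p.Prime).pos 2
        omega
      rw [h2, pow_succ, pow_mul, hX3, one_pow, one_mul]
    have h1 : gaussSum X ψ ^ (p ^ 2) = gaussSum X (AddChar.mulShift ψ ((hpu.unit ^ 2 : (ZMod q)ˣ) : ZMod q)) := by
      rw [pow_two p, pow_mul, gaussSum_frob, gaussSum_frob, ← pow_mul, ← pow_mul, ← pow_two, hXp,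
        AddChar.pow_mulShift]
      simp
    have h2 := gaussSum_mulShift X ψ (hpu.unit ^ 2)
    rw [← h1] at h2
    simp at h2
    linear_combination (-(gaussSum X ψ ^ (p ^ 2))) * hXp3 + X p * h2
  rw [← hG3, ← pow_mul, sq_sub_one hp3, pow_sub_one hG0 hF, hX, MulChar.ringHomComp_apply]

end Eis

namespace Eis
open QuadraticAlgebra

def Good (α : Eis) : Prop := ∃ Ψ : ℤ →* Eis, (∀ m n : ℤ, nrm α ∣ m - n → Ψ m = Ψ n) ∧
  (∀ n : ℤ, IsCoprime n (nrm α) → Ψ n ^ 3 = 1) ∧ Ψ (-1) = 1 ∧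
  ∀ (p : ℕ) [Fact p.Prime], p ≠ 3 → ¬ (p : ℤ) ∣ nrm α →
    ∀ (K : Type) [Field K] [CharP K p] [IsAlgClosed K] (φ : Eis →+* K),
      φ (α ^ 2 * star α) ^ ((p ^ 2 - 1) / 3) = φ (Ψ p)

theorem Good.mul {α β : Eis} (ha : Good α) (hb : Good β) : Good (α * β) := by
  obtain ⟨A, a1, a2, a3, a4⟩ := ha
  obtain ⟨B, b1, b2, b3, b4⟩ := hb
  refine ⟨A * B, ?_, ?_, ?_, ?_⟩
  · intro m n h
    rw [nrm_mul] at h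
    rw [MonoidHom.mul_apply, MonoidHom.mul_apply, a1 m n ((Dvd.intro _ rfl).trans h),
      b1 m n ((Dvd.intro_left _ rfl).trans h)]
  · intro n h
    rw [nrm_mul, IsCoprime.mul_right_iff] at h
    rw [MonoidHom.mul_apply, mul_pow, a2 n h.1, b2 n h.2, one_mul]
  · rw [MonoidHom.mul_apply, a3, b3, one_mul]
  · intro p _ hp3 hp K _ _ _ φ
    rw [nrm_mul] at hp
    rw [MonoidHom.mul_apply, map_mul φ (A _), ← a4 p hp3 (fun h => hp (h.mul_right _)) K φ,
      ← b4 p hp3 (fun h => hp (h.mul_left _)) K φ, ← mul_pow, ← map_mul, star_mul]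
    congr 2; ring

theorem nrm_int (n : ℤ) : nrm (n : Eis) = n ^ 2 := by simp [nrm]

theorem star_int (n : ℤ) : star (n : Eis) = n := by apply ext' <;> simp

theorem hom_pow_eq_one {p : ℕ} [Fact p.Prime] (hp3 : p ≠ 3) {K : Type*} [Field K] [CharP K p]
    (φ : Eis →+* K) {z : Eis} (hz : φ z ≠ 0) : φ z ^ (p ^ 2 - 1) = 1 :=
  pow_sub_one hz (by rw [hom_frob hp3, one_mul])

theorem good_int (n : ℤ) : Good (n : Eis) := by
  refine ⟨1, by simp, by simp, by simp, ?_⟩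
  intro p _ hp3 hp K _ _ _ φ
  rw [nrm_int] at hp
  have : (n : Eis) ^ 2 * star (n : Eis) = (n : Eis) ^ 3 := by rw [star_int]; ring
  rw [this, map_pow, ← pow_mul, sq_sub_one hp3, hom_pow_eq_one hp3]
  · simp
  · simp
    rw [CharP.intCast_eq_zero_iff K p]
    exact fun h => hp (h.trans (dvd_pow_self _ two_ne_zero))

theorem good_char {q : ℕ} [Fact q.Prime] {χ : MulChar (ZMod q) Eis} {J : Eis}
    (hχ : orderOf χ = 3) (hn : nrm J = q) (hJ : J = jacobiSum χ χ) : Good J := by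
  have hχ3 : χ ^ 3 = 1 := by rw [← hχ]; exact pow_orderOf_eq_one χ
  have hv : ∀ a : (ZMod q)ˣ, χ a ^ 3 = 1 := fun a => by
    rw [← MulChar.pow_apply_coe, hχ3, MulChar.one_apply_coe]
  refine ⟨χ.toMonoidHom.comp (Int.castRingHom (ZMod q) : ℤ →* ZMod q), ?_, ?_, ?_, ?_⟩
  · intro m n h
    rw [hn] at h
    have : (m : ZMod q) = n := by
      rw [← sub_eq_zero, ← Int.cast_sub]
      exact (ZMod.intCast_zmod_eq_zero_iff_dvd _ _).2 h
    simp [this]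
  · intro n h
    rw [hn] at h
    have hu : IsUnit (n : ZMod q) := by
      rw [isUnit_iff_ne_zero]
      intro h0
      have h1 := (ZMod.intCast_zmod_eq_zero_iff_dvd _ _).1 h0
      have := h.isUnit_of_dvd' h1 dvd_rfl
      exact (Nat.prime_iff_prime_int.1 (Fact.out : q.Prime)).not_isUnit this
    simpa using hv hu.unit
  · have h1 : χ (-1) ^ 3 = 1 := by simpa using hv (-1)
    have h2 : χ (-1) ^ 2 = 1 := by rw [← map_pow]; simp
    have : χ (-1) = 1 := by
      calc χ (-1) = χ (-1) ^ 3 := by rw [pow_succ, h2, one_mul]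
        _ = 1 := h1
    simpa using this
  · intro p _ hp3 hp K _ _ _ φ
    have hpq : p ≠ q := by
      rintro rfl; exact hp (by rw [hn])
    rw [recip hχ hn hJ hp3 hpq φ]
    simp

theorem nrm_star (z : Eis) : nrm (star z) = nrm z := by simp [nrm]; ring

theorem inert {q : ℕ} [Fact q.Prime] (hq : q % 3 = 2) {a b : ℤ}
    (h : (q : ℤ) ∣ a ^ 2 - a * b + b ^ 2) : (q : ℤ) ∣ a ∧ (q : ℤ) ∣ b := by
  rw [← ZMod.intCast_zmod_eq_zero_iff_dvd] at h
  rw [← ZMod.intCast_zmod_eq_zero_iff_dvd, ← ZMod.intCast_zmod_eq_zero_iff_dvd]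
  push_cast at h
  generalize (a : ZMod q) = x at *
  generalize (b : ZMod q) = y at *
  obtain ⟨k, hk⟩ : ∃ k, q = 3 * k + 2 := ⟨q / 3, by omega⟩
  have h3 : (3 : ZMod q) ≠ 0 := by
    intro h3
    have := (ZMod.natCast_eq_zero_iff 3 q).1 (by exact_mod_cast h3)
    have := (Nat.prime_dvd_prime_iff_eq Fact.out Nat.prime_three).1 this
    omega
  have hc : x ^ 3 = (-y) ^ 3 := by linear_combination (x + y) * h
  have e1 : (x ^ 3) ^ k * x ^ 2 = x := by
    rw [← pow_mul, ← pow_add, ← hk]; exact ZMod.pow_card x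
  have e2 : (x ^ 3) ^ k * (-y) ^ 2 = -y := by
    rw [hc, ← pow_mul, ← pow_add, ← hk]; exact ZMod.pow_card (-y)
  have e3 : x ^ 2 = y ^ 2 := by
    linear_combination (-x) * e1 + (-y) * e2 + (x ^ 3) ^ k * hc
  have e4 : y ^ 2 * (x + y) = 0 := by linear_combination hc - x * e3
  have e5 : y = 0 := by
    rcases mul_eq_zero.1 e4 with h5 | h5
    · exact pow_eq_zero_iff two_ne_zero |>.1 h5
    · have hx : x = -y := by linear_combination h5
      rw [hx] at h
      have : (3 : ZMod q) * y ^ 2 = 0 := by linear_combination h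
      exact pow_eq_zero_iff two_ne_zero |>.1 ((mul_eq_zero.1 this).resolve_left h3)
  refine ⟨?_, e5⟩
  rw [e5] at e3
  exact pow_eq_zero_iff two_ne_zero |>.1 (by simpa using e3)

theorem div_of {q : ℕ} [Fact q.Prime] {α J : Eis} (hJ : nrm J = q) (hα : (q : ℤ) ∣ nrm α)
    (h : (q : ℤ) ∣ (α * star J).im) : ∃ γ, α = J * γ := by
  have hp := Nat.prime_iff_prime_int.1 (Fact.out : q.Prime)
  have hn : (q : ℤ) ∣ nrm (α * star J) := by rw [nrm_mul]; exact hα.mul_right _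
  have hre : (q : ℤ) ∣ (α * star J).re := by
    apply hp.dvd_of_dvd_pow (n := 2)
    have : (α * star J).re ^ 2 = nrm (α * star J) + (α * star J).im * ((α * star J).re - (α * star J).im) := by
      unfold nrm; ring
    rw [this]
    exact dvd_add hn (h.mul_right _)
  obtain ⟨x, hx⟩ := hre
  obtain ⟨y, hy⟩ := h
  refine ⟨⟨x, y⟩, ?_⟩
  have hq0 : (star J : Eis) ≠ 0 := by
    intro h0
    have : nrm (star J) = 0 := by rw [h0]; simp [nrm]
    rw [nrm_star, hJ] at this
    exact hp.ne_zero this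
  apply mul_right_cancel₀ hq0
  have e : α * star J = ((q : ℤ) : Eis) * ⟨x, y⟩ := by
    apply ext'
    · rw [hx]; simp
    · rw [hy]; simp
  rw [e, ← hJ, ← mul_star']; ring

theorem good_of_primary : ∀ (N : ℕ) (α : Eis), (nrm α).natAbs = N → 3 ∣ α.im → ¬ 3 ∣ α.re →
    Good α := by
  intro N
  induction N using Nat.strong_induction_on with
  | _ N ih =>
  intro α hN h1 h2
  by_cases hN1 : N = 1
  · have hn : nrm α = 1 := by have := nrm_nonneg α; omega
    have him : α.im = 0 := by
      obtain ⟨k, hk⟩ := h1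
      unfold nrm at hn
      by_contra h0
      have : k ≠ 0 := by rintro rfl; exact h0 (by simpa using hk)
      have : 1 ≤ k ^ 2 := by have := sq_pos_of_ne_zero this; omega
      rw [hk] at hn
      nlinarith [sq_nonneg (2 * α.re - 3 * k)]
    have : α = (α.re : Eis) := by apply ext' <;> simp [him]
    rw [this]; exact good_int _
  have hpos : 0 < nrm α := by
    rcases (nrm_nonneg α).lt_or_eq with h | h
    · exact h
    · exfalso; apply h2; rw [nrm_eq_zero h.symm]; simp
  obtain ⟨q, hqp, hqN⟩ := Nat.exists_prime_and_dvd hN1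
  have hfq : Fact q.Prime := ⟨hqp⟩
  have hq2 := hqp.two_le
  have hqn : (q : ℤ) ∣ nrm α := by
    rw [← hN] at hqN; exact Int.natCast_dvd.2 hqN
  have key : ∀ J γ : Eis, α = J * γ → 1 < nrm J → Good J → 3 ∣ γ.im → ¬ 3 ∣ γ.re → Good α := by
    intro J γ he hJ1 hJ hg1 hg2
    rw [he]
    refine hJ.mul (ih _ ?_ γ rfl hg1 hg2)
    have : nrm α = nrm J * nrm γ := by rw [he, nrm_mul]
    have h0 := nrm_nonneg γ
    have : 0 < nrm γ := by
      rcases h0.lt_or_eq with h | h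
      · exact h
      · rw [← h] at this; omega
    have : nrm γ < nrm α := by nlinarith
    omega
  have hq3 : q % 3 ≠ 0 := by
    intro h
    have : q = 3 := ((Nat.prime_dvd_prime_iff_eq Nat.prime_three hqp).1
      (Nat.dvd_of_mod_eq_zero h)).symm
    subst this
    apply h2
    apply Int.prime_three.dvd_of_dvd_pow (n := 2)
    have e : α.re ^ 2 = nrm α + α.im * (α.re - α.im) := by unfold nrm; ring
    rw [e]
    exact dvd_add hqn (h1.mul_right _)
  have : q % 3 = 1 ∨ q % 3 = 2 := by omega
  rcases this with hq | hq
  · obtain ⟨χ, J, hχ, hn, hJ, hJ', hr, hi⟩ := exists_char q hq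
    have hns : nrm (star J) = q := by rw [nrm_star, hn]
    have hprod : (q : ℤ) ∣ (α * star J).im * (α * J).im := by
      have : (α * star J).im * (α * J).im = α.im ^ 2 * nrm J - J.im ^ 2 * nrm α := by
        simp [nrm]; ring
      rw [this, hn]
      exact dvd_sub (Dvd.intro_left _ rfl) (hqn.mul_left _)
    have fin : ∀ J γ : Eis, α = J * γ → 3 ∣ J.re + 1 → 3 ∣ J.im → 3 ∣ γ.im ∧ ¬ 3 ∣ γ.re := by
      rintro J γ he ⟨r, hr⟩ ⟨s, hs⟩
      have hr' : J.re = 3 * r - 1 := by omega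
      have e1 : α.re = 3 * (r * γ.re - s * γ.im) - γ.re := by
        rw [he]; simp [hr', hs]; ring
      have e2 : α.im = 3 * (r * γ.im + s * γ.re - s * γ.im) - γ.im := by
        rw [he]; simp [hr', hs]; ring
      omega
    rcases (Nat.prime_iff_prime_int.1 hqp).dvd_or_dvd hprod with h | h
    · obtain ⟨γ, hγ⟩ := div_of hn hqn h
      obtain ⟨f1, f2⟩ := fin J γ hγ hr hi
      exact key J γ hγ (by omega) (good_char hχ hn hJ) f1 f2
    · obtain ⟨γ, hγ⟩ := div_of hns hqn (by rwa [star_star])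
      obtain ⟨f1, f2⟩ := fin (star J) γ hγ (by simp; omega) (by simpa using hi)
      exact key (star J) γ hγ (by omega) (good_char (by rw [orderOf_inv, hχ]) hns hJ') f1 f2
  · obtain ⟨⟨x, hx⟩, ⟨y, hy⟩⟩ := inert hq hqn
    refine key ((q : ℤ) : Eis) ⟨x, y⟩ (ext' (by simp [hx]) (by simp [hy])) ?_ (good_int _) ?_ ?_
    · rw [nrm_int]; nlinarith
    · rw [hy] at h1
      have := (Int.prime_three.dvd_or_dvd h1).resolve_left (by omega)
      simpa using this
    · intro h
      apply h2; rw [hx]; exact Dvd.dvd.mul_left h _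
end Eis

namespace Eis
open QuadraticAlgebra

/-- the element attached to `X, Y` -/
def IsAl (α : Eis) (X Y : ℤ) : Prop := 2 * α.re = 3 * X - 47 * Y ∧ α.im = 3 * X

theorem IsAl.nrm {α : Eis} {X Y M : ℤ} (h : IsAl α X Y) (hM : 4 * M = X ^ 2 + 83 * Y ^ 2) :
    nrm α = 27 * M - 8 * Y ^ 2 := by
  have h1 := h.1
  have h2 := h.2
  unfold Eis.nrm
  rw [h2]
  have : 4 * (α.re ^ 2 - α.re * (3 * X) + (3 * X) ^ 2) = 4 * (27 * M - 8 * Y ^ 2) := by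
    linear_combination (2 * α.re + (3 * X - 47 * Y) - 6 * X) * h1 - 27 * hM
  linarith

theorem hom_ne_zero {p : ℕ} [Fact p.Prime] {K : Type*} [Field K] [CharP K p]
    (φ : Eis →+* K) {z : Eis} (hz : ¬ (p : ℤ) ∣ nrm z) : φ z ≠ 0 ∧ φ (star z) ≠ 0 := by
  have h : φ z * φ (star z) ≠ 0 := by
    rw [← map_mul, mul_star', map_intCast]
    rwa [Ne, CharP.intCast_eq_zero_iff K p]
  exact ⟨left_ne_zero_of_mul h, right_ne_zero_of_mul h⟩

theorem main_sym {X Y M : ℤ} (hM : 4 * M = X ^ 2 + 83 * Y ^ 2) (hMo : ¬ 2 ∣ M)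
    (hc : IsCoprime Y (3 * M)) : ∃ (Ψ : ℤ →* Eis) (α : Eis), IsAl α X Y ∧ Ψ M = 1 ∧
      (∀ n, n ∣ M → Ψ n ^ 3 = 1) ∧ ∀ (p : ℕ) [Fact p.Prime], p ≠ 3 → (p : ℤ) ∣ M →
        ¬ (p : ℤ) ∣ Eis.nrm α ∧
        ∀ (K : Type) [Field K] [CharP K p] [IsAlgClosed K] (φ : Eis →+* K),
          φ (α ^ 2 * star α) ^ ((p ^ 2 - 1) / 3) = φ (Ψ p) := by
  have hc3 : IsCoprime Y 3 := hc.of_mul_right_left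
  have hcM : IsCoprime Y M := hc.of_mul_right_right
  have h3Y : ¬ 3 ∣ Y := fun h => by
    have := hc3.isUnit_of_dvd' h dvd_rfl
    exact Int.prime_three.not_isUnit this
  have hpar : 2 ∣ 3 * X - 47 * Y := by
    have h : (X ^ 2 + 83 * Y ^ 2) % 2 = 0 := by omega
    rcases Int.emod_two_eq_zero_or_one X with hx | hx <;>
    rcases Int.emod_two_eq_zero_or_one Y with hy | hy <;>
    simp [pow_two, Int.add_emod, Int.mul_emod, hx, hy] at h <;> omega
  obtain ⟨r, hr⟩ := hpar
  set α : Eis := ⟨r, 3 * X⟩ with hα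
  have hAl : IsAl α X Y := ⟨by rw [hα]; exact hr.symm, rfl⟩
  have hn := hAl.nrm hM
  obtain ⟨Ψ, P1, P2, P3, P4⟩ := good_of_primary _ α rfl ⟨X, rfl⟩ (by
    intro h
    have : 3 ∣ r := h
    omega)
  have hodd : IsCoprime 2 (Eis.nrm α) := by
    rw [Int.isCoprime_iff_gcd_eq_one]
    have : ¬ 2 ∣ Eis.nrm α := by rw [hn]; omega
    have := (Int.prime_two.coprime_iff_not_dvd (n := Eis.nrm α)).2 this
    exact Int.isCoprime_iff_gcd_eq_one.1 this
  have hcop2 : IsCoprime M 2 := ((Int.prime_two.coprime_iff_not_dvd (n := M)).2 hMo).symm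
  have hMn : IsCoprime M (Eis.nrm α) := by
    have h8 : IsCoprime M (-(2 ^ 3 * Y ^ 2)) :=
      (IsCoprime.mul_right hcop2.pow_right hcM.symm.pow_right).neg_right
    have := h8.add_mul_left_right 27
    have e : 27 * M - 8 * Y ^ 2 = -(2 ^ 3 * Y ^ 2) + M * 27 := by ring
    rw [hn, e]; exact this
  have hYn : IsCoprime Y (Eis.nrm α) := by
    have h8 : IsCoprime Y (3 ^ 3 * M) := IsCoprime.mul_right hc3.pow_right hcM
    have := h8.add_mul_left_right (-8 * Y)
    have e : 27 * M - 8 * Y ^ 2 = 3 ^ 3 * M + Y * (-8 * Y) := by ring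
    rw [hn, e]; exact this
  have h3n : IsCoprime 3 (Eis.nrm α) := by
    have h8 : IsCoprime (3 : ℤ) (-(2 ^ 3 * Y ^ 2)) :=
      (IsCoprime.mul_right (IsCoprime.pow_right (by norm_num)) hc3.symm.pow_right).neg_right
    have := h8.add_mul_left_right (9 * M)
    have e : 27 * M - 8 * Y ^ 2 = -(2 ^ 3 * Y ^ 2) + 3 * (9 * M) := by ring
    rw [hn, e]; exact this
  have hnd : ∀ (n : ℤ) (p : ℕ) [Fact p.Prime], IsCoprime n (Eis.nrm α) → (p : ℤ) ∣ n →
      ¬ (p : ℤ) ∣ Eis.nrm α := by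
    intro n p _ h hp hp'
    exact (Nat.prime_iff_prime_int.1 (Fact.out : p.Prime)).not_isUnit (h.isUnit_of_dvd' hp hp')
  have hY0 : Y ≠ 0 := by rintro rfl; exact h3Y (dvd_zero _)
  have hprime : ∀ p : ℕ, p.Prime → (p : ℤ) ∣ Y → Ψ p = 1 := by
    intro p hp hpY
    have hF : Fact p.Prime := ⟨hp⟩
    have hp3 : p ≠ 3 := by rintro rfl; exact h3Y hpY
    have hpn := hnd Y p hYn hpY
    obtain ⟨φ⟩ := exists_hom (AlgebraicClosure (ZMod p))
    have := P4 p hp3 hpn _ φ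
    apply cube_root_inj hp3 φ (P2 _ (hYn.of_isCoprime_of_dvd_left hpY))
    rw [← this]
    have hne := hom_ne_zero φ hpn
    have hYK : (Y : AlgebraicClosure (ZMod p)) = 0 := (CharP.intCast_eq_zero_iff _ p Y).2 hpY
    by_cases hp2 : p = 2
    · subst hp2
      obtain ⟨y, hy⟩ := hpY
      push_cast at hy
      obtain ⟨x, hx⟩ : ∃ x, X = 2 * x := ⟨X / 2, by omega⟩
      have hM' : M = x ^ 2 + 83 * y ^ 2 := by
        rw [hx, hy] at hM; linarith
      have hro : r % 2 = 1 := by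
        have h1 : r = 3 * x - 47 * y := by omega
        rcases Int.emod_two_eq_zero_or_one x with hx | hx <;>
        rcases Int.emod_two_eq_zero_or_one y with hy | hy <;> try omega
        · exfalso; apply hMo; rw [hM', Int.dvd_iff_emod_eq_zero]
          simp [pow_two, Int.add_emod, Int.mul_emod, hx, hy]
        · exfalso; apply hMo; rw [hM', Int.dvd_iff_emod_eq_zero]
          simp [pow_two, Int.add_emod, Int.mul_emod, hx, hy]
      have hr1 : (r : AlgebraicClosure (ZMod 2)) = 1 := by
        rw [← sub_eq_zero]
        have := (CharP.intCast_eq_zero_iff (AlgebraicClosure (ZMod 2)) 2 (r - 1)).2 (by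
          push_cast; omega)
        simpa using this
      have hX0 : ((3 * X : ℤ) : AlgebraicClosure (ZMod 2)) = 0 :=
        (CharP.intCast_eq_zero_iff _ 2 _).2 (by push_cast; omega)
      have e1 : φ α = 1 := by rw [hom_apply, hα]; simp only [hX0, hr1]; ring
      have e2 : φ (star α) = 1 := by rw [star_apply, hα]; simp only [hX0, hr1]; ring
      rw [map_mul, map_pow, e1, e2]; simp
    · have h2 : (2 : AlgebraicClosure (ZMod p)) ≠ 0 := by
        intro h
        have := (CharP.cast_eq_zero_iff (AlgebraicClosure (ZMod p)) p 2).1 (by exact_mod_cast h)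
        exact hp2 ((Nat.prime_dvd_prime_iff_eq hp Nat.prime_two).1 this)
      have e : φ (star α) = - φ α := by
        rw [hom_apply, hom_apply φ α]
        have := congrArg (Int.cast : ℤ → AlgebraicClosure (ZMod p)) hr
        push_cast at this
        simp [hα]
        linear_combination -47 * hYK - this
      have e3 : φ (α ^ 2 * star α) = φ (-α) ^ 3 := by
        rw [map_mul, e, map_pow, map_neg]; ring
      rw [e3, ← pow_mul, sq_sub_one hp3, hom_pow_eq_one hp3 φ]
      rw [map_neg]; exact neg_ne_zero.2 hne.1
  have hall : ∀ n : ℕ, (n : ℤ) ∣ Y → Ψ n = 1 := by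
    intro n
    induction n using Nat.recOnMul with
    | zero => intro h; exact absurd (zero_dvd_iff.1 (by simpa using h)) hY0
    | one => intro _; simp
    | prime p hp => exact hprime p hp
    | mul a b ha hb =>
      intro h
      push_cast at h ⊢
      rw [map_mul, ha ((Dvd.intro _ rfl).trans h), hb ((Dvd.intro_left _ rfl).trans h), one_mul]
  have hΨY : Ψ Y = 1 := by
    have h1 := hall Y.natAbs (Int.natAbs_dvd.2 dvd_rfl)
    rcases Int.natAbs_eq Y with h | h
    · have e : Ψ Y = Ψ (Y.natAbs : ℤ) := congrArg Ψ h
      rw [e]; exact h1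
    · have e : Ψ Y = Ψ ((-1) * (Y.natAbs : ℤ)) := congrArg Ψ (by omega)
      rw [e, map_mul, P3, h1, one_mul]
  refine ⟨Ψ, α, hAl, ?_, ?_, ?_⟩
  · have h := P1 (3 ^ 3 * M) (2 ^ 3 * Y ^ 2) ⟨1, by rw [hn]; ring⟩
    rw [map_mul, map_mul, map_pow, map_pow, map_pow, P2 3 h3n, P2 2 hodd, hΨY] at h
    simpa using h
  · intro n hnM
    exact P2 n (hMn.of_isCoprime_of_dvd_left hnM)
  · intro p _ hp3 hpM
    exact ⟨hnd M p hMn hpM, fun K _ _ _ φ => P4 p hp3 (hnd M p hMn hpM) K φ⟩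

theorem local_sym {q : ℕ} [Fact q.Prime] (hq3 : q ≠ 3) (hq2 : q ≠ 2) {K : Type} [Field K] [CharP K q]
    (φ : Eis →+* K) {α : Eis} {X Y : ℤ} (hAl : IsAl α X Y) (hα : ¬ (q : ℤ) ∣ nrm α)
    (s : ℤ) (j : ℕ) (g e : Eis) (hX : (X : K) = s * Y)
    (h : (⟨3 * s - 47, 6 * s⟩ : Eis) ^ 2 * star (⟨3 * s - 47, 6 * s⟩ : Eis)
      = 8 * omega ^ j * g ^ 3 + (q : Eis) * e) :
    φ (α ^ 2 * star α) ^ ((q ^ 2 - 1) / 3) = φ omega ^ (j * ((q ^ 2 - 1) / 3)) := by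
  have hne := hom_ne_zero φ hα
  have h2 : (2 : K) ≠ 0 := by
    intro h
    have := (CharP.cast_eq_zero_iff K q 2).1 (by exact_mod_cast h)
    exact hq2 ((Nat.prime_dvd_prime_iff_eq Fact.out Nat.prime_two).1 this)
  set c : Eis := ⟨3 * s - 47, 6 * s⟩ with hcdef
  have hr := congrArg (Int.cast : ℤ → K) hAl.1
  have hi := congrArg (Int.cast : ℤ → K) hAl.2
  push_cast at hr hi
  have e1 : 2 * φ α = Y * φ c := by
    rw [hom_apply φ α, hom_apply φ c, hcdef]
    push_cast
    linear_combination hr + 2 * φ omega * hi + (3 + 6 * φ omega) * hX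
  have e2 : 2 * φ (star α) = Y * φ (star c) := by
    rw [star_apply φ α, star_apply φ c, hcdef]
    push_cast
    linear_combination hr + 2 * (-1 - φ omega) * hi + (3 + 6 * (-1 - φ omega)) * hX
  have hk := congrArg φ h
  simp only [map_add, map_mul, map_pow, map_natCast, CharP.cast_eq_zero, zero_mul, add_zero] at hk
  have h8 : φ 8 = (8 : K) := map_ofNat φ 8
  rw [h8] at hk
  have e3 : φ (α ^ 2 * star α) = φ omega ^ j * φ ((Y : Eis) * g) ^ 3 := by
    have h8' : (8 : K) ≠ 0 := by
      have : (8 : K) = 2 ^ 3 := by norm_num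
      rw [this]; exact pow_ne_zero _ h2
    apply mul_left_cancel₀ h8'
    rw [map_mul, map_pow, map_mul, map_intCast]
    calc 8 * (φ α ^ 2 * φ (star α)) = (2 * φ α) ^ 2 * (2 * φ (star α)) := by ring
      _ = Y ^ 3 * (φ c ^ 2 * φ (star c)) := by rw [e1, e2]; ring
      _ = _ := by rw [hk]; ring
  have hg : φ ((Y : Eis) * g) ≠ 0 := by
    intro h0
    rw [h0, map_mul, map_pow] at e3
    have : φ α ^ 2 * φ (star α) = 0 := by rw [e3]; ring
    exact mul_ne_zero (pow_ne_zero 2 hne.1) hne.2 this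
  rw [e3, mul_pow, ← pow_mul, ← pow_mul, sq_sub_one hq3, hom_pow_eq_one hq3 φ hg, mul_one]

end Eis

namespace Eis
open QuadraticAlgebra

theorem sq_split {q : ℕ} [Fact q.Prime] {K : Type} [Field K] [CharP K q] {X Y : ℤ} (s : ℤ)
    (h : (q : ℤ) ∣ X ^ 2 + 83 * Y ^ 2) (hs : (q : ℤ) ∣ s ^ 2 + 83) :
    (X : K) = s * Y ∨ (X : K) = ((-s : ℤ) : K) * Y := by
  have h1 := (CharP.intCast_eq_zero_iff K q _).2 h
  have h2 := (CharP.intCast_eq_zero_iff K q _).2 hs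
  push_cast at h1 h2 ⊢
  have : ((X : K) - s * Y) * (X - (-s) * Y) = 0 := by linear_combination h1 - Y ^ 2 * h2
  rcases mul_eq_zero.1 this with h | h
  · exact Or.inl (sub_eq_zero.1 h)
  · exact Or.inr (sub_eq_zero.1 h)

theorem om_cube {K : Type*} [CommRing K] (φ : Eis →+* K) : φ omega ^ 3 = 1 := by
  have := hom_om φ
  linear_combination (φ omega - 1) * this

theorem om_ne_one {p : ℕ} [Fact p.Prime] (hp3 : p ≠ 3) {K : Type*} [Field K] [CharP K p]
    (φ : Eis →+* K) : φ omega ≠ 1 := by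
  intro h
  have := hom_om φ
  rw [h] at this
  exact three_ne_zero' (p := p) hp3 (K := K) (by linear_combination this)

theorem om_sq_ne_one {p : ℕ} [Fact p.Prime] (hp3 : p ≠ 3) {K : Type*} [Field K] [CharP K p]
    (φ : Eis →+* K) : φ omega ^ 2 ≠ 1 := by
  intro h
  apply om_ne_one hp3 φ
  have := om_cube φ
  linear_combination this - φ omega * h

theorem om_pow_red {K : Type*} [CommRing K] (φ : Eis →+* K) (n : ℕ) :
    φ omega ^ n = φ omega ^ (n % 3) := pow_eq_pow_mod n (om_cube φ)

theorem sym23 [Fact (Nat.Prime 23)] {K : Type} [Field K] [CharP K 23]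
    (φ : Eis →+* K) {α : Eis} {X Y : ℤ} (hAl : IsAl α X Y) (hα : ¬ ((23 : ℕ) : ℤ) ∣ nrm α)
    (h : ((23 : ℕ) : ℤ) ∣ X ^ 2 + 83 * Y ^ 2) : φ (α ^ 2 * star α) ^ ((23 ^ 2 - 1) / 3) = 1 := by
  rcases sq_split (K := K) 3 h (by norm_num) with hX | hX
  · rw [local_sym (q := 23) (by norm_num) (by norm_num) φ hAl hα 3 0 ⟨-2, 8⟩ ⟨-4360, 1752⟩ hX
      (by apply ext' <;> decide +kernel)]
    simp
  · rw [local_sym (q := 23) (by norm_num) (by norm_num) φ hAl hα (-3) 0 ⟨2, 10⟩ ⟨-6112, -1752⟩ hX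
      (by apply ext' <;> decide +kernel)]
    simp

theorem sym7 [Fact (Nat.Prime 7)] {K : Type} [Field K] [CharP K 7]
    (φ : Eis →+* K) {α : Eis} {X Y : ℤ} (hAl : IsAl α X Y) (hα : ¬ ((7 : ℕ) : ℤ) ∣ nrm α)
    (h : ((7 : ℕ) : ℤ) ∣ X ^ 2 + 83 * Y ^ 2) : φ (α ^ 2 * star α) ^ ((7 ^ 2 - 1) / 3) ≠ 1 := by
  rcases sq_split (K := K) 1 h (by norm_num) with hX | hX
  · rw [local_sym (q := 7) (by norm_num) (by norm_num) φ hAl hα 1 1 ⟨-2, 2⟩ ⟨-14000, 1944⟩ hX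
      (by apply ext' <;> decide +kernel), om_pow_red]
    norm_num
    exact om_ne_one (p := 7) (by norm_num) φ
  · rw [local_sym (q := 7) (by norm_num) (by norm_num) φ hAl hα (-1) 2 ⟨-3, 1⟩ ⟨-16032, -1936⟩ hX
      (by apply ext' <;> decide +kernel), om_pow_red]
    have e : 2 * ((7 ^ 2 - 1) / 3) % 3 = 2 := by norm_num
    rw [e]
    exact om_sq_ne_one (p := 7) (by norm_num) φ

theorem sym11 [Fact (Nat.Prime 11)] {K : Type} [Field K] [CharP K 11]
    (φ : Eis →+* K) {α : Eis} {X Y : ℤ} (hAl : IsAl α X Y) (hα : ¬ ((11 : ℕ) : ℤ) ∣ nrm α)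
    (h : ((11 : ℕ) : ℤ) ∣ X ^ 2 + 83 * Y ^ 2) : φ (α ^ 2 * star α) ^ ((11 ^ 2 - 1) / 3) ≠ 1 := by
  rcases sq_split (K := K) 4 h (by norm_num) with hX | hX
  · rw [local_sym (q := 11) (by norm_num) (by norm_num) φ hAl hα 4 2 ⟨1, -1⟩ ⟨-8401, 5760⟩ hX
      (by apply ext' <;> decide +kernel), om_pow_red]
    have e : 2 * ((11 ^ 2 - 1) / 3) % 3 = 2 := by norm_num
    rw [e]
    exact om_sq_ne_one (p := 11) (by norm_num) φ
  · rw [local_sym (q := 11) (by norm_num) (by norm_num) φ hAl hα (-4) 1 ⟨-1, 1⟩ ⟨-14161, -5760⟩ hX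
      (by apply ext' <;> decide +kernel), om_pow_red]
    norm_num
    exact om_ne_one (p := 11) (by norm_num) φ

theorem prime_sq_dvd {r : ℕ} (hr : r.Prime) {X Y N : ℤ} (h : N = X ^ 2 + 83 * Y ^ 2)
    (hY : (r : ℤ) ∣ Y) (hN : (r : ℤ) ∣ N) : (r : ℤ) ^ 2 ∣ N := by
  have hX : (r : ℤ) ∣ X := by
    have : (r : ℤ) ∣ X ^ 2 := by
      have e : X ^ 2 = N - 83 * Y ^ 2 := by linarith
      rw [e]
      exact dvd_sub hN ((hY.pow two_ne_zero).mul_left _)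
    exact (Nat.prime_iff_prime_int.1 hr).dvd_of_dvd_pow this
  rw [h]
  exact dvd_add (pow_dvd_pow_of_dvd hX 2) ((pow_dvd_pow_of_dvd hY 2).mul_left _)

theorem cop_of_prime {r : ℕ} (hr : r.Prime) {Y : ℤ} (h : ¬ (r : ℤ) ∣ Y) : IsCoprime Y r :=
  (((Nat.prime_iff_prime_int.1 hr).coprime_iff_not_dvd).2 h).symm

/-- if `4 m p = X^2 + 83 Y^2` with `m, p` distinct odd primes, then they do not divide `Y`. -/
theorem not_dvd_Y {m p : ℕ} (hm : m.Prime) (hp : p.Prime) (hmp : m ≠ p) (hm2 : m ≠ 2)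
    {X Y : ℤ} (h : 4 * (m * p : ℤ) = X ^ 2 + 83 * Y ^ 2) : ¬ (m : ℤ) ∣ Y := by
  intro hY
  have := prime_sq_dvd hm h hY (⟨4 * p, by ring⟩)
  have h3 : (m : ℤ) ∣ 4 * p := by
    rw [pow_two, show 4 * (m * p : ℤ) = m * (4 * p) by ring] at this
    exact (mul_dvd_mul_iff_left (by exact_mod_cast hm.ne_zero)).1 this
  have h4 : m ∣ 4 * p := by exact_mod_cast h3
  rcases (Nat.Prime.dvd_mul hm).1 h4 with h | h
  · have : m ∣ 2 ^ 2 := h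
    exact hm2 ((Nat.prime_dvd_prime_iff_eq hm Nat.prime_two).1 (hm.dvd_of_dvd_pow this))
  · exact hmp ((Nat.prime_dvd_prime_iff_eq hm hp).1 h)

theorem odd_mul {m p : ℕ} (hm : m.Prime) (hp : p.Prime) (hm2 : m ≠ 2) (hp2 : p ≠ 2) :
    ¬ (2 : ℤ) ∣ m * p := by
  intro h
  rcases Int.prime_two.dvd_mul.1 h with h | h
  · exact hm2 ((Nat.prime_dvd_prime_iff_eq Nat.prime_two hm).1 (by exact_mod_cast h)).symm
  · exact hp2 ((Nat.prime_dvd_prime_iff_eq Nat.prime_two hp).1 (by exact_mod_cast h)).symm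

/-- common output of the reciprocity computation -/
def Out (p : ℕ) (b : Prop) : Prop :=
  ∃ (X Y : ℤ) (α : Eis), IsAl α X Y ∧ (p : ℤ) ∣ X ^ 2 + 83 * Y ^ 2 ∧ ¬ (p : ℤ) ∣ Y ∧
    ¬ (p : ℤ) ∣ nrm α ∧ ∀ (K : Type) [Field K] [CharP K p] [IsAlgClosed K] (φ : Eis →+* K),
      (φ (α ^ 2 * star α) ^ ((p ^ 2 - 1) / 3) = 1 ↔ b)

theorem two_primes {m p : ℕ} [hm : Fact m.Prime] [hp : Fact p.Prime] (hmp : m ≠ p) (hm2 : m ≠ 2)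
    (hp2 : p ≠ 2) (hm3 : m ≠ 3) (hp3 : p ≠ 3)
    {X Y : ℤ} (h : 4 * (m * p : ℤ) = X ^ 2 + 83 * Y ^ 2) (h3 : ¬ 3 ∣ Y) (b : Prop)
    (hb : ∀ (K : Type) [Field K] [CharP K m] [IsAlgClosed K] (φ : Eis →+* K) (α : Eis), IsAl α X Y →
      ¬ (m : ℤ) ∣ nrm α → (φ (α ^ 2 * star α) ^ ((m ^ 2 - 1) / 3) = 1 ↔ b)) : Out p b := by
  have n1 := not_dvd_Y hm.out hp.out hmp hm2 h
  have n2 := not_dvd_Y hp.out hm.out hmp.symm hp2 (by rw [mul_comm (p : ℤ)]; exact h)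
  obtain ⟨Ψ, α, a1, a2, a3, a4⟩ := main_sym h (odd_mul hm.out hp.out hm2 hp2)
    (IsCoprime.mul_right (cop_of_prime Nat.prime_three h3)
      (IsCoprime.mul_right (cop_of_prime hm.out n1) (cop_of_prime hp.out n2)))
  obtain ⟨b1, b2⟩ := a4 m hm3 ⟨p, rfl⟩
  obtain ⟨c1, c2⟩ := a4 p hp3 ⟨m, mul_comm _ _⟩
  refine ⟨X, Y, α, a1, ⟨4 * m, by rw [← h]; ring⟩, n2, c1, fun K _ _ _ φ => ?_⟩
  rw [c2 K φ]
  rw [map_mul] at a2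
  obtain ⟨φm⟩ := exists_hom (AlgebraicClosure (ZMod m))
  rw [← hb _ φm α a1 b1, b2]
  have t1 : φ (Ψ p) = 1 ↔ Ψ p = 1 :=
    ⟨cube_root_inj hp3 φ (a3 _ ⟨m, mul_comm _ _⟩), fun h => by rw [h, map_one]⟩
  have t2 : φm (Ψ m) = 1 ↔ Ψ m = 1 :=
    ⟨cube_root_inj hm3 φm (a3 _ ⟨p, rfl⟩), fun h => by rw [h, map_one]⟩
  rw [t1, t2]
  constructor
  · intro h; rwa [h, mul_one] at a2
  · intro h; rwa [h, one_mul] at a2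

theorem principal {p : ℕ} [hp : Fact p.Prime] (hp2 : p ≠ 2) (hp3 : p ≠ 3) {X Y : ℤ}
    (h : 4 * (p : ℤ) = X ^ 2 + 83 * Y ^ 2) : Out p True := by
  have hpY : ¬ (p : ℤ) ∣ Y := by
    intro hY
    have := prime_sq_dvd hp.out h hY (⟨4, by ring⟩)
    rw [pow_two, mul_comm 4 (p : ℤ)] at this
    have h4 : (p : ℤ) ∣ 4 := (mul_dvd_mul_iff_left (by exact_mod_cast hp.out.ne_zero)).1 this
    have h5 : p ∣ 2 ^ 2 := by exact_mod_cast h4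
    exact hp2 ((Nat.prime_dvd_prime_iff_eq hp.out Nat.prime_two).1 (hp.out.dvd_of_dvd_pow h5))
  by_cases h3 : 3 ∣ Y
  · have h3X : ¬ 3 ∣ X := by
      intro hX
      have : (3 : ℤ) ∣ 4 * p := by
        rw [h]; exact dvd_add (hX.pow two_ne_zero) ((h3.pow two_ne_zero).mul_left _)
      have h4 : (3 : ℤ) ∣ p := by omega
      exact hp3 ((Nat.prime_dvd_prime_iff_eq Nat.prime_three hp.out).1 (by exact_mod_cast h4)).symm
    have hpar : 2 ∣ X + Y := by
      have h : (X ^ 2 + 83 * Y ^ 2) % 2 = 0 := by omega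
      rcases Int.emod_two_eq_zero_or_one X with hx | hx <;>
      rcases Int.emod_two_eq_zero_or_one Y with hy | hy <;>
      simp [pow_two, Int.add_emod, Int.mul_emod, hx, hy] at h <;> omega
    obtain ⟨k, hk⟩ := hpar
    have : Fact (Nat.Prime 23) := ⟨by norm_num⟩
    have hp23 : 23 ≠ p := by
      rintro rfl
      obtain ⟨y, rfl⟩ := h3
      have hy : y = 0 := by
        by_contra hy
        have : 1 ≤ y ^ 2 := by have := sq_pos_of_ne_zero hy; omega
        push_cast at h
        nlinarith [sq_nonneg X]
      subst hy
      push_cast at h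
      have : X ≤ 9 := by nlinarith
      have : -9 ≤ X := by nlinarith
      interval_cases X <;> omega
    have hX : X = 2 * k - Y := by omega
    refine two_primes (m := 23) (X := 3 * k - 43 * Y) (Y := k + Y) hp23 (by norm_num) hp2 (by norm_num) hp3
      ?_ (by omega) True ?_
    · subst hX
      push_cast
      linear_combination 23 * h
    · intro K _ _ _ φ α hα hn
      refine iff_true_intro (sym23 φ hα hn ⟨4 * p, ?_⟩)
      subst hX
      push_cast
      linear_combination -23 * h
  · obtain ⟨Ψ, α, a1, a2, a3, a4⟩ := main_sym h
      (by intro h; exact hp2 ((Nat.prime_dvd_prime_iff_eq Nat.prime_two hp.out).1 (by exact_mod_cast h)).symm)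
      (IsCoprime.mul_right (cop_of_prime Nat.prime_three h3) (cop_of_prime hp.out hpY))
    obtain ⟨c1, c2⟩ := a4 p hp3 dvd_rfl
    exact ⟨X, Y, α, a1, ⟨4, by rw [← h]; ring⟩, hpY, c1, fun K _ _ _ φ => by
      rw [c2 K φ, a2, map_one]; simp⟩

theorem nonprincipal {p : ℕ} [hp : Fact p.Prime] (hp2 : p ≠ 2) (hp3 : p ≠ 3) (hp7 : 7 ≠ p)
    (hp11 : 11 ≠ p) {x y : ℤ}
    (h : (p : ℤ) = 3 * x ^ 2 + x * y + 7 * y ^ 2) : Out p False := by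
  have : Fact (Nat.Prime 7) := ⟨by norm_num⟩
  have : Fact (Nat.Prime 11) := ⟨by norm_num⟩
  by_cases h3 : 3 ∣ x
  · have h3' : ¬ 3 ∣ x - y := by
      intro h3'
      have hy : 3 ∣ y := by omega
      have h4 : (3 : ℤ) ∣ p := by
        obtain ⟨a, rfl⟩ := h3
        obtain ⟨b, rfl⟩ := hy
        exact ⟨9 * a ^ 2 + 3 * a * b + 21 * b ^ 2, by rw [h]; ring⟩
      exact hp3 ((Nat.prime_dvd_prime_iff_eq Nat.prime_three hp.out).1 (by exact_mod_cast h4)).symm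
    refine two_primes (m := 11) (X := 22 * y + 7 * (x - y)) (Y := x - y) hp11 (by norm_num) hp2
      (by norm_num) hp3 ?_ h3' False ?_
    · push_cast
      linear_combination 44 * h
    · intro K _ _ _ φ α hα hn
      refine iff_false_intro (sym11 φ hα hn ⟨4 * p, ?_⟩)
      push_cast
      linear_combination -44 * h
  · refine two_primes (m := 7) (X := 14 * y + x) (Y := x) hp7 (by norm_num) hp2
      (by norm_num) hp3 ?_ h3 False ?_
    · push_cast
      linear_combination 28 * h
    · intro K _ _ _ φ α hα hn
      refine iff_false_intro (sym7 φ hα hn ⟨4 * p, ?_⟩)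
      push_cast
      linear_combination -28 * h

end Eis

namespace Eis

/-- reduction of forms of discriminant -83 -/
theorem reduce (n : ℕ) : ∀ (a b c : ℤ), 0 < a → 0 < c → b ^ 2 - 4 * a * c = -83 →
    (a + c).toNat ≤ n → ∀ x y : ℤ, ∃ u v : ℤ,
      a * x ^ 2 + b * x * y + c * y ^ 2 = u ^ 2 + u * v + 21 * v ^ 2 ∨
      a * x ^ 2 + b * x * y + c * y ^ 2 = 3 * u ^ 2 + u * v + 7 * v ^ 2 := by
  induction n with
  | zero => intro a b c ha hc _ h; omega
  | succ n ih =>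
    intro a b c ha hc hd hn x y
    by_cases h1 : a < b
    · -- replace x by x - y
      have hpos : 0 < a - b + c := by
        nlinarith [sq_nonneg (2 * a - b)]
      obtain ⟨u, v, h⟩ := ih a (b - 2 * a) (a - b + c) ha hpos (by linear_combination hd) (by omega)
        (x + y) y
      refine ⟨u, v, ?_⟩
      rcases h with h | h
      · left; rw [← h]; ring
      · right; rw [← h]; ring
    by_cases h2 : b < -a
    · have hpos : 0 < a + b + c := by
        nlinarith [sq_nonneg (2 * a + b)]
      obtain ⟨u, v, h⟩ := ih a (b + 2 * a) (a + b + c) ha hpos (by linear_combination hd) (by omega)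
        (x - y) y
      refine ⟨u, v, ?_⟩
      rcases h with h | h
      · left; rw [← h]; ring
      · right; rw [← h]; ring
    by_cases h3 : c < b
    · have hpos : 0 < a - b + c := by
        nlinarith [sq_nonneg (2 * c - b)]
      obtain ⟨u, v, h⟩ := ih (a - b + c) (b - 2 * c) c hpos hc (by linear_combination hd) (by omega)
        x (x + y)
      refine ⟨u, v, ?_⟩
      rcases h with h | h
      · left; rw [← h]; ring
      · right; rw [← h]; ring
    by_cases h4 : b < -c
    · have hpos : 0 < a + b + c := by
        nlinarith [sq_nonneg (2 * c + b)]
      obtain ⟨u, v, h⟩ := ih (a + b + c) (b + 2 * c) c hpos hc (by linear_combination hd) (by omega)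
        x (y - x)
      refine ⟨u, v, ?_⟩
      rcases h with h | h
      · left; rw [← h]; ring
      · right; rw [← h]; ring
    push Not at h1 h2 h3 h4
    have hbb : b ^ 2 ≤ a * c := by
      rcases le_total 0 b with hb | hb <;> nlinarith
    have hb5 : b ≤ 5 := by nlinarith
    have hb5' : -5 ≤ b := by nlinarith
    have hac : 4 * (a * c) = b ^ 2 + 83 := by linarith
    have key : ∀ N : ℕ, a * c = N → ∃ a' c' : ℕ, a = a' ∧ c = c' ∧ (a', c') ∈ N.divisorsAntidiagonal := by
      intro N hN
      refine ⟨a.toNat, c.toNat, by omega, by omega, ?_⟩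
      rw [Nat.mem_divisorsAntidiagonal]
      have : ((a.toNat * c.toNat : ℕ) : ℤ) = N := by
        push_cast
        rw [Int.toNat_of_nonneg ha.le, Int.toNat_of_nonneg hc.le, hN]
      refine ⟨by exact_mod_cast this, ?_⟩
      rintro rfl
      have := mul_pos ha hc
      simp [hN] at this
    have hb : b = 1 ∨ b = -1 ∨ b = 3 ∨ b = -3 ∨ b = 5 ∨ b = -5 := by
      interval_cases b <;> omega
    have d21 : Nat.divisorsAntidiagonal 21 = {(1, 21), (3, 7), (7, 3), (21, 1)} := by decide +kernel
    have d23 : Nat.divisorsAntidiagonal 23 = {(1, 23), (23, 1)} := by decide +kernel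
    have d27 : Nat.divisorsAntidiagonal 27 = {(1, 27), (3, 9), (9, 3), (27, 1)} := by decide +kernel
    rcases hb with rfl | rfl | rfl | rfl | rfl | rfl
    · obtain ⟨a', c', rfl, rfl, h⟩ := key 21 (by push_cast; linarith)
      rw [d21] at h
      simp only [Finset.mem_insert, Finset.mem_singleton, Prod.mk.injEq] at h
      rcases h with ⟨rfl, rfl⟩ | ⟨rfl, rfl⟩ | ⟨rfl, rfl⟩ | ⟨rfl, rfl⟩
      · exact ⟨x, y, Or.inl (by push_cast; ring)⟩
      · exact ⟨x, y, Or.inr (by push_cast; ring)⟩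
      · exact ⟨y, x, Or.inr (by push_cast; ring)⟩
      · exact ⟨y, x, Or.inl (by push_cast; ring)⟩
    · obtain ⟨a', c', rfl, rfl, h⟩ := key 21 (by push_cast; linarith)
      rw [d21] at h
      simp only [Finset.mem_insert, Finset.mem_singleton, Prod.mk.injEq] at h
      rcases h with ⟨rfl, rfl⟩ | ⟨rfl, rfl⟩ | ⟨rfl, rfl⟩ | ⟨rfl, rfl⟩
      · exact ⟨x, -y, Or.inl (by push_cast; ring)⟩
      · exact ⟨x, -y, Or.inr (by push_cast; ring)⟩
      · exact ⟨y, -x, Or.inr (by push_cast; ring)⟩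
      · exact ⟨y, -x, Or.inl (by push_cast; ring)⟩
    · obtain ⟨a', c', rfl, rfl, h⟩ := key 23 (by push_cast; linarith)
      rw [d23] at h
      simp only [Finset.mem_insert, Finset.mem_singleton, Prod.mk.injEq] at h
      omega
    · obtain ⟨a', c', rfl, rfl, h⟩ := key 23 (by push_cast; linarith)
      rw [d23] at h
      simp only [Finset.mem_insert, Finset.mem_singleton, Prod.mk.injEq] at h
      omega
    · obtain ⟨a', c', rfl, rfl, h⟩ := key 27 (by push_cast; linarith)
      rw [d27] at h
      simp only [Finset.mem_insert, Finset.mem_singleton, Prod.mk.injEq] at h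
      omega
    · obtain ⟨a', c', rfl, rfl, h⟩ := key 27 (by push_cast; linarith)
      rw [d27] at h
      simp only [Finset.mem_insert, Finset.mem_singleton, Prod.mk.injEq] at h
      omega

theorem forms {p : ℕ} (hp0 : 0 < p) (hp2 : ¬ 2 ∣ p) {b : ℤ} (h : (p : ℤ) ∣ b ^ 2 + 83) :
    (∃ X Y : ℤ, 4 * (p : ℤ) = X ^ 2 + 83 * Y ^ 2) ∨
      ∃ x y : ℤ, (p : ℤ) = 3 * x ^ 2 + x * y + 7 * y ^ 2 := by
  obtain ⟨b', hb', h'⟩ : ∃ b' : ℤ, b' % 2 = 1 ∧ (p : ℤ) ∣ b' ^ 2 + 83 := by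
    rcases Int.emod_two_eq_zero_or_one b with hb | hb
    · refine ⟨b + p, by omega, ?_⟩
      have e : (b + p) ^ 2 + 83 = (b ^ 2 + 83) + p * (2 * b + p) := by ring
      rw [e]; exact dvd_add h ⟨_, rfl⟩
    · exact ⟨b, hb, h⟩
  obtain ⟨k, hk⟩ := h'
  obtain ⟨t, rfl⟩ : ∃ t, b' = 2 * t + 1 := ⟨b' / 2, by omega⟩
  have h4 : (4 : ℤ) ∣ p * k := by
    rw [← hk]; exact ⟨t ^ 2 + t + 21, by ring⟩
  have hcop : IsCoprime (4 : ℤ) p := by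
    have : Nat.Coprime (2 ^ 2) p := Nat.Coprime.pow_left 2 ((Nat.prime_two.coprime_iff_not_dvd).2 hp2)
    exact_mod_cast Nat.isCoprime_iff_coprime.2 this
  obtain ⟨c, rfl⟩ := hcop.dvd_of_dvd_mul_left h4
  have hp0' : (0 : ℤ) < p := by exact_mod_cast hp0
  have hc : 0 < c := by
    have : 0 < (p : ℤ) * (4 * c) := by rw [← hk]; positivity
    have := pos_of_mul_pos_right this hp0'.le
    linarith
  obtain ⟨u, v, h⟩ := reduce _ p (2 * t + 1) c hp0' hc (by linear_combination hk) le_rfl 1 0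
  rcases h with h | h
  · left; exact ⟨2 * u + v, v, by linear_combination 4 * h⟩
  · right; exact ⟨u, v, by linear_combination h⟩

end Eis

namespace Eis
open QuadraticAlgebra

theorem U_eq {K : Type*} [Field K] (U : ℕ → ℤ)
    (h0 : U 0 = 0) (h1 : U 1 = 1) (h2 : U 2 = -1)
    (hrec : ∀ n, U (n + 3) + U (n + 2) + U (n + 1) + 2 * U n = 0) {a b c : K}
    (e1 : a + b + c = -1) (e2 : a * b + b * c + c * a = 1) (e3 : a * b * c = -2) (n : ℕ) :
    (U n : K) * (a ^ 2 * (b - c) + b ^ 2 * (c - a) + c ^ 2 * (a - b)) =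
      a ^ (n + 1) * (b - c) + b ^ (n + 1) * (c - a) + c ^ (n + 1) * (a - b) := by
  have ra : a ^ 3 + a ^ 2 + a + 2 = 0 := by linear_combination a ^ 2 * e1 - a * e2 + e3
  have rb : b ^ 3 + b ^ 2 + b + 2 = 0 := by linear_combination b ^ 2 * e1 - b * e2 + e3
  have rc : c ^ 3 + c ^ 2 + c + 2 = 0 := by linear_combination c ^ 2 * e1 - c * e2 + e3
  induction n using Nat.strong_induction_on with
  | _ n ih =>
    match n with
    | 0 => rw [h0]; push_cast; ring
    | 1 => rw [h1]; push_cast; ring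
    | 2 =>
      rw [h2]; push_cast
      linear_combination -(a ^ 2 * (b - c) + b ^ 2 * (c - a) + c ^ 2 * (a - b)) * e1
    | n + 3 =>
      have i0 := ih n (by omega)
      have i1 := ih (n + 1) (by omega)
      have i2 := ih (n + 2) (by omega)
      have hr := congrArg (Int.cast : ℤ → K) (hrec n)
      push_cast at hr
      linear_combination (a ^ 2 * (b - c) + b ^ 2 * (c - a) + c ^ 2 * (a - b)) * hr - i2 - i1 - 2 * i0
        - a ^ (n + 1) * (b - c) * ra - b ^ (n + 1) * (c - a) * rb - c ^ (n + 1) * (a - b) * rc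

/-- Cardano data -/
structure Card {K : Type} [Field K] (w z u v a b c : K) : Prop where
  hw : w ^ 2 = -1 - w
  hz : z ^ 2 = -83
  h2 : (2 : K) ≠ 0
  h3 : (3 : K) ≠ 0
  hu : 2 * u ^ 3 = -47 + 3 * (1 + 2 * w) * z
  huv : u * v = -2
  ha : 3 * a + 1 = u + v
  hb : 3 * b + 1 = u * w + v * w ^ 2
  hc : 3 * c + 1 = u * w ^ 2 + v * w

namespace Card
variable {K : Type} [Field K] {w z u v a b c : K}

theorem u0 (h : Card w z u v a b c) : u ≠ 0 := by
  intro hu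
  have := h.huv
  rw [hu] at this
  exact h.h2 (by linear_combination this)

theorem v0 (h : Card w z u v a b c) : v ≠ 0 := by
  intro hu
  have := h.huv
  rw [hu] at this
  exact h.h2 (by linear_combination this)

theorem hv (h : Card w z u v a b c) : 2 * v ^ 3 = -47 - 3 * (1 + 2 * w) * z := by
  have hu := h.hu
  have huv := h.huv
  apply mul_left_cancel₀ (pow_ne_zero 3 h.u0)
  have e : u ^ 3 * (2 * v ^ 3) = -16 := by
    calc u ^ 3 * (2 * v ^ 3) = 2 * (u * v) ^ 3 := by ring
      _ = _ := by rw [huv]; ring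
  rw [e]
  apply mul_left_cancel₀ h.h2
  linear_combination -(-47 - 3 * (1 + 2 * w) * z) * hu + 9 * (1 + 2 * w) ^ 2 * h.hz - 9 * 83 * 4 * h.hw

theorem huv3 (h : Card w z u v a b c) : u ^ 3 + v ^ 3 = -47 := by
  apply mul_left_cancel₀ h.h2
  linear_combination h.hu + h.hv

theorem huv3' (h : Card w z u v a b c) : u ^ 3 - v ^ 3 = 3 * (1 + 2 * w) * z := by
  apply mul_left_cancel₀ h.h2
  linear_combination h.hu - h.hv

theorem w3 (h : Card w z u v a b c) : w ^ 3 = 1 := by linear_combination (w - 1) * h.hw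

theorem e1 (h : Card w z u v a b c) : a + b + c = -1 := by
  apply mul_left_cancel₀ h.h3
  linear_combination h.ha + h.hb + h.hc + (u + v) * h.hw

theorem ab (h : Card w z u v a b c) : (3 * a + 1) * (3 * b + 1) + (3 * b + 1) * (3 * c + 1) + (3 * c + 1) * (3 * a + 1) = 6 := by
  rw [h.ha, h.hb, h.hc]
  have w2 := h.hw
  have w3 := h.w3
  have w4 : w ^ 4 = w := by linear_combination w * w3
  have : (u + v) * (u * w + v * w ^ 2) + (u * w + v * w ^ 2) * (u * w ^ 2 + v * w) + (u * w ^ 2 + v * w) * (u + v)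
    = u ^ 2 * (w + w ^ 2 + w ^ 3) + v ^ 2 * (w + w ^ 2 + w ^ 3) + u * v * (2 * w + 3 * w ^ 2 + w ^ 4) := by ring
  rw [this, w4, w3, w2, h.huv]; ring

theorem e2 (h : Card w z u v a b c) : a * b + b * c + c * a = 1 := by
  apply mul_left_cancel₀ (pow_ne_zero 2 h.h3)
  linear_combination h.ab - 6 * h.e1

theorem abc (h : Card w z u v a b c) : (3 * a + 1) * (3 * b + 1) * (3 * c + 1) = -47 := by
  rw [h.ha, h.hb, h.hc]
  have w3 := h.w3
  have w4 : w ^ 4 = w := by linear_combination w * w3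
  have : (u + v) * (u * w + v * w ^ 2) * (u * w ^ 2 + v * w) =
    u ^ 3 * w ^ 3 + v ^ 3 * w ^ 3 + (u ^ 2 * v + u * v ^ 2) * (w ^ 2 + w ^ 3 + w ^ 4) := by ring
  rw [this, w4, w3, h.hw]
  linear_combination h.huv3

theorem e3 (h : Card w z u v a b c) : a * b * c = -2 := by
  apply mul_left_cancel₀ (pow_ne_zero 3 h.h3)
  linear_combination h.abc - 9 * h.e2 - 3 * h.e1

theorem V_sq (h : Card w z u v a b c) :
    (a ^ 2 * (b - c) + b ^ 2 * (c - a) + c ^ 2 * (a - b)) ^ 2 = -83 := by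
  have : (a ^ 2 * (b - c) + b ^ 2 * (c - a) + c ^ 2 * (a - b)) ^ 2 =
    (a + b + c) ^ 2 * (a * b + b * c + c * a) ^ 2 - 4 * (a * b + b * c + c * a) ^ 3
    - 4 * (a + b + c) ^ 3 * (a * b * c) + 18 * (a + b + c) * (a * b + b * c + c * a) * (a * b * c)
    - 27 * (a * b * c) ^ 2 := by ring
  rw [this, h.e1, h.e2, h.e3]; norm_num

theorem frob1 (h : Card w z u v a b c) (F : K →+* K) (hF : F u ^ 3 = u ^ 3) :
    ∃ ζ, ζ ^ 3 = 1 ∧ F u = u * ζ ∧ F v = v * ζ ^ 2 := by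
  have hu := h.u0
  have e : F u = u * (F u / u) := by field_simp
  have h3 : (F u / u) ^ 3 = 1 := by
    rw [div_pow, hF, div_self (pow_ne_zero 3 hu)]
  refine ⟨F u / u, h3, e, ?_⟩
  set ζ := F u / u
  have hm : F u * F v = -2 := by rw [← map_mul, h.huv, map_neg, map_ofNat F 2]
  have hFu : F u ≠ 0 := by simpa using hu
  apply mul_left_cancel₀ hFu
  rw [hm]
  nth_rewrite 1 [e]
  linear_combination -ζ ^ 3 * h.huv + 2 * h3

theorem frob2 (h : Card w z u v a b c) (F : K →+* K) (hF : F u ^ 3 = v ^ 3) :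
    ∃ ζ, ζ ^ 3 = 1 ∧ F u = v * ζ ∧ F v = u * ζ ^ 2 := by
  have hu := h.u0
  have hv := h.v0
  have e : F u = v * (F u / v) := by field_simp
  have h3 : (F u / v) ^ 3 = 1 := by
    rw [div_pow, hF, div_self (pow_ne_zero 3 hv)]
  refine ⟨F u / v, h3, e, ?_⟩
  set ζ := F u / v
  have hm : F u * F v = -2 := by rw [← map_mul, h.huv, map_neg, map_ofNat F 2]
  have hFu : F u ≠ 0 := by simpa using hu
  apply mul_left_cancel₀ hFu
  rw [hm]
  nth_rewrite 1 [e]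
  linear_combination -ζ ^ 3 * h.huv + 2 * h3

theorem Feq (h : Card w z u v a b c) (F : K →+* K) :
    2 * F u ^ 3 = -47 + 3 * (1 + 2 * F w) * F z := by
  have := congrArg F h.hu
  simpa [map_ofNat F 2, map_ofNat F 3, map_ofNat F 47] using this

theorem Fabc (h : Card w z u v a b c) (F : K →+* K) :
    3 * F a + 1 = F u + F v ∧ 3 * F b + 1 = F u * F w + F v * F w ^ 2 ∧
      3 * F c + 1 = F u * F w ^ 2 + F v * F w := by
  refine ⟨?_, ?_, ?_⟩
  · simpa [map_ofNat F 3] using congrArg F h.ha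
  · simpa [map_ofNat F 3] using congrArg F h.hb
  · simpa [map_ofNat F 3] using congrArg F h.hc

theorem root3 (h : Card w z u v a b c) {η : K} (hη : η ^ 3 = 1) : η = 1 ∨ η = w ∨ η = w ^ 2 := by
  have : (η - 1) * ((η - w) * (η - w ^ 2)) = 0 := by
    linear_combination hη - (η - 1) * η * h.hw + (η - 1) * h.w3
  rcases mul_eq_zero.1 this with h | h
  · exact Or.inl (sub_eq_zero.1 h)
  rcases mul_eq_zero.1 h with h | h
  · exact Or.inr (Or.inl (sub_eq_zero.1 h))
  · exact Or.inr (Or.inr (sub_eq_zero.1 h))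

/-- square case -/
theorem cyc (h : Card w z u v a b c) (F : K →+* K) (hw : F w = w ∨ F w = -1 - w) (hz : F z = z) :
    ∃ η, η ^ 3 = 1 ∧ (F η = η ∧ F u = u * η ∨ F η = η ^ 2 ∧ F u = v * η ^ 2 ∧ F v = u * η) ∧
      3 * F a + 1 = u * η + v * η ^ 2 ∧ 3 * F b + 1 = u * η * w + v * η ^ 2 * w ^ 2 ∧
      3 * F c + 1 = u * η * w ^ 2 + v * η ^ 2 * w := by
  obtain ⟨fa, fb, fc⟩ := h.Fabc F
  have fe := h.Feq F
  have w3 := h.w3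
  have w4 : w ^ 4 = w := by linear_combination w * w3
  rcases hw with hw | hw
  · obtain ⟨ζ, z3, h1, h2⟩ := h.frob1 F (by
      apply mul_left_cancel₀ h.h2
      rw [fe, hw, hz, h.hu])
    refine ⟨ζ, z3, Or.inl ⟨?_, h1⟩, ?_, ?_, ?_⟩
    · rcases h.root3 z3 with rfl | rfl | rfl
      · simp
      · exact hw
      · rw [map_pow, hw]
    · rw [fa, h1, h2]
    · rw [fb, h1, h2, hw]
    · rw [fc, h1, h2, hw]
  · obtain ⟨ζ, z3, h1, h2⟩ := h.frob2 F (by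
      apply mul_left_cancel₀ h.h2
      rw [fe, hw, hz, h.hv]; ring)
    rw [← h.hw] at hw
    refine ⟨ζ ^ 2, by rw [← pow_mul, mul_comm, pow_mul, z3, one_pow], Or.inr ⟨?_, ?_, ?_⟩, ?_, ?_, ?_⟩
    · rw [map_pow]
      congr 1
      rcases h.root3 z3 with rfl | rfl | rfl
      · simp
      · exact hw
      · rw [map_pow, hw]
    · rw [h1]; linear_combination -v * ζ * z3
    · exact h2
    · rw [fa, h1, h2]; linear_combination -v * ζ * z3
    · rw [fb, h1, h2, hw]; linear_combination u * ζ ^ 2 * w4 - v * ζ * w ^ 2 * z3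
    · rw [fc, h1, h2, hw]; linear_combination v * ζ * w4 - v * ζ * w * z3

/-- nonsquare case -/
theorem transp (h : Card w z u v a b c) (F : K →+* K) (hw : F w = w ∨ F w = -1 - w) (hz : F z = -z) :
    ∃ η, η ^ 3 = 1 ∧
      3 * F a + 1 = u * η + v * η ^ 2 ∧ 3 * F b + 1 = u * η * w ^ 2 + v * η ^ 2 * w ∧
      3 * F c + 1 = u * η * w + v * η ^ 2 * w ^ 2 := by
  obtain ⟨fa, fb, fc⟩ := h.Fabc F
  have fe := h.Feq F
  have w3 := h.w3
  have w4 : w ^ 4 = w := by linear_combination w * w3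
  rcases hw with hw | hw
  · obtain ⟨ζ, z3, h1, h2⟩ := h.frob2 F (by
      apply mul_left_cancel₀ h.h2
      rw [fe, hw, hz, h.hv]; ring)
    refine ⟨ζ ^ 2, by rw [← pow_mul, mul_comm, pow_mul, z3, one_pow], ?_, ?_, ?_⟩
    · rw [fa, h1, h2]; linear_combination -v * ζ * z3
    · rw [fb, h1, h2, hw]; linear_combination -v * ζ * w * z3
    · rw [fc, h1, h2, hw]; linear_combination -v * ζ * w ^ 2 * z3
  · obtain ⟨ζ, z3, h1, h2⟩ := h.frob1 F (by
      apply mul_left_cancel₀ h.h2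
      rw [fe, hw, hz, h.hu]; ring)
    rw [← h.hw] at hw
    refine ⟨ζ, z3, ?_, ?_, ?_⟩
    · rw [fa, h1, h2]
    · rw [fb, h1, h2, hw]; linear_combination v * ζ ^ 2 * w4
    · rw [fc, h1, h2, hw]; linear_combination u * ζ * w4

theorem U_F (h : Card w z u v a b c) (U : ℕ → ℤ)
    (h0 : U 0 = 0) (h1 : U 1 = 1) (h2 : U 2 = -1)
    (hrec : ∀ n, U (n + 3) + U (n + 2) + U (n + 1) + 2 * U n = 0)
    {p : ℕ} (hp : 0 < p) (F : K →+* K) (hF : ∀ x, F x = x ^ p) :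
    (U (p - 1) : K) * (a ^ 2 * (b - c) + b ^ 2 * (c - a) + c ^ 2 * (a - b)) =
      F a * (b - c) + F b * (c - a) + F c * (a - b) := by
  have := U_eq U h0 h1 h2 hrec h.e1 h.e2 h.e3 (p - 1)
  rw [Nat.sub_add_cancel hp] at this
  rw [this, hF, hF, hF]

theorem V_ne (h : Card w z u v a b c) (h83 : (83 : K) ≠ 0) :
    a ^ 2 * (b - c) + b ^ 2 * (c - a) + c ^ 2 * (a - b) ≠ 0 := by
  intro h0
  have := h.V_sq
  rw [h0] at this
  exact h83 (by linear_combination this)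

theorem square_case (h : Card w z u v a b c) (h83 : (83 : K) ≠ 0) (U : ℕ → ℤ)
    (h0 : U 0 = 0) (h1 : U 1 = 1) (h2 : U 2 = -1)
    (hrec : ∀ n, U (n + 3) + U (n + 2) + U (n + 1) + 2 * U n = 0)
    {p : ℕ} (hp : 0 < p) (F : K →+* K) (hF : ∀ x, F x = x ^ p)
    (hw : F w = w ∨ F w = -1 - w) (hz : F z = z) :
    (U (p - 1) : K) = 0 ↔ F (F u) = u := by
  have hU := h.U_F U h0 h1 h2 hrec hp F hF
  have hV := h.V_ne h83
  obtain ⟨η, e3, hη, ga, gb, gc⟩ := h.cyc F hw hz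
  have hFF : F (F u) = u * η ^ 2 := by
    rcases hη with ⟨i1, i2⟩ | ⟨i1, i2, i3⟩
    · rw [i2, map_mul, i1, i2]; ring
    · rw [i2, map_mul, i3, map_pow, i1]; linear_combination u * η ^ 2 * e3
  have w3 := h.w3
  have w4 : w ^ 4 = w := by linear_combination w * w3
  have hu := h.u0
  have hη1 : F (F u) = u ↔ η = 1 := by
    rw [hFF]
    constructor
    · intro hh
      have : η ^ 2 = 1 := mul_left_cancel₀ hu (by rw [hh, mul_one])
      linear_combination e3 - η * this
    · rintro rfl; ring
  rw [hη1]
  rw [show ((U (p - 1) : K) = 0 ↔ η = 1) ↔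
    ((U (p - 1) : K) * (a ^ 2 * (b - c) + b ^ 2 * (c - a) + c ^ 2 * (a - b)) = 0 ↔ η = 1) by simp [hV], hU]
  rcases h.root3 e3 with rfl | rfl | rfl
  · have k1 : F a = a := mul_left_cancel₀ h.h3 (by linear_combination ga - h.ha)
    have k2 : F b = b := mul_left_cancel₀ h.h3 (by linear_combination gb - h.hb)
    have k3 : F c = c := mul_left_cancel₀ h.h3 (by linear_combination gc - h.hc)
    rw [k1, k2, k3]
    refine iff_of_true (by ring) rfl
  · have k1 : F a = b := mul_left_cancel₀ h.h3 (by linear_combination ga - h.hb)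
    have k2 : F b = c := mul_left_cancel₀ h.h3 (by linear_combination gb - h.hc + v * w4)
    have k3 : F c = a := mul_left_cancel₀ h.h3 (by linear_combination gc - h.ha + (u + v) * w3)
    rw [k1, k2, k3]
    refine iff_of_false (fun hh => h.h2 ?_) (fun hh => h.h3 ?_)
    · linear_combination -hh + (a + b + c - 1) * h.e1 - 3 * h.e2
    · have := h.hw; rw [hh] at this; linear_combination this
  · have k1 : F a = c := mul_left_cancel₀ h.h3 (by linear_combination ga - h.hc + v * w4)
    have k2 : F b = a := mul_left_cancel₀ h.h3 (by linear_combination gb - h.ha + (u + v * (w ^ 3 + 1)) * w3)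
    have k3 : F c = b := mul_left_cancel₀ h.h3 (by linear_combination gc - h.hb + u * w4 + v * w ^ 2 * w3)
    rw [k1, k2, k3]
    refine iff_of_false (fun hh => h.h2 ?_) (fun hh => h.h3 ?_)
    · linear_combination hh + (a + b + c - 1) * h.e1 - 3 * h.e2
    · have := h.hw; rw [hh] at this
      linear_combination hh - (w - 2) * this

theorem nonsquare_case (h : Card w z u v a b c) (h83 : (83 : K) ≠ 0) (h47 : (47 : K) ≠ 0) (U : ℕ → ℤ)
    (h0 : U 0 = 0) (h1 : U 1 = 1) (h2 : U 2 = -1)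
    (hrec : ∀ n, U (n + 3) + U (n + 2) + U (n + 1) + 2 * U n = 0)
    {p : ℕ} (hp : 0 < p) (F : K →+* K) (hF : ∀ x, F x = x ^ p)
    (hw : F w = w ∨ F w = -1 - w) (hz : F z = -z) :
    (U (p - 1) : K) ≠ 0 := by
  have hU := h.U_F U h0 h1 h2 hrec hp F hF
  have hV := h.V_ne h83
  obtain ⟨η, e3, ga, gb, gc⟩ := h.transp F hw hz
  have w3 := h.w3
  have w4 : w ^ 4 = w := by linear_combination w * w3
  intro hU0
  rw [hU0, zero_mul] at hU
  have habc := h.abc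
  have E1 := h.e1
  have prod : (3 * a + 1) * (3 * b + 1) * (3 * c + 1) ≠ 0 := by
    rw [habc]; exact neg_ne_zero.2 h47
  have ya : 3 * a + 1 ≠ 0 := left_ne_zero_of_mul (left_ne_zero_of_mul prod)
  have yb : 3 * b + 1 ≠ 0 := right_ne_zero_of_mul (left_ne_zero_of_mul prod)
  have yc : 3 * c + 1 ≠ 0 := right_ne_zero_of_mul prod
  have hVf : (a - b) * (b - c) * (a - c) ≠ 0 := by
    intro hh; apply hV; linear_combination hh
  have dab : a - b ≠ 0 := left_ne_zero_of_mul (left_ne_zero_of_mul hVf)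
  have dbc : b - c ≠ 0 := right_ne_zero_of_mul (left_ne_zero_of_mul hVf)
  have dac : a - c ≠ 0 := right_ne_zero_of_mul hVf
  rcases h.root3 e3 with rfl | rfl | rfl
  · have k1 : F a = a := mul_left_cancel₀ h.h3 (by linear_combination ga - h.ha)
    have k2 : F b = c := mul_left_cancel₀ h.h3 (by linear_combination gb - h.hc)
    have k3 : F c = b := mul_left_cancel₀ h.h3 (by linear_combination gc - h.hb)
    rw [k1, k2, k3] at hU
    exact mul_ne_zero dbc ya (by linear_combination -hU + (b - c) * E1)
  · have k1 : F a = b := mul_left_cancel₀ h.h3 (by linear_combination ga - h.hb)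
    have k2 : F b = a := mul_left_cancel₀ h.h3 (by linear_combination gb - h.ha + (u + v) * w3)
    have k3 : F c = c := mul_left_cancel₀ h.h3 (by linear_combination gc - h.hc + v * w4)
    rw [k1, k2, k3] at hU
    exact mul_ne_zero dab yc (by linear_combination -hU + (a - b) * E1)
  · have k1 : F a = c := mul_left_cancel₀ h.h3 (by linear_combination ga - h.hc + v * w4)
    have k2 : F b = b := mul_left_cancel₀ h.h3 (by linear_combination gb - h.hb + u * w4 + v * w ^ 2 * w3)
    have k3 : F c = a := mul_left_cancel₀ h.h3 (by linear_combination gc - h.ha + (u + v * (w ^ 3 + 1)) * w3)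
    rw [k1, k2, k3] at hU
    exact mul_ne_zero dac yb (by linear_combination hU + (a - c) * E1)

end Card
end Eis

namespace Eis
open QuadraticAlgebra

theorem exists_card {K : Type} [Field K] [IsAlgClosed K] (h2 : (2 : K) ≠ 0) (h3 : (3 : K) ≠ 0)
    {w z : K} (hw : w ^ 2 = -1 - w) (hz : z ^ 2 = -83) : ∃ u v a b c, Card w z u v a b c := by
  obtain ⟨u, hu⟩ := IsAlgClosed.exists_pow_nat_eq ((-47 + 3 * (1 + 2 * w) * z) / 2) (n := 3) (by norm_num)
  have hu' : 2 * u ^ 3 = -47 + 3 * (1 + 2 * w) * z := by rw [hu]; field_simp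
  have u0 : u ≠ 0 := by
    rintro rfl
    have h5 : (2 : K) ^ 5 = 0 := by
      linear_combination -(47 + 3 * (1 + 2 * w) * z) * hu' - 9 * (1 + 2 * w) ^ 2 * hz + 9 * 83 * 4 * hw
    exact pow_ne_zero 5 h2 h5
  refine ⟨u, -2 / u, (u + -2 / u - 1) / 3, (u * w + -2 / u * w ^ 2 - 1) / 3,
    (u * w ^ 2 + -2 / u * w - 1) / 3, hw, hz, h2, h3, hu', ?_, ?_, ?_, ?_⟩
  · field_simp
  · rw [mul_div_cancel₀ _ h3]; ring
  · rw [mul_div_cancel₀ _ h3]; ring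
  · rw [mul_div_cancel₀ _ h3]; ring

theorem char_ne {p n : ℕ} {K : Type} [Field K] [CharP K p] (hp : p.Prime) (hn : n.Prime) (h : p ≠ n) :
    (n : K) ≠ 0 := by
  intro h0
  exact h ((Nat.prime_dvd_prime_iff_eq hp hn).1 ((CharP.cast_eq_zero_iff K p n).1 h0))

theorem Fw {K : Type} [Field K] (F : K →+* K) {w : K} (hw : w ^ 2 = -1 - w) :
    F w = w ∨ F w = -1 - w := by
  have h := congrArg F hw
  simp only [map_pow, map_sub, map_neg, map_one] at h
  have : (F w - w) * (F w - (-1 - w)) = 0 := by linear_combination h - hw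
  rcases mul_eq_zero.1 this with h | h
  · exact Or.inl (sub_eq_zero.1 h)
  · exact Or.inr (sub_eq_zero.1 h)

theorem cast_XY {K : Type} [Field K] {p : ℕ} [CharP K p] {X Y : ℤ}
    (h : (p : ℤ) ∣ X ^ 2 + 83 * Y ^ 2) : (X : K) ^ 2 + 83 * (Y : K) ^ 2 = 0 := by
  have := (CharP.intCast_eq_zero_iff K p _).2 h
  push_cast at this
  exact this

theorem cast_im {K : Type} [Field K] {α : Eis} {X Y : ℤ} (h : IsAl α X Y) :
    (α.im : K) = 3 * (X : K) := by
  rw [h.2]; push_cast; rfl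

theorem out_iff {p : ℕ} [hp : Fact p.Prime] (hp2 : p ≠ 2) (hp3 : p ≠ 3) (hp83 : p ≠ 83) {B : Prop}
    (hO : Out p B) (U : ℕ → ℤ)
    (h0 : U 0 = 0) (h1 : U 1 = 1) (h2 : U 2 = -1)
    (hrec : ∀ n, U (n + 3) + U (n + 2) + U (n + 1) + 2 * U n = 0) : (p : ℤ) ∣ U (p - 1) ↔ B := by
  obtain ⟨X, Y, α, hAl, hXY, hY, hn, hs⟩ := hO
  let K := AlgebraicClosure (ZMod p)
  obtain ⟨φ⟩ := exists_hom K
  rw [← hs K φ, ← CharP.intCast_eq_zero_iff K p]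
  have k2 : (2 : K) ≠ 0 := by exact_mod_cast char_ne (K := K) hp.out Nat.prime_two hp2
  have k3 : (3 : K) ≠ 0 := by exact_mod_cast char_ne (K := K) hp.out Nat.prime_three hp3
  have k83 : (83 : K) ≠ 0 := by
    exact_mod_cast char_ne (K := K) (n := 83) hp.out (by norm_num) hp83
  have kY : (Y : K) ≠ 0 := fun h => hY ((CharP.intCast_eq_zero_iff K p _).1 h)
  have kXY : (X : K) ^ 2 + 83 * (Y : K) ^ 2 = 0 := by
    exact cast_XY hXY
  obtain ⟨z, hzX⟩ : ∃ z : K, (X : K) = z * Y := ⟨X / Y, (div_mul_cancel₀ _ kY).symm⟩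
  have hz : z ^ 2 = -83 := by
    apply mul_right_cancel₀ (pow_ne_zero 2 kY)
    rw [hzX] at kXY
    linear_combination kXY
  set F := frobenius K p with hFdef
  have hFz : F z = z := by
    have h := congrArg F hzX
    rw [map_mul, map_intCast, map_intCast, hzX] at h
    exact (mul_right_cancel₀ kY h).symm
  have hw := hom_om φ
  obtain ⟨u, v, a, b, c, hC⟩ := exists_card k2 k3 hw hz
  rw [hC.square_case k83 U h0 h1 h2 hrec hp.out.pos F (fun x => frobenius_def p x) (Fw F hw) hFz]
  have hr := congrArg (Int.cast : ℤ → K) hAl.1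
  have hi : (α.im : K) = 3 * (X : K) := cast_im hAl
  push_cast at hr
  have e1 : φ α = Y * u ^ 3 := by
    apply mul_left_cancel₀ k2
    rw [hom_apply φ α]
    linear_combination hr + 2 * φ omega * hi + (3 + 6 * φ omega) * hzX - Y * hC.hu
  have e2 : φ (star α) = Y * v ^ 3 := by
    apply mul_left_cancel₀ k2
    rw [star_apply φ α]
    linear_combination hr + 2 * (-1 - φ omega) * hi + (3 + 6 * (-1 - φ omega)) * hzX - Y * hC.hv
  have e3 : φ (α ^ 2 * star α) = (-2 * Y * u) ^ 3 := by
    rw [map_mul, map_pow, e1, e2]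
    calc ((Y : K) * u ^ 3) ^ 2 * (Y * v ^ 3) = ((u * v) * Y * u) ^ 3 := by ring
      _ = _ := by rw [hC.huv]
  rw [e3, ← pow_mul, sq_sub_one hp3]
  have hne : -2 * (Y : K) * u ≠ 0 := mul_ne_zero (mul_ne_zero (neg_ne_zero.2 k2) kY) hC.u0
  have hFF : F (F (-2 * (Y : K) * u)) = -2 * (Y : K) * F (F u) := by
    simp only [map_mul, map_neg, map_ofNat F 2, map_intCast]
  have hpow : F (F (-2 * (Y : K) * u)) = (-2 * (Y : K) * u) ^ (p ^ 2 - 1) * (-2 * (Y : K) * u) := by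
    rw [← pow_succ, Nat.sub_add_cancel (Nat.one_le_pow _ _ hp.out.pos), pow_two p, pow_mul]
    rfl
  rw [hFF] at hpow
  constructor
  · intro h
    rw [h] at hpow
    exact mul_right_cancel₀ hne (by rw [← hpow, one_mul])
  · intro h
    rw [h, one_mul] at hpow
    exact mul_left_cancel₀ (mul_ne_zero (neg_ne_zero.2 k2) kY) hpow

theorem nonsq {p : ℕ} [hp : Fact p.Prime] (hp2 : p ≠ 2) (hp3 : p ≠ 3) (hp47 : p ≠ 47) (hp83 : p ≠ 83)
    (U : ℕ → ℤ)
    (h0 : U 0 = 0) (h1 : U 1 = 1) (h2 : U 2 = -1)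
    (hrec : ∀ n, U (n + 3) + U (n + 2) + U (n + 1) + 2 * U n = 0) (h : (p : ℤ) ∣ U (p - 1)) :
    ∃ b : ℤ, (p : ℤ) ∣ b ^ 2 + 83 := by
  by_cases hs : IsSquare (-83 : ZMod p)
  · obtain ⟨r, hr⟩ := hs
    obtain ⟨b, rfl⟩ := ZMod.intCast_surjective r
    refine ⟨b, ?_⟩
    rw [← ZMod.intCast_zmod_eq_zero_iff_dvd]
    push_cast
    linear_combination -hr
  exfalso
  let K := AlgebraicClosure (ZMod p)
  obtain ⟨φ⟩ := exists_hom K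
  have k2 : (2 : K) ≠ 0 := by exact_mod_cast char_ne (K := K) hp.out Nat.prime_two hp2
  have k3 : (3 : K) ≠ 0 := by exact_mod_cast char_ne (K := K) hp.out Nat.prime_three hp3
  have k47 : (47 : K) ≠ 0 := by
    exact_mod_cast char_ne (K := K) (n := 47) hp.out (by norm_num) hp47
  have k83 : (83 : K) ≠ 0 := by
    exact_mod_cast char_ne (K := K) (n := 83) hp.out (by norm_num) hp83
  have z83 : (-83 : ZMod p) ≠ 0 := by
    refine neg_ne_zero.2 ?_
    exact_mod_cast char_ne (K := ZMod p) (n := 83) hp.out (by norm_num) hp83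
  obtain ⟨z, hz⟩ := IsAlgClosed.exists_pow_nat_eq (-83 : K) (n := 2) (by norm_num)
  have hFz : frobenius K p z = -z := by
    have hm : (-83 : ZMod p) ^ (p / 2) = -1 := by
      rcases ZMod.pow_div_two_eq_neg_one_or_one p z83 with h | h
      · exact absurd ((ZMod.euler_criterion p z83).2 h) hs
      · exact h
    have hm' := congrArg (algebraMap (ZMod p) K) hm
    simp only [map_pow, map_neg, map_one, map_ofNat] at hm'
    have hodd : p = 2 * (p / 2) + 1 := by
      rcases hp.out.eq_two_or_odd with h | h <;> omega
    have e : (-83 : K) ^ (p / 2) = -1 := by exact hm'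
    rw [frobenius_def]
    calc z ^ p = z ^ (2 * (p / 2) + 1) := by rw [← hodd]
      _ = (z ^ 2) ^ (p / 2) * z := by rw [pow_succ, pow_mul]
      _ = -z := by rw [hz, e]; ring
  have hw := hom_om φ
  obtain ⟨u, v, a, b, c, hC⟩ := exists_card k2 k3 hw hz
  exact hC.nonsquare_case k83 k47 U h0 h1 h2 hrec hp.out.pos (frobenius K p)
    (fun x => frobenius_def p x) (Fw _ hw) hFz ((CharP.intCast_eq_zero_iff K p _).2 h)
end Eis

theorem table2_disc83 (U : ℕ → ℤ)
    (h0 : U 0 = 0) (h1 : U 1 = 1) (h2 : U 2 = -1)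
    (hrec : ∀ n, U (n + 3) + U (n + 2) + U (n + 1) + 2 * U n = 0)
    (p : ℕ) (hp : p.Prime) (hpe : p ∉ ({2, 3, 47, 83} : Set ℕ)) :
    (p : ℤ) ∣ U (p - 1) ↔ ∃ X Y : ℤ, 4 * (p : ℤ) = X ^ 2 + 83 * Y ^ 2 := by
  simp only [Set.mem_insert_iff, Set.mem_singleton_iff, not_or] at hpe
  obtain ⟨hp2, hp3, hp47, hp83⟩ := hpe
  have hF : Fact p.Prime := ⟨hp⟩
  constructor
  · intro h
    obtain ⟨b, hb⟩ := Eis.nonsq hp2 hp3 hp47 hp83 U h0 h1 h2 hrec h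
    rcases Eis.forms hp.pos (fun h => hp2 ((Nat.prime_dvd_prime_iff_eq Nat.prime_two hp).1 h).symm) hb
      with h' | ⟨x, y, h'⟩
    · exact h'
    · exfalso
      have r0 := hrec 0
      have r1 := hrec 1
      have r2 := hrec 2
      have r3 := hrec 3
      have r4 := hrec 4
      have r5 := hrec 5
      have r6 := hrec 6
      have r7 := hrec 7
      norm_num at r0 r1 r2 r3 r4 r5 r6 r7
      by_cases h7 : 7 = p
      · subst h7
        norm_num at h
        omega
      by_cases h11 : 11 = p
      · subst h11
        norm_num at h
        omega
      exact (Eis.out_iff hp2 hp3 hp83 (Eis.nonprincipal hp2 hp3 h7 h11 h') U h0 h1 h2 hrec).1 h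
  · rintro ⟨X, Y, h⟩
    exact (Eis.out_iff hp2 hp3 hp83 (Eis.principal hp2 hp3 h) U h0 h1 h2 hrec).2 trivial
end

section
/- For every prime p with p ∤ 2·3·27 = 2·81, the polynomial x^3 - 2 has exactly 3 roots modulo p if and only if there exist integers X, Y with p = X^2 + 27Y^2. -/
lemma gcr_unique (p A B C D : ℤ) (hp : Prime p) (hpos : 0 < p) (h1 : 4 * p = A ^ 2 + 27 * B ^ 2)
    (h2 : 4 * p = C ^ 2 + 27 * D ^ 2) : B ^ 2 = D ^ 2 := by
  have key : (A * D - B * C) * (A * D + B * C) = p * (4 * (D ^ 2 - B ^ 2)) := by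
    linear_combination -(D ^ 2) * h1 + B ^ 2 * h2
  have fin : A * D = B * C ∨ A * D = - (B * C) → B ^ 2 = D ^ 2 := by
    intro h
    have h0 : p * (4 * (D ^ 2 - B ^ 2)) = 0 := by
      rw [← key]
      rcases h with h | h <;> rw [h] <;> ring
    have := (mul_eq_zero.mp h0).resolve_left hpos.ne'
    linarith
  have aux : ∀ u v : ℤ, 16 * p ^ 2 = u ^ 2 + 27 * v ^ 2 → p ∣ v → v = 0 := by
    rintro u v h ⟨k, rfl⟩
    by_contra hk
    have hk' : k ≠ 0 := by rintro rfl; simp at hk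
    have : 1 ≤ k ^ 2 := by have := sq_pos_of_ne_zero hk'; linarith
    nlinarith [sq_nonneg u, pow_pos hpos 2]
  rcases hp.dvd_or_dvd (Dvd.intro _ key.symm) with h | h
  · have := aux (A * C + 27 * B * D) _ (by linear_combination 4 * p * h1 + (A ^ 2 + 27 * B ^ 2) * h2) h
    exact fin (Or.inl (by linarith))
  · have := aux (A * C - 27 * B * D) _ (by linear_combination 4 * p * h1 + (A ^ 2 + 27 * B ^ 2) * h2) h
    exact fin (Or.inr (by linarith))

lemma gcr_card (p : ℕ) [Fact p.Prime] (h3 : 3 ∣ p - 1) :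
    (Finset.univ.filter (fun a : ZMod p => a ^ 3 - 2 = 0)).card = 3 ↔
      ∃ r : ZMod p, r ^ 3 = 2 := by
  obtain ⟨g, hg⟩ := IsCyclic.exists_generator (α := (ZMod p)ˣ)
  have hp := (Fact.out : p.Prime)
  have ho : orderOf g = p - 1 := by
    rw [orderOf_eq_card_of_forall_mem_zpowers hg, Nat.card_eq_fintype_card, ZMod.card_units]
  obtain ⟨k, hk⟩ := h3
  have hpr : IsPrimitiveRoot ((g ^ k : (ZMod p)ˣ) : ZMod p) 3 := by
    have h1 : IsPrimitiveRoot g (p - 1) := ho ▸ IsPrimitiveRoot.orderOf g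
    have := h1.pow (by have := hp.two_le; omega) (hk.trans (mul_comm 3 k))
    exact IsPrimitiveRoot.coe_units_iff.mpr this
  constructor
  · intro h
    obtain ⟨x, hx⟩ := Finset.card_pos.mp (by rw [h]; norm_num)
    exact ⟨x, sub_eq_zero.mp (Finset.mem_filter.mp hx).2⟩
  · rintro ⟨r, hr⟩
    by_cases h2 : (2 : ZMod p) = 0
    · exfalso
      have : p ∣ 2 := (ZMod.natCast_eq_zero_iff 2 p).mp (by exact_mod_cast h2)
      have := Nat.le_of_dvd (by norm_num) this
      have := hp.two_le
      omega
    have hn := hpr.nthRoots_nodup h2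
    have hc := hpr.card_nthRoots (2 : ZMod p)
    rw [if_pos ⟨r, hr⟩] at hc
    refine Eq.trans ?_ hc
    rw [← Multiset.toFinset_card_of_nodup hn]
    congr 1
    ext x
    simp [Polynomial.mem_nthRoots, sub_eq_zero]

lemma gcr_three (p : ℕ) [Fact p.Prime]
    (h : (Finset.univ.filter (fun a : ZMod p => a ^ 3 - 2 = 0)).card = 3)
    (h2 : (2 : ZMod p) ≠ 0) : 3 ∣ p - 1 := by
  obtain ⟨x, hx, y, hy, hxy⟩ := Finset.one_lt_card.mp (by rw [h]; norm_num :
    1 < (Finset.univ.filter (fun a : ZMod p => a ^ 3 - 2 = 0)).card)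
  have hx := sub_eq_zero.mp (Finset.mem_filter.mp hx).2
  have hy := sub_eq_zero.mp (Finset.mem_filter.mp hy).2
  have hy0 : y ≠ 0 := by rintro rfl; exact h2 (by simpa using hy.symm)
  have hx0 : x ≠ 0 := by rintro rfl; exact h2 (by simpa using hx.symm)
  have ho : orderOf (x / y) = 3 := by
    haveI : Fact (Nat.Prime 3) := ⟨Nat.prime_three⟩
    apply orderOf_eq_prime
    · rw [div_pow, hx, hy, div_self h2]
    · intro h; exact hxy ((div_eq_one_iff_eq hy0).mp h)
  rw [← ho]
  exact ZMod.orderOf_dvd_card_sub_one (div_ne_zero hx0 hy0)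

lemma gcr_cube (p : ℕ) [Fact p.Prime] (χ : MulChar (ZMod p) ℂ) (hχ : orderOf χ = 3)
    (x : ZMod p) (hx : x ≠ 0) : χ x = 1 ↔ ∃ r, r ^ 3 = x := by
  have h3 : χ ^ 3 = 1 := hχ ▸ pow_orderOf_eq_one χ
  have hc : ∀ u : ZMod p, u ≠ 0 → χ u ^ 3 = 1 := by
    intro u hu
    rw [← MulChar.pow_apply' χ (by norm_num), h3]
    exact MulChar.one_apply hu.isUnit
  constructor
  · intro h
    obtain ⟨g, hg⟩ := IsCyclic.exists_generator (α := (ZMod p)ˣ)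
    have hg1 : χ g ≠ 1 := by
      intro h1
      have : χ = 1 := (MulChar.eq_iff hg χ 1).mpr (by simp [h1])
      rw [this] at hχ
      simp at hχ
    have ho : orderOf (χ g) = 3 := by
      haveI : Fact (Nat.Prime 3) := ⟨Nat.prime_three⟩
      exact orderOf_eq_prime (hc _ g.ne_zero) hg1
    obtain ⟨k, hk⟩ := (mem_powers_iff_mem_zpowers.mpr (hg (Units.mk0 x hx)))
    have hk' : (g : ZMod p) ^ k = x := by
      have := congrArg Units.val hk
      simpa using this
    have : 3 ∣ k := by
      rw [← ho]
      apply orderOf_dvd_of_pow_eq_one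
      rw [← map_pow, hk', h]
    obtain ⟨m, rfl⟩ := this
    exact ⟨(g : ZMod p) ^ m, by rw [← hk']; ring⟩
  · rintro ⟨r, rfl⟩
    rw [map_pow]
    exact hc r (by rintro rfl; simp at hx)

lemma gcr_adjoin (ω : ℂ) (h : ω ^ 2 = -1 - ω) (z : ℂ) (hz : z ∈ Algebra.adjoin ℤ {ω}) :
    ∃ c d : ℤ, z = c + d * ω := by
  induction hz using Algebra.adjoin_induction with
  | mem x hx => exact ⟨0, 1, by simp at hx; simp [hx]⟩
  | algebraMap r => exact ⟨r, 0, by simp⟩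
  | add x y _ _ hx hy =>
    obtain ⟨a, b, rfl⟩ := hx
    obtain ⟨c, d, rfl⟩ := hy
    exact ⟨a + c, b + d, by push_cast; ring⟩
  | mul x y _ _ hx hy =>
    obtain ⟨a, b, rfl⟩ := hx
    obtain ⟨c, d, rfl⟩ := hy
    exact ⟨a * c - b * d, a * d + b * c - b * d, by push_cast; linear_combination (b * d : ℂ) * h⟩

lemma gcr_inv (p : ℕ) [Fact p.Prime] (h2 : (2 : ZMod p) ≠ 0) (f : ZMod p → ZMod 2) :
    ∑ u, f (u * (1 - u)) = f (1 / 4) := by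
  have h4 : (4 : ZMod p) ≠ 0 := by
    have : (4 : ZMod p) = 2 * 2 := by norm_num
    rw [this]; exact mul_ne_zero h2 h2
  rw [← Finset.sum_erase_add _ _ (Finset.mem_univ (1 / 2 : ZMod p))]
  have e : (1 / 2 : ZMod p) * (1 - 1 / 2) = 1 / 4 := by
    field_simp; ring
  rw [e]
  have : ∑ x ∈ Finset.univ.erase (1 / 2 : ZMod p), f (x * (1 - x)) = 0 := by
    refine Finset.sum_involution (fun a _ => 1 - a) ?_ ?_ ?_ ?_
    · intro a _
      have : (1 - a) * (1 - (1 - a)) = a * (1 - a) := by ring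
      rw [this]
      exact CharTwo.add_self_eq_zero _
    · intro a ha _ h
      apply (Finset.mem_erase.mp ha).1
      field_simp
      linear_combination -h
    · intro a ha
      refine Finset.mem_erase.mpr ⟨fun h => (Finset.mem_erase.mp ha).1 ?_, Finset.mem_univ _⟩
      field_simp
      field_simp at h
      linear_combination -h
    · intro a ha; ring
  rw [this, zero_add]

lemma gcr_main (p : ℕ) [Fact p.Prime] (h2 : (2 : ZMod p) ≠ 0) (h3 : 3 ∣ p - 1) :
    ∃ a c : ℤ, (p : ℤ) = a ^ 2 - a * (3 * c) + (3 * c) ^ 2 ∧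
      (2 ∣ c ↔ ∃ r : ZMod p, r ^ 3 = 2) := by
  have hω : IsPrimitiveRoot (Complex.exp (2 * Real.pi * Complex.I / (3 : ℕ))) 3 :=
    Complex.isPrimitiveRoot_exp 3 (by norm_num)
  generalize Complex.exp (2 * Real.pi * Complex.I / (3 : ℕ)) = ω at hω
  have hs : ω ^ 2 = -1 - ω := by
    have := hω.geom_sum_eq_zero (by norm_num)
    simp [Finset.sum_range_succ] at this
    linear_combination this
  have him : ω.im ≠ 0 := by
    intro h
    have := congrArg Complex.re hs
    simp [pow_two, h] at this
    nlinarith [sq_nonneg (ω.re + 1 / 2)]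
  have hre : ω.re = -1 / 2 := by
    have := congrArg Complex.im hs
    simp [pow_two] at this
    have : ω.im * (2 * ω.re + 1) = 0 := by linear_combination this
    have := (mul_eq_zero.mp this).resolve_left him
    linarith
  have him2 : ω.im ^ 2 = 3 / 4 := by
    have := congrArg Complex.re hs
    simp [pow_two, hre] at this
    linarith
  have hind : ∀ a b c d : ℤ, (a + b * ω : ℂ) = c + d * ω → a = c ∧ b = d := by
    intro a b c d h
    have hi := congrArg Complex.im h
    have hr := congrArg Complex.re h
    simp at hi hr
    have hb : b = d := hi.resolve_right him
    subst hb
    simpa using hr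
  obtain ⟨χ, hχ⟩ := MulChar.exists_mulChar_orderOf (ZMod p) (n := 3) (by rwa [ZMod.card]) hω
  have hχ3 : χ ^ 3 = 1 := hχ ▸ pow_orderOf_eq_one χ
  have hχ1 : χ ≠ 1 := by rintro rfl; simp at hχ
  have hχ2 : χ * χ ≠ 1 := by
    intro h
    have := orderOf_dvd_of_pow_eq_one (x := χ) (n := 2) (by rw [pow_two, h])
    rw [hχ] at this
    norm_num at this
  have hg : ∀ x : ZMod p, ∃ g : ℤ × ℤ, χ x = g.1 + g.2 * ω ∧ (x ≠ 0 → (2 ∣ g.2 ↔ χ x = 1)) := by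
    intro x
    by_cases hx : x = 0
    · exact ⟨(0, 0), by simp [hx, MulChar.map_zero]⟩
    obtain ⟨k, hk, e⟩ := MulChar.exists_apply_eq_pow hχ3 hω hx
    interval_cases k
    · exact ⟨(1, 0), by simp [e]⟩
    · exact ⟨(0, 1), by simp [e], fun _ => by simpa [e] using hω.ne_one (by norm_num)⟩
    · refine ⟨(-1, -1), by simp [e, hs]; ring, fun _ => ?_⟩
      have : ω ^ 2 ≠ 1 := hω.pow_ne_one_of_pos_of_lt (by norm_num) (by norm_num)
      simp [e, this]
  choose g hg1 hg2 using hg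
  set a : ℤ := ∑ u, (g (u * (1 - u))).1 with ha
  set b : ℤ := ∑ u, (g (u * (1 - u))).2 with hb
  have hJ : jacobiSum χ χ = a + b * ω := by
    rw [jacobiSum, ha, hb]
    push_cast
    rw [Finset.sum_mul, ← Finset.sum_add_distrib]
    refine Finset.sum_congr rfl fun u _ => ?_
    rw [← map_mul, hg1]
  have hb3 : ∃ c, b = 3 * c := by
    obtain ⟨z, hz, e⟩ := exists_jacobiSum_eq_neg_one_add (n := 3) (by norm_num) hχ3 hχ3
      (by rwa [ZMod.card]) hω
    obtain ⟨c, d, rfl⟩ := gcr_adjoin ω hs z hz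
    refine ⟨d - c, (hind a b (-1 + 3 * d) (3 * (d - c)) ?_).2⟩
    rw [← hJ, e]
    push_cast
    linear_combination (c + d * ω - 3 * d : ℂ) * hs
  have hnorm : (p : ℤ) = a ^ 2 - a * b + b ^ 2 := by
    have h := jacobiSum_mul_jacobiSum_inv (χ := χ) (φ := χ) (by
      rw [ZMod.ringChar_zmod_n, ringChar.eq_zero]; exact (Fact.out : p.Prime).ne_zero.symm) hχ1 hχ1 hχ2
    have hJ' : jacobiSum χ⁻¹ χ⁻¹ = star (jacobiSum χ χ) := by
      simp [jacobiSum, star_sum, ← MulChar.star_apply', mul_comm]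
    rw [hJ', hJ, ZMod.card] at h
    have := congrArg Complex.re h
    simp [hre] at this
    have h' : (p : ℝ) = a ^ 2 - a * b + b ^ 2 := by
      linear_combination -this + (b : ℝ) ^ 2 * him2
    exact_mod_cast h'
  obtain ⟨c, hc⟩ := hb3
  refine ⟨a, c, hc ▸ hnorm, ?_⟩
  have h4 : (4 : ZMod p) ≠ 0 := by
    have : (4 : ZMod p) = 2 * 2 := by norm_num
    rw [this]; exact mul_ne_zero h2 h2
  have hpar : (2 ∣ b ↔ 2 ∣ (g (1 / 4)).2) := by
    have := gcr_inv p h2 (fun x => (((g x).2 : ℤ) : ZMod 2))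
    have e : ((b : ℤ) : ZMod 2) = (((g (1 / 4)).2 : ℤ) : ZMod 2) := by
      rw [← this, hb]; push_cast; rfl
    have k1 := ZMod.intCast_zmod_eq_zero_iff_dvd b 2
    have k2 := ZMod.intCast_zmod_eq_zero_iff_dvd (g (1 / 4)).2 2
    rw [← e] at k2
    exact_mod_cast k1.symm.trans k2
  have hbc : (2 ∣ c ↔ 2 ∣ b) := by omega
  rw [hbc, hpar, hg2 _ (one_div_ne_zero h4), ← gcr_cube p χ hχ 2 h2]
  have h8 : χ 2 ^ 3 = 1 := by
    rw [← MulChar.pow_apply' χ (by norm_num), hχ3]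
    exact MulChar.one_apply h2.isUnit
  have e : χ (1 / 4) * χ 2 ^ 2 = 1 := by
    rw [← map_pow, ← map_mul]
    have : (1 / 4 : ZMod p) * 2 ^ 2 = 1 := by field_simp; norm_num
    rw [this, map_one]
  constructor
  · intro h
    rw [h, one_mul] at e
    calc χ 2 = χ 2 ^ 3 := by rw [pow_succ, e, one_mul]
      _ = 1 := h8
  · intro h
    simpa [h] using e

theorem gauss_cubic_reciprocity (p : ℕ) [Fact p.Prime] (hpe : ¬ (p ∣ 2 * 3 * 27)) :
    (Finset.univ.filter (fun a : ZMod p => a ^ 3 - 2 = 0)).card = 3 ↔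
      ∃ X Y : ℤ, (p : ℤ) = X ^ 2 + 27 * Y ^ 2 := by
  have hp := (Fact.out : p.Prime)
  have h2 : (2 : ZMod p) ≠ 0 := by
    intro h
    have : p ∣ 2 := (ZMod.natCast_eq_zero_iff 2 p).mp (by exact_mod_cast h)
    exact hpe (this.trans (by norm_num))
  have hp3 : ¬ 3 ∣ p := by
    intro h
    have := (Nat.prime_dvd_prime_iff_eq Nat.prime_three hp).mp h
    subst this
    exact hpe (by norm_num)
  constructor
  · intro h
    have h3 := gcr_three p h h2
    obtain ⟨a, c, e, hc⟩ := gcr_main p h2 h3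
    obtain ⟨Y, rfl⟩ := hc.mpr ((gcr_card p h3).mp h)
    exact ⟨a - 3 * Y, Y, by rw [e]; ring⟩
  · rintro ⟨X, Y, hXY⟩
    have h3 : 3 ∣ p - 1 := by
      have : X ^ 2 % 3 = 0 ∨ X ^ 2 % 3 = 1 := by
        have : X % 3 = 0 ∨ X % 3 = 1 ∨ X % 3 = 2 := by omega
        rcases this with h | h | h <;> simp [pow_two, Int.mul_emod, h]
      omega
    rw [gcr_card p h3]
    obtain ⟨a, c, e, hc⟩ := gcr_main p h2 h3
    rw [← hc]
    have := gcr_unique p (2 * X) (2 * Y) (2 * a - 3 * c) c (Nat.prime_iff_prime_int.mp hp)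
      (by exact_mod_cast hp.pos) (by rw [hXY]; ring) (by rw [e]; ring)
    have : (2 : ℤ) ∣ c ^ 2 := by rw [← this]; exact ⟨2 * Y ^ 2, by ring⟩
    exact Int.prime_two.dvd_of_dvd_pow this
end

section
/- For every prime p not dividing 2·3·31, the polynomial x^3 + x + 1 has exactly 3 roots modulo p if and only if there exist integers X, Y with p = X^2 + 31Y^2. -/
namespace KCR
open QuadraticAlgebra

abbrev E := QuadraticAlgebra ℤ (-1) (-1)

abbrev om : E := ⟨0, 1⟩

lemma norm_eq (z : E) : z.norm = z.re ^ 2 - z.re * z.im + z.im ^ 2 := by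
  rw [QuadraticAlgebra.norm_def]; ring

lemma norm_nonneg (z : E) : 0 ≤ z.norm := by
  rw [norm_eq]; nlinarith [sq_nonneg (2 * z.re - z.im), sq_nonneg z.im]

lemma norm_eq_zero (z : E) (h : z.norm = 0) : z = 0 := by
  rw [norm_eq] at h
  have h1 : z.im = 0 := by
    have : z.im ^ 2 = 0 := by nlinarith [sq_nonneg (2 * z.re - z.im), sq_nonneg z.im]
    simpa using this
  have h2 : z.re = 0 := by
    rw [h1] at h; simpa using h
  ext <;> simp [h1, h2]

instance : NoZeroDivisors E where
  eq_zero_or_eq_zero_of_mul_eq_zero := by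
    intro a b h
    have : a.norm * b.norm = 0 := by rw [← map_mul, h]; simp
    rcases mul_eq_zero.mp this with h | h
    · exact Or.inl (norm_eq_zero _ h)
    · exact Or.inr (norm_eq_zero _ h)

instance : IsDomain E := NoZeroDivisors.to_isDomain E

instance : CharZero E := ⟨fun a b h => by
  have := congrArg QuadraticAlgebra.re h
  simpa using this⟩

lemma om_sq : om ^ 2 + om + 1 = 0 := by
  rw [pow_two]; ext <;> simp

lemma om_cube : om ^ 3 = 1 := by
  linear_combination (om - 1) * om_sq

lemma cube_root {x : E} (h : x ^ 3 = 1) : x = 1 ∨ x = om ∨ x = om ^ 2 := by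
  have : (x - 1) * ((x - om) * (x - om ^ 2)) = 0 := by
    linear_combination h + (- x ^ 2 + x * om - om + 1) * om_sq
  rcases mul_eq_zero.mp this with h | h
  · exact Or.inl (sub_eq_zero.mp h)
  rcases mul_eq_zero.mp h with h | h
  · exact Or.inr (Or.inl (sub_eq_zero.mp h))
  · exact Or.inr (Or.inr (sub_eq_zero.mp h))

lemma om_prim : IsPrimitiveRoot om 3 := by
  refine (IsPrimitiveRoot.iff_orderOf).mpr (orderOf_eq_prime om_cube ?_)
  intro h
  have := congrArg QuadraticAlgebra.im h
  simp at this

lemma star_cube {x : E} (h : x ^ 3 = 1) : star x = x ^ 2 := by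
  rcases cube_root h with rfl | rfl | rfl
  · simp
  · rw [pow_two]; ext <;> simp
  · rw [pow_two, pow_two]; ext <;> simp

lemma nat_dvd_iff (n : ℕ) (z : E) : (n : E) ∣ z ↔ (n : ℤ) ∣ z.re ∧ (n : ℤ) ∣ z.im := by
  constructor
  · rintro ⟨c, rfl⟩
    simp
  · rintro ⟨⟨a, ha⟩, ⟨b, hb⟩⟩
    exact ⟨⟨a, b⟩, by ext <;> simp [ha, hb]⟩

lemma mul_star_eq (z : E) : z * star z = ((z.norm : ℤ) : E) := by
  rw [← algebraMap_norm_eq_mul_star]; simp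

/-- difference of cube roots is not divisible by p -/
lemma cube_root_inj {p : ℕ} (hp : p.Prime) (hp3 : p ≠ 3) {x y : E} (hx : x ^ 3 = 1) (hy : y ^ 3 = 1)
    (h : (p : E) ∣ x - y) : x = y := by
  have h1 : ¬ (p : ℤ) ∣ 1 := by
    intro h; exact hp.one_lt.ne' (by exact_mod_cast (Int.natAbs_dvd_natAbs.mpr h |> Nat.dvd_one.mp))
  have h2 : ¬ ((p : ℤ) ∣ 2 ∧ (p : ℤ) ∣ 1) := fun h => h1 h.2
  rw [nat_dvd_iff] at h
  rcases cube_root hx with rfl | rfl | rfl <;> rcases cube_root hy with rfl | rfl | rfl <;>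
    first
    | rfl
    | exact (h1 (by simpa [pow_two] using h.1)).elim
    | exact (h1 (by simpa [pow_two] using h.2)).elim

section hom
variable {K : Type*} [Field K] (φ : E →+* K)

lemma hom_om : φ om ^ 2 + φ om + 1 = 0 := by
  have := congrArg φ om_sq
  simpa using this

lemma eq_om (z : E) : z = (z.re : E) + (z.im : E) * om := by
  ext <;> simp

lemma star_eq_om (z : E) : star z = (z.re : E) + (z.im : E) * om ^ 2 := by
  rw [pow_two]; ext <;> simp

lemma hom_apply (z : E) : φ z = z.re + z.im * φ om := by
  conv_lhs => rw [eq_om z, map_add, map_mul, map_intCast, map_intCast]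

lemma hom_star (z : E) : φ (star z) = z.re + z.im * φ om ^ 2 := by
  conv_lhs => rw [star_eq_om z, map_add, map_mul, map_pow, map_intCast, map_intCast]

lemma exists_hom [IsAlgClosed K] : Nonempty (E →+* K) := by
  obtain ⟨w, hw⟩ := IsAlgClosed.exists_root (Polynomial.X ^ 2 + Polynomial.X + 1 : Polynomial K) (by
    have : (Polynomial.X ^ 2 + Polynomial.X + 1 : Polynomial K).degree = 2 := by compute_degree!
    rw [this]; decide)
  simp [Polynomial.IsRoot] at hw
  exact ⟨(QuadraticAlgebra.lift ⟨w, by simp; linear_combination hw⟩ : E →ₐ[ℤ] K).toRingHom⟩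

lemma hom_om_ne {p : ℕ} [CharP K p] (hp : p.Prime) (hp3 : p ≠ 3) : φ om - φ om ^ 2 ≠ 0 := by
  intro h
  have h3 : (3 : K) = 0 := by
    linear_combination (-φ om ^ 2 + φ om) * (-1) * h + (φ om ^ 2 - 3 * φ om + 3) * hom_om φ 
  have := (CharP.cast_eq_zero_iff K p 3).mp (by exact_mod_cast h3)
  exact hp3 ((Nat.prime_dvd_prime_iff_eq hp Nat.prime_three).mp this)

lemma hom_dvd {p : ℕ} [CharP K p] (hp : p.Prime) (hp3 : p ≠ 3) {z : E} (h : φ z = 0)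
    (h' : φ (star z) = 0) : (p : E) ∣ z := by
  rw [hom_apply] at h
  rw [hom_star] at h'
  have h1 : (z.im : K) * (φ om - φ om ^ 2) = 0 := by linear_combination h - h'
  have h2 : (z.im : K) = 0 := (mul_eq_zero.mp h1).resolve_right (hom_om_ne φ hp hp3)
  have h3 : (z.re : K) = 0 := by simpa [h2] using h
  rw [nat_dvd_iff]
  exact ⟨(CharP.intCast_eq_zero_iff K p _).mp h3, (CharP.intCast_eq_zero_iff K p _).mp h2⟩

lemma hom_of_dvd {p : ℕ} [CharP K p] {z : E} (h : (p : E) ∣ z) : φ z = 0 := by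
  obtain ⟨c, rfl⟩ := h
  simp

end hom

/-- the symbol relation -/
def Sym (p : ℕ) (δ x : E) : Prop :=
  (p : E) ∣ δ ^ ((p + 1) / 3) - x ^ p * star δ ^ ((p + 1) / 3)

lemma Sym.mul {p : ℕ} {δ ε x y : E} (h : Sym p δ x) (h' : Sym p ε y) : Sym p (δ * ε) (x * y) := by
  unfold Sym at *
  rw [star_mul, mul_pow, mul_pow, mul_pow]
  have := dvd_add (Dvd.dvd.mul_right h (ε ^ ((p + 1) / 3)))
    (Dvd.dvd.mul_left h' (x ^ p * star δ ^ ((p + 1) / 3)))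
  convert this using 1
  ring

lemma Sym.st {p : ℕ} {δ x : E} (hx : x ^ 3 = 1) (h : Sym p δ x) : Sym p (star δ) (x ^ 2) := by
  unfold Sym at *
  rw [star_star]
  have := Dvd.dvd.mul_left h (- (x ^ p) ^ 2)
  convert this using 1
  have h3 : (x ^ p) ^ 3 = 1 := by rw [← pow_mul, mul_comm, pow_mul, hx, one_pow]
  rw [← pow_mul, mul_comm 2 p, pow_mul]
  linear_combination -  star δ ^ ((p + 1) / 3) * h3

lemma Sym.neg {p : ℕ} {δ x : E} (h : Sym p δ x) : Sym p (-δ) x := by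
  unfold Sym at *
  rw [star_neg, neg_pow, neg_pow (star δ)]
  convert Dvd.dvd.mul_left h ((-1) ^ ((p + 1) / 3)) using 1
  ring

lemma Sym.int (p : ℕ) (n : ℤ) : Sym p (n : E) 1 := by
  unfold Sym
  simp

lemma Sym.congr {p : ℕ} {δ ε x : E} (hd : (p : E) ∣ δ - ε) (h : Sym p δ x) : Sym p ε x := by
  unfold Sym at *
  have h1 : (p : E) ∣ δ ^ ((p + 1) / 3) - ε ^ ((p + 1) / 3) := hd.trans (sub_dvd_pow_sub_pow _ _ _)
  have hs : (p : E) ∣ star δ - star ε := by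
    obtain ⟨c, hc⟩ := hd
    exact ⟨star c, by rw [← star_sub, hc, star_mul]; simp [mul_comm]⟩
  have h2 : (p : E) ∣ star δ ^ ((p + 1) / 3) - star ε ^ ((p + 1) / 3) :=
    hs.trans (sub_dvd_pow_sub_pow _ _ _)
  have := dvd_add (dvd_sub h h1) (h2.mul_left (x ^ p))
  convert this using 1
  ring

lemma Sym.unique {p : ℕ} (hp : p.Prime) (hp3 : p ≠ 3) {δ x y : E} (hd : ¬ (p : ℤ) ∣ δ.norm)
    (hx : x ^ 3 = 1) (hy : y ^ 3 = 1) (h : Sym p δ x) (h' : Sym p δ y) : x = y := by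
  unfold Sym at *
  have h1 := dvd_sub h' h
  have h2 : (p : E) ∣ ((δ.norm ^ ((p + 1) / 3) : ℤ) : E) * (x ^ p - y ^ p) := by
    convert h1.mul_left (δ ^ ((p + 1) / 3)) using 1
    rw [Int.cast_pow, ← mul_star_eq, mul_pow]; ring
  have hc : IsCoprime (p : E) ((δ.norm ^ ((p + 1) / 3) : ℤ) : E) := by
    have : IsCoprime (p : ℤ) (δ.norm ^ ((p + 1) / 3)) :=
      ((Nat.prime_iff_prime_int.mp hp).coprime_iff_not_dvd.mpr hd).pow_right
    simpa using this.map (Int.castRingHom E)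
  have h3 : (p : E) ∣ x ^ p - y ^ p := hc.dvd_of_dvd_mul_left h2
  have h4 := cube_root_inj hp hp3 (x := x ^ p) (y := y ^ p) (by rw [← pow_mul, mul_comm, pow_mul, hx, one_pow])
    (by rw [← pow_mul, mul_comm, pow_mul, hy, one_pow]) h3
  have hco : p.Coprime 3 := (Nat.coprime_primes hp Nat.prime_three).mpr hp3
  -- x^p = y^p, x^3=y^3
  have hm : p % 3 = 1 ∨ p % 3 = 2 := by
    have : ¬ 3 ∣ p := fun h => hp3 ((Nat.prime_dvd_prime_iff_eq Nat.prime_three hp).mp h).symm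
    omega
  have e : ∀ z : E, z ^ 3 = 1 → z ^ p = z ^ (p % 3) := by
    intro z hz
    conv_lhs => rw [← Nat.div_add_mod p 3, pow_add, pow_mul, hz, one_pow, one_mul]
  rw [e x hx, e y hy] at h4
  rcases hm with hm | hm <;> rw [hm] at h4
  · simpa using h4
  · calc x = x ^ 3 * x := by rw [hx, one_mul]
      _ = x ^ 2 * x ^ 2 := by ring
      _ = y ^ 2 * y ^ 2 := by rw [h4]
      _ = y ^ 3 * y := by ring
      _ = y := by rw [hy, one_mul]

lemma hom_cube_one {K : Type*} [Field K] (φ : E →+* K) {p : ℕ} [CharP K p] (hp : p.Prime)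
    (hp3 : p ≠ 3) {x : E} (hx : x ^ 3 = 1) (h : φ x = 1) : x = 1 := by
  have hne := hom_om_ne φ hp hp3
  rcases cube_root hx with rfl | rfl | rfl
  · rfl
  · exact absurd (by rw [h]; ring) hne
  · rw [map_pow] at h
    have h3 : φ om ^ 3 = 1 := by rw [← map_pow, om_cube, map_one]
    exact absurd (by linear_combination φ om * h3 * 0 - h + h3 - φ om * h) hne

lemma jac_hom {K : Type} [Field K] [IsAlgClosed K] (p q : ℕ) [CharP K p] [Fact p.Prime] [Fact q.Prime] (hp3 : p ≠ 3) (hpq : p ≠ q)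
    (χ : MulChar (ZMod q) E) (hχ : orderOf χ = 3) (φ : E →+* K) :
    φ (jacobiSum χ χ) ^ ((p + 1) / 3) =
      φ (χ (p : ZMod q)) ^ p * φ (star (jacobiSum χ χ)) ^ ((p + 1) / 3) := by
  have hp : p.Prime := Fact.out
  have hq : q.Prime := Fact.out
  have hχ3 : χ ^ 3 = 1 := by rw [← hχ]; exact pow_orderOf_eq_one χ
  have hχ1 : χ ≠ 1 := by rintro rfl; simp at hχ
  have hu3 : ∀ a : (ZMod q)ˣ, χ a ^ 3 = 1 := by
    intro a
    rw [← MulChar.pow_apply_coe, hχ3, MulChar.one_apply_coe]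
  set η : MulChar (ZMod q) K := χ.ringHomComp φ with hη
  have hη3 : η ^ 3 = 1 := by rw [hη, MulChar.ringHomComp_pow, hχ3, MulChar.ringHomComp_one]
  have hη1 : η ≠ 1 := by
    intro h
    apply hχ1
    ext1 a
    have : η a = 1 := by rw [h, MulChar.one_apply_coe]
    rw [MulChar.one_apply_coe]
    exact hom_cube_one φ hp hp3 (hu3 a) this
  have hη22 : η ^ 2 * η ^ 2 = η := by
    calc η ^ 2 * η ^ 2 = η ^ 3 * η := by rw [← pow_add, ← pow_succ]
      _ = η := by rw [hη3, one_mul]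
  have hη2 : η ^ 2 ≠ 1 := by
    intro h
    rw [h] at hη22; exact hη1 (by rw [← hη22]; simp)
  have hstar : χ.ringHomComp (φ.comp (starRingEnd E)) = η ^ 2 := by
    ext a
    rw [MulChar.pow_apply_coe]
    simp only [MulChar.ringHomComp_apply, hη, RingHom.comp_apply, starRingEnd_apply]
    rw [star_cube (hu3 a), map_pow]
  have hJ : jacobiSum η η = φ (jacobiSum χ χ) := jacobiSum_ringHomComp χ χ φ
  have hJ2 : jacobiSum (η ^ 2) (η ^ 2) = φ (star (jacobiSum χ χ)) := by
    rw [← hstar, jacobiSum_ringHomComp]; rfl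
  have hqK : (q : K) ≠ 0 := by
    intro h
    exact hpq ((Nat.prime_dvd_prime_iff_eq hp hq).mp ((CharP.cast_eq_zero_iff K p q).mp h))
  have : NeZero (q : K) := ⟨hqK⟩
  obtain ⟨ζ, hζ⟩ := HasEnoughRootsOfUnity.exists_primitiveRoot K q
  set ψ := AddChar.zmodChar q hζ.pow_eq_one
  have hψ : ψ.IsPrimitive := AddChar.zmodChar_primitive_of_primitive_root q hζ
  set g := gaussSum η ψ with hg
  set g2 := gaussSum (η ^ 2) ψ with hg2
  have hcard : (Fintype.card (ZMod q) : K) ≠ 0 := by rwa [ZMod.card]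
  have g0 : g ≠ 0 := gaussSum_ne_zero_of_nontrivial hcard hη1 hψ
  have g20 : g2 ≠ 0 := gaussSum_ne_zero_of_nontrivial hcard hη2 hψ
  have r1 : g2 * φ (jacobiSum χ χ) = g * g := by
    rw [← hJ, hg2, pow_two]
    exact jacobiSum_mul_nontrivial (by rwa [← pow_two]) ψ
  have r2 : g * φ (star (jacobiSum χ χ)) = g2 * g2 := by
    have := jacobiSum_mul_nontrivial (χ := η ^ 2) (φ := η ^ 2) (by rwa [hη22]) ψ
    rwa [hη22, hJ2] at this
  have hup : IsUnit (p : ZMod q) := by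
    rw [ZMod.isUnit_iff_coprime]
    exact (Nat.coprime_primes hp hq).mpr hpq
  obtain ⟨u, hu⟩ := hup
  set c := φ (χ (p : ZMod q)) with hc
  have hcη : η u = c := by rw [hu]; rfl
  have hc3 : c ^ 3 = 1 := by rw [hc, ← hu, ← map_pow, hu3, map_one]
  have fr : ∀ θ : MulChar (ZMod q) K, θ u ^ p * gaussSum θ ψ ^ p = gaussSum (θ ^ p) ψ := by
    intro θ
    rw [gaussSum_frob, AddChar.pow_mulShift, ← gaussSum_mulShift (θ ^ p) ψ u, hu,
      MulChar.pow_apply' _ hp.ne_zero]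
  have f1 := fr η
  have f2 := fr (η ^ 2)
  rw [MulChar.pow_apply_coe, hcη] at f2
  rw [hcη] at f1
  rw [← hg] at f1
  rw [← hg2] at f2
  set A := φ (jacobiSum χ χ)
  set B := φ (star (jacobiSum χ χ))
  have hAB : A * g2 ^ 3 = B * g ^ 3 := by linear_combination g2 ^ 2 * r1 - g ^ 2 * r2
  have c0 : c ≠ 0 := by rintro h; rw [h] at hc3; simp at hc3
  have key : ∀ k, A ^ k * g2 ^ (3 * k) = B ^ k * g ^ (3 * k) := by
    intro k
    rw [pow_mul, pow_mul, ← mul_pow, ← mul_pow, hAB]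
  have hm : p % 3 = 1 ∨ p % 3 = 2 := by
    have : ¬ 3 ∣ p := fun h => hp3 ((Nat.prime_dvd_prime_iff_eq Nat.prime_three hp).mp h).symm
    omega
  rcases hm with hm | hm
  · obtain ⟨k, hk⟩ : ∃ k, p = 3 * k + 1 := ⟨p / 3, by omega⟩
    have he : (p + 1) / 3 = k := by omega
    have hcp : c ^ p = c := by rw [hk, pow_add, pow_mul, hc3, one_pow, one_mul, pow_one]
    have hηp : η ^ p = η := by rw [hk, pow_add, pow_mul, hη3, one_pow, one_mul, pow_one]
    have hηp2 : (η ^ 2) ^ p = η ^ 2 := by rw [← pow_mul, mul_comm, pow_mul, hηp]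
    have hcp2 : (c ^ 2) ^ p = c ^ 2 := by rw [← pow_mul, mul_comm, pow_mul, hcp]
    rw [hηp, hcp, ← hg] at f1
    rw [hηp2, hcp2, ← hg2] at f2
    rw [he, hcp]
    have e1 : c * g ^ (3 * k) = 1 := by
      apply mul_right_cancel₀ g0
      rw [one_mul]; conv_rhs => rw [← f1]
      rw [hk]; ring
    have e2 : c ^ 2 * g2 ^ (3 * k) = 1 := by
      apply mul_right_cancel₀ g20
      rw [one_mul]; conv_rhs => rw [← f2]
      rw [hk]; ring
    linear_combination (c ^ 2) * key k - A ^ k * e2 + c * B ^ k * e1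
  · obtain ⟨k, hk⟩ : ∃ k, p + 1 = 3 * k := ⟨(p + 1) / 3, by omega⟩
    have he : (p + 1) / 3 = k := by omega
    obtain ⟨l, hl⟩ : ∃ l, p = 3 * l + 2 := ⟨p / 3, by omega⟩
    have hcp : c ^ p = c ^ 2 := by rw [hl, pow_add, pow_mul, hc3, one_pow, one_mul]
    have hηp : η ^ p = η ^ 2 := by rw [hl, pow_add, pow_mul, hη3, one_pow, one_mul]
    have hηp2 : (η ^ 2) ^ p = η := by rw [← pow_mul, mul_comm, pow_mul, hηp, pow_two, hη22]
    have hcp2 : (c ^ 2) ^ p = c := by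
      rw [← pow_mul, mul_comm, pow_mul, hcp]; linear_combination c * hc3
    rw [hηp, hcp, ← hg2] at f1
    rw [hηp2, hcp2, ← hg] at f2
    rw [he, hcp]
    have e1 : g ^ (3 * k) = c * g * g2 := by
      rw [← hk, pow_succ]; linear_combination c * g * f1 - g ^ p * g * hc3
    have e2 : g2 ^ (3 * k) = c ^ 2 * g * g2 := by
      rw [← hk, pow_succ]; linear_combination c ^ 2 * g2 * f2 - g2 ^ p * g2 * hc3
    have := key k
    rw [e1, e2] at this
    have h0 : c * (g * g2) ≠ 0 := mul_ne_zero c0 (mul_ne_zero g0 g20)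
    have h1 : A ^ k * c = B ^ k := by
      apply mul_right_cancel₀ h0
      linear_combination this
    linear_combination c ^ 2 * h1 - A ^ k * hc3

lemma jac (q : ℕ) [Fact q.Prime] (hq : q % 3 = 1) :
    ∃ (J : E) (χ : MulChar (ZMod q) E), J.norm = q ∧ 3 ∣ J.im ∧ χ ^ 3 = 1 ∧
      ∀ p : ℕ, p.Prime → p ≠ 3 → p ≠ q → Sym p J (χ (p : ZMod q)) := by
  have hq' : q.Prime := Fact.out
  have hd : 3 ∣ Fintype.card (ZMod q) - 1 := by rw [ZMod.card]; omega
  obtain ⟨χ, hχ⟩ := MulChar.exists_mulChar_orderOf (ZMod q) hd om_prim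
  have hχ3 : χ ^ 3 = 1 := by rw [← hχ]; exact pow_orderOf_eq_one χ
  have hχ1 : χ ≠ 1 := by rintro rfl; simp at hχ
  have hχ2 : χ * χ ≠ 1 := by
    intro h; rw [pow_succ, pow_two, h, one_mul] at hχ3; exact hχ1 hχ3
  have hu3 : ∀ a : (ZMod q)ˣ, χ a ^ 3 = 1 := by
    intro a
    rw [← MulChar.pow_apply_coe, hχ3, MulChar.one_apply_coe]
  have hinv : χ⁻¹ = χ ^ 2 := inv_eq_of_mul_eq_one_right (by rw [← hχ3, ← pow_succ'])
  have hstar : χ.ringHomComp (starRingEnd E) = χ⁻¹ := by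
    rw [hinv]
    ext1 a
    rw [MulChar.pow_apply_coe, MulChar.ringHomComp_apply, starRingEnd_apply, star_cube (hu3 a)]
  refine ⟨jacobiSum χ χ, χ, ?_, ?_, hχ3, ?_⟩
  · let f := algebraMap E (FractionRing E)
    have hf : Function.Injective f := IsFractionRing.injective E (FractionRing E)
    have hinj : ∀ a b : MulChar (ZMod q) E, a.ringHomComp f = b.ringHomComp f → a = b := by
      intro a b h
      ext1 u
      apply hf
      have := congrArg (fun m : MulChar (ZMod q) (FractionRing E) => m u) h
      simpa using this
    have : CharZero (FractionRing E) := charZero_of_injective_algebraMap hf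
    have hne : χ.ringHomComp f ≠ 1 := fun h => hχ1 (hinj _ _ (by rw [h, MulChar.ringHomComp_one]))
    have := jacobiSum_mul_jacobiSum_inv (F := ZMod q) (F' := FractionRing E)
      (by rw [ringChar.eq_zero, ZMod.ringChar_zmod_n]; exact hq'.ne_zero.symm)
      (χ := χ.ringHomComp f) (φ := χ.ringHomComp f) hne hne
      (fun h => hχ2 (hinj _ _ (by rw [MulChar.ringHomComp_one, ← h]; ext; simp)))
    rw [MulChar.ringHomComp_inv, jacobiSum_ringHomComp, jacobiSum_ringHomComp, ← map_mul,
      ← hstar, jacobiSum_ringHomComp, ZMod.card, ← map_natCast f] at this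
    have h2 := hf this
    rw [starRingEnd_apply, mul_star_eq] at h2
    exact_mod_cast h2
  · obtain ⟨z, -, hz⟩ := exists_jacobiSum_eq_neg_one_add (n := 3) (by norm_num) hχ3 hχ3 hd om_prim
    rw [hz, show (om - 1) ^ 2 = (3 : ℕ) * (-om) by linear_combination om_sq]
    have := (nat_dvd_iff 3 (3 * (z * -om))).mp ⟨_, rfl⟩
    have h2 := this.2
    rw [mul_left_comm, QuadraticAlgebra.im_add]
    simp
  · intro p hp hp3 hpq
    have : Fact p.Prime := ⟨hp⟩
    obtain ⟨φ⟩ := exists_hom (K := AlgebraicClosure (ZMod p))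
    have h1 := jac_hom p q hp3 hpq χ hχ φ
    have h2 := jac_hom p q hp3 hpq χ hχ (φ.comp (starRingEnd E))
    refine hom_dvd φ hp hp3 ?_ ?_
    · simp only [map_sub, map_mul, map_pow]
      rw [h1, sub_self]
    · simp only [RingHom.comp_apply, starRingEnd_apply] at h2
      simp only [star_sub, star_mul', star_pow, map_sub, map_mul, map_pow]
      rw [h2, sub_self]

structure Good (δ : E) (m : ℕ) (χ : ℕ → E) : Prop where
  one : χ 1 = 1
  mul : ∀ a b, χ (a * b) = χ a * χ b
  per : ∀ a b, a ≡ b [MOD m] → χ a = χ b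
  cube : ∀ a, Nat.Coprime a m → χ a ^ 3 = 1
  sym : ∀ p : ℕ, p.Prime → p ≠ 3 → ¬ p ∣ m → Sym p δ (χ p)

lemma Good.mul' {δ ε : E} {m n : ℕ} {χ θ : ℕ → E} (h : Good δ m χ) (h' : Good ε n θ) :
    Good (δ * ε) (m * n) (fun a => χ a * θ a) where
  one := by simp [h.one, h'.one]
  mul a b := by simp only [h.mul, h'.mul]; ring
  per a b hab := by
    simp only [h.per a b (hab.of_mul_right n), h'.per a b (hab.of_mul_left m)]
  cube a ha := by
    rw [mul_pow, h.cube a (Nat.Coprime.coprime_mul_right_right ha),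
      h'.cube a (Nat.Coprime.coprime_mul_left_right ha), one_mul]
  sym p hp hp3 hd := (h.sym p hp hp3 (fun hh => hd (hh.mul_right n))).mul
    (h'.sym p hp hp3 (fun hh => hd (hh.mul_left m)))

lemma Good.st {δ : E} {m : ℕ} {χ : ℕ → E} (h : Good δ m χ) :
    Good (star δ) m (fun a => χ a ^ 2) where
  one := by simp [h.one]
  mul a b := by simp only [h.mul]; ring
  per a b hab := by simp only [h.per a b hab]
  cube a ha := by rw [← pow_mul, mul_comm, pow_mul, h.cube a ha, one_pow]
  sym p hp hp3 hd := (h.sym p hp hp3 hd).st (h.cube p ((Nat.Prime.coprime_iff_not_dvd hp).mpr hd))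

lemma good_int (n : ℤ) (m : ℕ) : Good (n : E) m (fun _ => 1) where
  one := rfl
  mul _ _ := by simp
  per _ _ _ := rfl
  cube _ _ := by simp
  sym p _ _ _ := Sym.int p n

lemma good_J (q : ℕ) (hq : q.Prime) (h1 : q % 3 = 1) :
    ∃ (J : E) (χ : ℕ → E), J.norm = (q : ℤ) ∧ 3 ∣ J.im ∧ Good J q χ := by
  have : Fact q.Prime := ⟨hq⟩
  obtain ⟨J, χ, hn, hi, h3, hs⟩ := jac q h1
  refine ⟨J, fun a => χ (a : ZMod q), hn, hi, ?_⟩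
  refine ⟨by simp, fun a b => by simp, fun a b h => ?_, fun a ha => ?_, fun p hp hp3 hd => ?_⟩
  · have : (a : ZMod q) = b := (ZMod.natCast_eq_natCast_iff _ _ _).mpr h
    simp only [this]
  · obtain ⟨u, hu⟩ := (ZMod.isUnit_iff_coprime a q).mpr ha
    simp only [← hu]
    rw [← MulChar.pow_apply_coe, h3, MulChar.one_apply_coe]
  · exact hs p hp hp3 (fun h => hd (h ▸ dvd_refl _))

/-- inert primes -/
lemma inert (q : ℕ) (hq : q.Prime) (h2 : q % 3 = 2) (a b : ℤ) (h : (q : ℤ) ∣ a ^ 2 - a * b + b ^ 2) :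
    (q : ℤ) ∣ b := by
  have : Fact q.Prime := ⟨hq⟩
  rw [← ZMod.intCast_zmod_eq_zero_iff_dvd] at h ⊢
  push_cast at h
  by_contra hb
  set c : ZMod q := -(a : ZMod q) / b with hc
  have hcb : c * b = -a := by rw [hc]; field_simp
  have hc2 : c ^ 2 + c + 1 = 0 := by
    have : (c ^ 2 + c + 1) * (b : ZMod q) ^ 2 = 0 := by
      linear_combination (c * b - a + b) * hcb + h
    exact (mul_eq_zero.mp this).resolve_right (pow_ne_zero _ hb)
  have hc3 : c ^ 3 = 1 := by linear_combination (c - 1) * hc2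
  have hc0 : c ≠ 0 := by rintro h; rw [h] at hc3; simp at hc3
  have hcq : c ^ (q - 1) = 1 := ZMod.pow_card_sub_one_eq_one hc0
  obtain ⟨l, hl⟩ : ∃ l, q - 1 = 3 * l + 1 := ⟨q / 3, by omega⟩
  rw [hl, pow_add, pow_mul, hc3, one_pow, one_mul, pow_one] at hcq
  rw [hcq] at hc2
  have h3 : ((3 : ℕ) : ZMod q) = 0 := by push_cast; linear_combination hc2
  rw [ZMod.natCast_eq_zero_iff] at h3
  have := (Nat.prime_dvd_prime_iff_eq hq Nat.prime_three).mp h3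
  omega

lemma re_of_im (q : ℕ) (hq : q.Prime) (a b : ℤ) (h : (q : ℤ) ∣ a ^ 2 - a * b + b ^ 2)
    (hb : (q : ℤ) ∣ b) : (q : ℤ) ∣ a := by
  have : (q : ℤ) ∣ a ^ 2 := by
    have := (dvd_add h (dvd_sub (hb.mul_left a) (hb.mul_left b)))
    have e : a ^ 2 = (a ^ 2 - a * b + b ^ 2) + (a * b - b * b) := by ring
    rw [e]; exact this
  exact (Nat.prime_iff_prime_int.mp hq).dvd_of_dvd_pow this

lemma J_dvd (q : ℕ) (hq : q.Prime) (J δ : E) (hJ : J.norm = q) (hδ : (q : ℤ) ∣ δ.norm) :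
    J ∣ δ ∨ star J ∣ δ := by
  have hqp := Nat.prime_iff_prime_int.mp hq
  have key : ∀ J : E, J.norm = q → (q : ℤ) ∣ (δ * star J).im → J ∣ δ := by
    intro J hJ him
    have hn : (q : ℤ) ∣ (δ * star J).norm := by
      rw [map_mul]; exact hδ.mul_right _
    have hre := re_of_im q hq _ _ (by rw [norm_eq] at hn; exact hn) him
    obtain ⟨κ, hκ⟩ := (nat_dvd_iff q _).mpr ⟨hre, him⟩
    refine ⟨κ, ?_⟩
    have hs : star J ≠ 0 := by
      intro h
      have := congrArg QuadraticAlgebra.norm h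
      rw [QuadraticAlgebra.norm_star, hJ] at this
      simp at this
      exact hq.ne_zero this
    apply mul_right_cancel₀ hs
    rw [hκ, mul_right_comm, mul_star_eq, hJ]; simp
  have hprod : (q : ℤ) ∣ (δ * star J).im * (δ * star (star J)).im := by
    have e : (δ * star J).im * (δ * star (star J)).im = δ.im ^ 2 * J.norm - J.im ^ 2 * δ.norm := by
      rw [norm_eq, norm_eq, star_star]; simp; ring
    rw [e, hJ]
    exact dvd_sub (dvd_mul_left _ _) (hδ.mul_left _)
  rcases hqp.dvd_or_dvd hprod with h | h
  · exact Or.inl (key J hJ h)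
  · exact Or.inr (key (star J) (by rw [QuadraticAlgebra.norm_star, hJ]) h)

lemma exists_good (m : ℕ) : 0 < m → ∀ δ : E, δ.norm = m → 3 ∣ δ.im → ¬ 3 ∣ m →
    ∃ χ, Good δ m χ := by
  induction m using Nat.strong_induction_on with
  | _ m ih =>
  intro hm δ hn hi h3
  by_cases hm1 : m = 1
  · subst hm1
    have h0 : δ.im = 0 := by
      obtain ⟨t, ht⟩ := hi
      rw [norm_eq] at hn
      by_contra h0
      have : t ≠ 0 := by rintro rfl; simp at ht; exact h0 ht
      have : 1 ≤ t ^ 2 := by have := sq_pos_of_ne_zero this; omega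
      rw [ht] at hn
      push_cast at hn
      nlinarith [sq_nonneg (2 * δ.re - 3 * t)]
    have : δ = ((δ.re : ℤ) : E) := by ext <;> simp [h0]
    rw [this]
    exact ⟨_, good_int _ _⟩
  · set q := m.minFac with hqdef
    have hq : q.Prime := Nat.minFac_prime hm1
    have hqm : q ∣ m := Nat.minFac_dvd m
    have hqn : (q : ℤ) ∣ δ.norm := by rw [hn]; exact_mod_cast hqm
    have hq3 : q ≠ 3 := fun h => h3 (h ▸ hqm)
    have hm : q % 3 = 1 ∨ q % 3 = 2 := by
      have : ¬ 3 ∣ q := fun h => hq3 ((Nat.prime_dvd_prime_iff_eq Nat.prime_three hq).mp h).symm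
      omega
    have fin : ∀ (J κ : E) (n : ℕ) (χ : ℕ → E), 1 < n → J.norm = n → 3 ∣ J.im → Good J n χ →
        δ = J * κ → ∃ χ, Good δ m χ := by
      intro J κ n χ hn1 hJn hJi hg hκ
      have hnm : (m : ℤ) = n * κ.norm := by rw [← hn, hκ, map_mul, hJn]
      obtain ⟨l, hl⟩ := Int.eq_ofNat_of_zero_le (norm_nonneg κ)
      rw [hl] at hnm
      have hnm' : m = n * l := by exact_mod_cast hnm
      have hl0 : 0 < l := by
        rcases Nat.eq_zero_or_pos l with h | h
        · subst h; omega
        · exact h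
      have hJ3 : ¬ (3 : ℤ) ∣ J.norm := by
        rw [hJn]; intro h; apply h3; rw [hnm']
        exact (by exact_mod_cast h : 3 ∣ n).mul_right l
      have hκi : (3 : ℤ) ∣ κ.im := by
        have e : δ.im = J.re * κ.im + J.im * (κ.re - κ.im) := by rw [hκ]; simp; ring
        have : (3 : ℤ) ∣ J.re * κ.im := by
          have := dvd_sub hi (hJi.mul_right (κ.re - κ.im))
          rw [e] at this; simpa using this
        refine (Int.prime_three.dvd_or_dvd this).resolve_left (fun h => hJ3 ?_)
        rw [norm_eq]
        obtain ⟨s, hs⟩ := h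
        obtain ⟨t, ht⟩ := hJi
        exact ⟨3 * s ^ 2 - 3 * s * t + 3 * t ^ 2, by rw [hs, ht]; ring⟩
      obtain ⟨θ, hθ⟩ := ih l (by rw [hnm']; nlinarith) hl0 κ hl hκi
        (fun h => h3 (by rw [hnm']; exact h.mul_left n))
      exact ⟨fun a => χ a * θ a, by rw [hκ, hnm']; exact hg.mul' hθ⟩
    rcases hm with h1 | h2
    · obtain ⟨J, χ, hJ, hJi, hg⟩ := good_J q hq h1
      rcases J_dvd q hq J δ hJ hqn with ⟨κ, hκ⟩ | ⟨κ, hκ⟩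
      · exact fin J κ q χ hq.one_lt hJ hJi hg hκ
      · exact fin (star J) κ q _ hq.one_lt (by rw [QuadraticAlgebra.norm_star, hJ])
          (by simpa using hJi) hg.st hκ
    · have hb : (q : ℤ) ∣ δ.im := by
        rw [norm_eq] at hqn
        exact inert q hq h2 _ _ hqn
      have ha : (q : ℤ) ∣ δ.re := by
        rw [norm_eq] at hqn
        exact re_of_im q hq _ _ hqn hb
      obtain ⟨κ, hκ⟩ := (nat_dvd_iff q δ).mpr ⟨ha, hb⟩
      have := good_int q (q ^ 2)
      refine fin (q : E) κ (q ^ 2) (fun _ => 1) (Nat.one_lt_pow two_ne_zero hq.one_lt) (by simp)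
        (by simp) (by simpa using this) hκ

open Classical in
noncomputable def pick (P : E → Prop) : E := if ∃ x, P x then Classical.epsilon P else 1

noncomputable def L (p : ℕ) (δ : E) : E := pick (fun x => x ^ 3 = 1 ∧ Sym p δ x)

lemma pick_spec {P : E → Prop} (h : ∃ x, P x) : P (pick P) := by
  unfold pick; rw [if_pos h]; exact Classical.epsilon_spec h

lemma L_cube (p : ℕ) (δ : E) : L p δ ^ 3 = 1 := by
  by_cases h : ∃ x, x ^ 3 = 1 ∧ Sym p δ x
  · exact (pick_spec h).1
  · unfold L pick; rw [if_neg h, one_pow]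

lemma L_eq {p : ℕ} (hp : p.Prime) (hp3 : p ≠ 3) {δ x : E} (hd : ¬ (p : ℤ) ∣ δ.norm)
    (hx : x ^ 3 = 1) (h : Sym p δ x) : L p δ = x := by
  have := pick_spec (P := fun x => x ^ 3 = 1 ∧ Sym p δ x) ⟨x, hx, h⟩
  exact Sym.unique hp hp3 hd this.1 hx this.2 h

lemma L_congr {p : ℕ} {δ ε : E} (hd : (p : E) ∣ δ - ε) : L p δ = L p ε := by
  have : (fun x => x ^ 3 = 1 ∧ Sym p δ x) = (fun x => x ^ 3 = 1 ∧ Sym p ε x) := by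
    funext x
    have h' : (p : E) ∣ ε - δ := by rw [← neg_sub]; exact hd.neg_right
    exact propext ⟨fun h => ⟨h.1, h.2.congr hd⟩, fun h => ⟨h.1, h.2.congr h'⟩⟩
  unfold L; rw [this]

lemma L_star {p : ℕ} (hp : p.Prime) (hp3 : p ≠ 3) {δ : E} (hd : ¬ (p : ℤ) ∣ δ.norm) :
    L p (- star δ) = L p δ ^ 2 := by
  by_cases h : ∃ x, x ^ 3 = 1 ∧ Sym p δ x
  · obtain ⟨x, hx, hs⟩ := h
    rw [L_eq hp hp3 hd hx hs]
    refine L_eq hp hp3 ?_ ?_ (Sym.st hx hs).neg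
    · have : (-star δ).norm = δ.norm := by
        rw [norm_eq, norm_eq]; simp; ring
      rwa [this]
    · rw [← pow_mul, mul_comm, pow_mul, hx, one_pow]
  · have h' : ¬ ∃ x, x ^ 3 = 1 ∧ Sym p (-star δ) x := by
      rintro ⟨x, hx, hs⟩
      refine h ⟨x ^ 2, by rw [← pow_mul, mul_comm, pow_mul, hx, one_pow], ?_⟩
      have := (Sym.st hx hs).neg
      simpa using this
    unfold L pick
    rw [if_neg h, if_neg h', one_pow]

abbrev dl (d : ℤ) : E := ⟨d, 3⟩

lemma dl_norm (d : ℤ) : (dl d).norm = d ^ 2 - 3 * d + 9 := by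
  rw [norm_eq]; ring

lemma dl_star (d : ℤ) : - star (dl d) = dl (3 - d) := by
  ext
  · simp; ring
  · simp

noncomputable def Ps (a d : ℤ) : E := (a.natAbs.primeFactorsList.map (fun p => L p (dl d))).prod

lemma list_cube (l : List ℕ) (f : ℕ → E) (h : ∀ p ∈ l, f p ^ 3 = 1) : (l.map f).prod ^ 3 = 1 := by
  induction l with
  | nil => simp
  | cons a l ih =>
    simp only [List.map_cons, List.prod_cons, mul_pow]
    rw [h a (by simp), ih (fun p hp => h p (by simp [hp])), one_mul]

lemma list_sq (l : List ℕ) (f : ℕ → E) : (l.map (fun p => f p ^ 2)).prod = (l.map f).prod ^ 2 := by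
  induction l with
  | nil => simp
  | cons a l ih => simp only [List.map_cons, List.prod_cons, mul_pow, ih]

lemma Ps_cube (a d : ℤ) : Ps a d ^ 3 = 1 := list_cube _ _ (fun p _ => L_cube p _)

lemma Ps_T (a d k : ℤ) : Ps a (d + a * k) = Ps a d := by
  unfold Ps
  congr 1
  refine List.map_congr_left (fun p hp => L_congr ?_)
  have hpa : (p : ℤ) ∣ a := Int.natCast_dvd.mpr (Nat.dvd_of_mem_primeFactorsList hp)
  rw [nat_dvd_iff]
  constructor
  · simpa using hpa.mul_right k
  · simp

lemma Ps_prime (p : ℕ) (hp : p.Prime) (d : ℤ) : Ps p d = L p (dl d) := by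
  unfold Ps
  simp [Nat.primeFactorsList_prime hp]

lemma not_three {a d c : ℤ} (h : a * c = d ^ 2 - 3 * d + 10) : ¬ (3 : ℤ) ∣ a := by
  rintro ⟨k, rfl⟩
  have h1 : (3 * k * c) % 3 = (d ^ 2 - 3 * d + 10) % 3 := by rw [h]
  have h2 : d % 3 = 0 ∨ d % 3 = 1 ∨ d % 3 = 2 := by omega
  rcases h2 with h2 | h2 | h2 <;> simp [pow_two, Int.add_emod, Int.sub_emod, Int.mul_emod, h2] at h1

lemma prime_facts {a d c : ℤ} (h : a * c = d ^ 2 - 3 * d + 10) {p : ℕ}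
    (hp : p ∈ a.natAbs.primeFactorsList) : p.Prime ∧ p ≠ 3 ∧ ¬ (p : ℤ) ∣ (dl d).norm := by
  have hpp := Nat.prime_of_mem_primeFactorsList hp
  have hpa : (p : ℤ) ∣ a := Int.natCast_dvd.mpr (Nat.dvd_of_mem_primeFactorsList hp)
  refine ⟨hpp, ?_, ?_⟩
  · rintro rfl
    exact not_three h (by exact_mod_cast hpa)
  · intro hn
    rw [dl_norm] at hn
    have h1 : (p : ℤ) ∣ 1 := by
      have := dvd_sub (hpa.mul_right c) hn
      rw [h] at this
      have e : d ^ 2 - 3 * d + 10 - (d ^ 2 - 3 * d + 9) = 1 := by ring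
      rwa [e] at this
    exact hpp.one_lt.ne' (by exact_mod_cast (Int.natAbs_dvd_natAbs.mpr h1 |> Nat.dvd_one.mp))

lemma Ps_star {a d c : ℤ} (h : a * c = d ^ 2 - 3 * d + 10) : Ps a (3 - d) = Ps a d ^ 2 := by
  unfold Ps
  rw [← list_sq]
  congr 1
  refine List.map_congr_left (fun p hp => ?_)
  obtain ⟨h1, h2, h3⟩ := prime_facts h hp
  rw [← dl_star, L_star h1 h2 h3]

lemma Good.list {δ : E} {m : ℕ} {χ : ℕ → E} (hg : Good δ m χ) (l : List ℕ) :
    χ l.prod = (l.map χ).prod := by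
  induction l with
  | nil => simp [hg.one]
  | cons a l ih => simp [hg.mul, ih]

lemma good_dl (d : ℤ) (h3 : ¬ (3 : ℤ) ∣ d) :
    ∃ (m : ℕ) (χ : ℕ → E), (m : ℤ) = (dl d).norm ∧ Good (dl d) m χ := by
  obtain ⟨m, hm⟩ := Int.eq_ofNat_of_zero_le (norm_nonneg (dl d))
  have hm' := hm
  rw [dl_norm] at hm'
  obtain ⟨χ, hχ⟩ := exists_good m (by
      have : 0 < d ^ 2 - 3 * d + 9 := by nlinarith [sq_nonneg (2 * d - 3)]
      omega) (dl d) hm (by simp) (by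
      intro h
      have h' : (3 : ℤ) ∣ d ^ 2 := by
        have e : d ^ 2 = m + 3 * (d - 3) := by rw [← hm']; ring
        rw [e]
        exact dvd_add (by exact_mod_cast h) (dvd_mul_right _ _)
      exact h3 (Int.prime_three.dvd_of_dvd_pow h'))
  exact ⟨m, χ, hm.symm, hχ⟩

lemma Ps_good {a d c : ℤ} (ha : a ≠ 0) (h : a * c = d ^ 2 - 3 * d + 10) {m : ℕ} {χ : ℕ → E}
    (hm : (m : ℤ) = (dl d).norm) (hg : Good (dl d) m χ) : Ps a d = χ a.natAbs := by
  unfold Ps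
  conv_rhs => rw [← Nat.prod_primeFactorsList (Int.natAbs_ne_zero.mpr ha), hg.list]
  congr 1
  refine List.map_congr_left (fun p hp => ?_)
  obtain ⟨h1, h2, h3⟩ := prime_facts h hp
  have h4 : ¬ p ∣ m := by
    intro hh; apply h3; rw [← hm]; exact_mod_cast hh
  exact L_eq h1 h2 h3 (hg.cube p ((Nat.Prime.coprime_iff_not_dvd h1).mpr h4)) (hg.sym p h1 h2 h4)

lemma flip0 {a d c : ℤ} (ha : 0 < a) (hc : 0 < c) (h : a * c = d ^ 2 - 3 * d + 10)
    (h3 : ¬ (3 : ℤ) ∣ d) : Ps c (3 - d) = Ps a d := by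
  obtain ⟨m, χ, hm, hg⟩ := good_dl d h3
  have h' : c * a = d ^ 2 - 3 * d + 10 := by rw [mul_comm, h]
  rw [Ps_star h']
  have key : Ps a d * Ps c d = 1 := by
    rw [Ps_good ha.ne' h hm hg, Ps_good hc.ne' h' hm hg, ← hg.mul, ← hg.one]
    apply hg.per
    rw [← Int.natAbs_mul, h]
    rw [dl_norm] at hm
    have : (d ^ 2 - 3 * d + 10).natAbs = m + 1 := by omega
    rw [this]
    simp [Nat.ModEq]
  linear_combination Ps a d * Ps_cube c d - Ps c d ^ 2 * key

lemma flip {a d c : ℤ} (ha : 0 < a) (hc : 0 < c) (h : a * c = d ^ 2 - 3 * d + 10) :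
    Ps c (3 - d) = Ps a d := by
  by_cases h3 : (3 : ℤ) ∣ d
  · have h' : c * a = d ^ 2 - 3 * d + 10 := by rw [mul_comm, h]
    set c' := c - 2 * d + a + 3 with hc'
    have e1 : a * c' = (d - a) ^ 2 - 3 * (d - a) + 10 := by rw [hc']; linear_combination h
    have e2 : c' * c = (d - c) ^ 2 - 3 * (d - c) + 10 := by rw [hc']; linear_combination h
    have hc0 : 0 < c' := by
      have : 0 < a * c' := by rw [e1]; nlinarith [sq_nonneg (2 * (d - a) - 3)]
      exact pos_of_mul_pos_right this ha.le |> fun h => h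
    have f1 := flip0 ha hc0 e1 (fun hh => not_three h (by have := dvd_sub h3 hh; simpa using this))
    have f2 := flip0 hc0 hc e2 (fun hh => not_three h' (by have := dvd_sub h3 hh; simpa using this))
    have t1 := Ps_T a d (-1)
    have t2 := Ps_T c' (3 - (d - a)) (-1)
    have t3 := Ps_T c (3 - d) 1
    rw [show d + a * -1 = d - a by ring] at t1
    rw [show 3 - (d - a) + c' * -1 = d - c by rw [hc']; ring] at t2
    rw [show 3 - d + c * 1 = 3 - (d - c) by ring] at t3
    rw [← t3, f2, t2, f1, t1]
  · exact flip0 ha hc h h3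

def Rep (e f a d c : ℤ) : Prop := ∃ x y z w : ℤ, a = e * x ^ 2 + x * y + f * y ^ 2 ∧
  c = e * z ^ 2 + z * w + f * w ^ 2 ∧
  2 * d - 3 = 2 * e * x * z + x * w + y * z + 2 * f * y * w

lemma Rep.T {e f a d c : ℤ} (k : ℤ) (h : Rep e f a (d + a * k) (c + (2 * d - 3) * k + a * k ^ 2)) :
    Rep e f a d c := by
  obtain ⟨x, y, z, w, h1, h2, h3⟩ := h
  refine ⟨x, y, z - k * x, w - k * y, h1, ?_, ?_⟩
  · linear_combination h2 - k * h3 + k ^ 2 * h1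
  · linear_combination h3 - 2 * k * h1

lemma Rep.S {e f a d c : ℤ} (h : Rep e f c (3 - d) a) : Rep e f a d c := by
  obtain ⟨x, y, z, w, h1, h2, h3⟩ := h
  exact ⟨z, w, -x, -y, h2, by linear_combination h1, by linear_combination - h3⟩

def Concl (a d c : ℤ) : Prop := (Ps a d = 1 ∧ Rep 1 8 a d c) ∨ (Ps a d ≠ 1 ∧ Rep 2 4 a d c)

lemma om_ne : om ≠ 1 := by
  intro h
  have := congrArg QuadraticAlgebra.im h
  simp at this

lemma om_sq_ne : om ^ 2 ≠ 1 := by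
  intro h
  have := congrArg QuadraticAlgebra.im h
  simp [pow_two] at this

lemma L22 : L 2 (dl 2) ≠ 1 := by
  rw [L_eq Nat.prime_two (by norm_num) (x := om) (by rw [dl_norm]; norm_num) om_cube]
  · exact om_ne
  · unfold Sym
    rw [nat_dvd_iff]
    norm_num [pow_two]

lemma L21 : L 2 (dl 1) ≠ 1 := by
  rw [L_eq Nat.prime_two (by norm_num) (x := om ^ 2) (by rw [dl_norm]; norm_num)
    (by rw [← pow_mul, mul_comm, pow_mul, om_cube, one_pow])]
  · exact om_sq_ne
  · unfold Sym
    rw [nat_dvd_iff]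
    norm_num [pow_two]

lemma reduction (n : ℕ) : ∀ a d c : ℤ, a.toNat = n → 0 < a → a * c = d ^ 2 - 3 * d + 10 →
    Concl a d c := by
  induction n using Nat.strong_induction_on with
  | _ n ih =>
  intro a d c hn ha h
  -- normalise
  obtain ⟨k, hk1, hk2⟩ : ∃ k : ℤ, -a < 2 * (d + a * k) - 3 ∧ 2 * (d + a * k) - 3 ≤ a := by
    refine ⟨-((2 * d - 3 + a - 1) / (2 * a)), ?_, ?_⟩
    · have := Int.emod_nonneg (2 * d - 3 + a - 1) (b := 2 * a) (by omega)
      have e := Int.emod_add_mul_ediv (2 * d - 3 + a - 1) (2 * a)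
      nlinarith
    · have := Int.emod_lt_of_pos (2 * d - 3 + a - 1) (b := 2 * a) (by omega)
      have e := Int.emod_add_mul_ediv (2 * d - 3 + a - 1) (2 * a)
      nlinarith
  suffices hs : Concl a (d + a * k) (c + (2 * d - 3) * k + a * k ^ 2) by
    rcases hs with ⟨h1, h2⟩ | ⟨h1, h2⟩
    · exact Or.inl ⟨by rw [← Ps_T a d k]; exact h1, h2.T k⟩
    · exact Or.inr ⟨by rw [← Ps_T a d k]; exact h1, h2.T k⟩
  have h' : a * (c + (2 * d - 3) * k + a * k ^ 2) = (d + a * k) ^ 2 - 3 * (d + a * k) + 10 := by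
    linear_combination h
  clear h
  generalize d + a * k = d' at *
  generalize c + (2 * d - 3) * k + a * k ^ 2 = c' at *
  have hc : 0 < c' := by
    have : 0 < a * c' := by rw [h']; nlinarith [sq_nonneg (2 * d' - 3)]
    exact pos_of_mul_pos_right this ha.le |> fun h => h
  by_cases hlt : c' < a
  · have := ih c'.toNat (by omega) c' (3 - d') a rfl hc (by linear_combination h')
    unfold Concl at this ⊢
    rw [flip ha hc h'] at this
    rcases this with ⟨h1, h2⟩ | ⟨h1, h2⟩
    · exact Or.inl ⟨h1, h2.S⟩
    · exact Or.inr ⟨h1, h2.S⟩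
  · push Not at hlt
    have ha3 : a ≤ 3 := by
      have h1 : (2 * d' - 3) ^ 2 ≤ a ^ 2 := by
        apply sq_le_sq' <;> omega
      have h2 : a * a ≤ a * c' := mul_le_mul_of_nonneg_left hlt ha.le
      by_contra h4
      push Not at h4
      nlinarith
    interval_cases a
    · obtain rfl : d' = 2 := by omega
      obtain rfl : c' = 8 := by omega
      exact Or.inl ⟨by simp [Ps], 1, 0, 0, 1, by norm_num, by norm_num, by norm_num⟩
    · have : d' = 1 ∨ d' = 2 := by omega
      rcases this with rfl | rfl
      · obtain rfl : c' = 4 := by omega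
        refine Or.inr ⟨?_, 1, 0, 0, -1, by norm_num, by norm_num, by norm_num⟩
        have := Ps_prime 2 Nat.prime_two 1
        push_cast at this
        rw [this]; exact L21
      · obtain rfl : c' = 4 := by omega
        refine Or.inr ⟨?_, 1, 0, 0, 1, by norm_num, by norm_num, by norm_num⟩
        have := Ps_prime 2 Nat.prime_two 2
        push_cast at this
        rw [this]; exact L22
    · exact (not_three h' (dvd_refl _)).elim

lemma cubic_roots {F : Type*} [Field F] {a b c x : F} (ha : a ^ 3 + a + 1 = 0)
    (hb : b ^ 3 + b + 1 = 0) (hc : c ^ 3 + c + 1 = 0) (hx : x ^ 3 + x + 1 = 0)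
    (hab : a ≠ b) (hac : a ≠ c) (hbc : b ≠ c) : x = a ∨ x = b ∨ x = c := by
  have h1 : a ^ 2 + a * b + b ^ 2 + 1 = 0 := by
    apply (mul_eq_zero.mp (_ : (a - b) * (a ^ 2 + a * b + b ^ 2 + 1) = 0)).resolve_left
      (sub_ne_zero.mpr hab)
    linear_combination ha - hb
  have h2 : a ^ 2 + a * c + c ^ 2 + 1 = 0 := by
    apply (mul_eq_zero.mp (_ : (a - c) * (a ^ 2 + a * c + c ^ 2 + 1) = 0)).resolve_left
      (sub_ne_zero.mpr hac)
    linear_combination ha - hc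
  have h3 : a + b + c = 0 := by
    apply (mul_eq_zero.mp (_ : (b - c) * (a + b + c) = 0)).resolve_left
      (sub_ne_zero.mpr hbc)
    linear_combination h1 - h2
  have hc' : c = - a - b := by linear_combination h3
  have : (x - a) * ((x - b) * (x - c)) = 0 := by
    rw [hc']
    linear_combination hx - (x - a) * h1 - ha
  rcases mul_eq_zero.mp this with h | h
  · exact Or.inl (sub_eq_zero.mp h)
  rcases mul_eq_zero.mp h with h | h
  · exact Or.inr (Or.inl (sub_eq_zero.mp h))
  · exact Or.inr (Or.inr (sub_eq_zero.mp h))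

lemma fixed {p : ℕ} [Fact p.Prime] {K : Type*} [Field K] [Algebra (ZMod p) K] {z : K}
    (hz : z ^ p = z) : ∃ a : ZMod p, algebraMap (ZMod p) K a = z := by
  have : CharP K p := charP_of_injective_algebraMap (algebraMap (ZMod p) K).injective p
  have h := (Subfield.mem_bot_iff_pow_eq_self K p).mpr hz
  have h' : z ∈ (algebraMap (ZMod p) K).fieldRange :=
    (bot_le : (⊥ : Subfield K) ≤ (algebraMap (ZMod p) K).fieldRange) h
  simpa using h'

section link
variable {K : Type*} [Field K]

lemma f_root {D D' y w t : K} (hw : w ^ 2 + w + 1 = 0) (ht : t = 1 + 2 * w) (ht0 : t ≠ 0)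
    (hD : D * D' = -1) (hDD : D - D' = 3 * t) (hy : y ^ 3 = D) :
    ((y + y⁻¹) / t) ^ 3 + (y + y⁻¹) / t + 1 = 0 := by
  have hD0 : D ≠ 0 := by rintro rfl; simp at hD
  have hy0 : y ≠ 0 := by rintro rfl; apply hD0; rw [← hy]; simp
  have ht2 : t ^ 2 = -3 := by rw [ht]; linear_combination 4 * hw
  have hi : y⁻¹ ^ 3 = - D' := by
    rw [inv_pow, hy]
    exact (eq_inv_of_mul_eq_one_right (by linear_combination - hD)).symm
  have hyi : y * y⁻¹ = 1 := mul_inv_cancel₀ hy0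
  generalize y⁻¹ = z at *
  have : (y + z) ^ 3 + (y + z) * t ^ 2 + t ^ 3 = 0 := by
    linear_combination hy + hi + hDD + 3 * (y + z) * hyi + (y + z + t) * ht2
  field_simp
  linear_combination this

lemma f_inj {D D' y k t : K} {d : K} (ht0 : t ≠ 0)
    (hD : D * D' = -1) (hDD : D + D' = 2 * d - 3) (hd : d ^ 2 - 3 * d + 10 = 0) (h31 : (31 : K) ≠ 0)
    (hy : y ^ 3 = D) (hk : k ^ 3 = 1) (h : (k * y + (k * y)⁻¹) / t = (y + y⁻¹) / t) : k = 1 := by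
  have hD0 : D ≠ 0 := by rintro rfl; simp at hD
  have hy0 : y ≠ 0 := by rintro rfl; apply hD0; rw [← hy]; simp
  have hk0 : k ≠ 0 := by rintro rfl; simp at hk
  rw [div_left_inj' ht0] at h
  have e : (k - 1) * (k * y ^ 2 - 1) = 0 := by
    field_simp at h
    linear_combination h
  rcases mul_eq_zero.mp e with e | e
  · exact sub_eq_zero.mp e
  · exfalso
    have e1 : k * y ^ 2 = 1 := sub_eq_zero.mp e
    have e2 : D ^ 2 = 1 := by
      have : (k * y ^ 2) ^ 3 = 1 := by rw [e1, one_pow]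
      rw [← hy]; linear_combination this - y ^ 6 * hk
    have e3 : D + D' = 0 := by
      have : D * (D + D') = 0 := by linear_combination e2 + hD
      exact (mul_eq_zero.mp this).resolve_left hD0
    rw [e3] at hDD
    apply h31
    linear_combination 4 * hd + (2 * d - 3) * hDD


lemma frob_w1 {w : K} {e p : ℕ} (hw : w ^ 2 + w + 1 = 0) (he : p = 3 * e + 1) : w ^ p = w := by
  have h3 : w ^ 3 = 1 := by linear_combination (w - 1) * hw
  rw [he, pow_succ, pow_mul, h3, one_pow, one_mul]

lemma frob_w2 {w : K} {e p : ℕ} (hw : w ^ 2 + w + 1 = 0) (he : p = 3 * e + 2) : w ^ p = w ^ 2 := by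
  have h3 : w ^ 3 = 1 := by linear_combination (w - 1) * hw
  rw [he, pow_add, pow_mul, h3, one_pow, one_mul]

/-- Frobenius action -/
lemma frob_f {p : ℕ} (hp : p.Prime) (hp2 : p ≠ 2) (hp3 : p ≠ 3) [CharP K p] {D D' w t X : K} {d : ℤ}
    (hw : w ^ 2 + w + 1 = 0) (ht : t = 1 + 2 * w)
    (hD1 : D = d + 3 * w) (hD1' : D' = d + 3 * w ^ 2) (hD : D * D' = -1)
    (hX : X ^ 3 = 1) (hs : D ^ ((p + 1) / 3) = X ^ p * D' ^ ((p + 1) / 3)) :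
    ∃ k : K, k ^ 3 = 1 ∧ (k = 1 ↔ X = 1) ∧
      ∀ y : K, y ^ 3 = D → ((y + y⁻¹) / t) ^ p = (k * y + (k * y)⁻¹) / t := by
  have : Fact p.Prime := ⟨hp⟩
  have hodd : p % 2 = 1 := hp.eq_two_or_odd.resolve_left hp2
  have hm : p % 3 = 1 ∨ p % 3 = 2 := by
    have : ¬ 3 ∣ p := fun h => hp3 ((Nat.prime_dvd_prime_iff_eq Nat.prime_three hp).mp h).symm
    omega
  have hint : ∀ n : ℤ, (n : K) ^ p = n := fun n => by
    have := map_intCast (frobenius K p) n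
    rwa [frobenius_def] at this
  have hD0 : D ≠ 0 := by rintro rfl; simp at hD
  have hX0 : X ≠ 0 := by rintro rfl; simp at hX
  have h2p : (2 : K) ^ p = 2 := by exact_mod_cast hint 2
  have h3p : (3 : K) ^ p = 3 := by exact_mod_cast hint 3
  have hDp : D ^ p = d + 3 * w ^ p := by
    rw [hD1, add_pow_char, mul_pow, hint, h3p]
  have htp : t ^ p = 1 + 2 * w ^ p := by
    rw [ht, add_pow_char, mul_pow, one_pow, h2p]
  have hfp : ∀ y : K, ((y + y⁻¹) / t) ^ p = (y ^ p + (y ^ p)⁻¹) / t ^ p := by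
    intro y
    rw [div_pow, add_pow_char, inv_pow]
  rcases hm with hm | hm
  · obtain ⟨e, he⟩ : ∃ e, p = 3 * e + 1 := ⟨p / 3, by omega⟩
    have he' : (p + 1) / 3 = e := by omega
    have hev : Even e := by rw [Nat.even_iff]; omega
    rw [frob_w1 hw he] at hDp htp
    rw [← hD1] at hDp
    rw [← ht] at htp
    have hXp : X ^ p = X := by rw [he, pow_succ, pow_mul, hX, one_pow, one_mul]
    rw [he', hXp] at hs
    have hk2 : (D ^ e) ^ 2 = X := by
      have : D ^ e * D' ^ e = 1 := by rw [← mul_pow, hD, hev.neg_one_pow]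
      linear_combination D ^ e * hs + X * this
    have hk3 : (D ^ e) ^ 3 = 1 := by
      apply mul_right_cancel₀ hD0
      rw [one_mul, ← pow_mul, ← pow_succ, mul_comm e 3, ← he, hDp]
    refine ⟨D ^ e, hk3, ⟨fun h => by rw [← hk2, h, one_pow], fun h => ?_⟩, fun y hy => ?_⟩
    · rw [h] at hk2
      linear_combination hk3 - D ^ e * hk2
    · have hyp : y ^ p = D ^ e * y := by rw [he, pow_succ, pow_mul, hy]
      rw [hfp, hyp, htp]
  · obtain ⟨e, he⟩ : ∃ e, p + 1 = 3 * e := ⟨(p + 1) / 3, by omega⟩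
    have he' : (p + 1) / 3 = e := by omega
    have hev : Even e := by rw [Nat.even_iff]; omega
    have he2 : p = 3 * (e - 1) + 2 := by omega
    rw [frob_w2 hw he2] at hDp htp
    rw [← hD1'] at hDp
    have htp' : t ^ p = - t := by rw [htp, ht]; linear_combination 2 * hw
    have hXp : X ^ p = X ^ 2 := by rw [he2, pow_add, pow_mul, hX, one_pow, one_mul]
    rw [he', hXp] at hs
    have hk2 : (D ^ e) ^ 2 = X ^ 2 := by
      have : D ^ e * D' ^ e = 1 := by rw [← mul_pow, hD, hev.neg_one_pow]
      linear_combination D ^ e * hs + X ^ 2 * this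
    have hk3 : (D ^ e) ^ 3 = -1 := by
      rw [← pow_mul, mul_comm e 3, ← he, pow_succ, hDp, mul_comm, hD]
    have hk : D ^ e = - X := by
      have : D ^ e * X ^ 2 = - X * X ^ 2 := by
        linear_combination hk3 - D ^ e * hk2 + hX
      exact mul_right_cancel₀ (pow_ne_zero 2 hX0) this
    refine ⟨X ^ 2, by rw [← pow_mul, mul_comm, pow_mul, hX, one_pow],
      ⟨fun h => ?_, fun h => by rw [h, one_pow]⟩, fun y hy => ?_⟩
    · linear_combination hX - X * h
    · have hy0 : y ≠ 0 := by rintro rfl; apply hD0; rw [← hy]; simp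
      have hyp : y ^ p = - X * y⁻¹ := by
        apply mul_right_cancel₀ hy0
        rw [← pow_succ, he, pow_mul, hy, hk]
        field_simp
      have hXi : X⁻¹ = X ^ 2 := inv_eq_of_mul_eq_one_right (by linear_combination hX)
      have hX2i : (X ^ 2)⁻¹ = X := by rw [← hXi, inv_inv]
      rw [hfp, hyp, htp', mul_inv, inv_inv, inv_neg, hXi, mul_inv, hX2i, div_neg, ← neg_div]
      congr 1
      ring

end link

lemma link_aux (p : ℕ) [Fact p.Prime] (K : Type) [Field K] [IsAlgClosed K] [Algebra (ZMod p) K] (hp2 : p ≠ 2) (hp3 : p ≠ 3) (hp31 : p ≠ 31) (d : ℤ)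
    (h3 : ¬ (3 : ℤ) ∣ d) (hd : (p : ℤ) ∣ d ^ 2 - 3 * d + 10) :
    (Finset.univ.filter (fun a : ZMod p => a ^ 3 + a + 1 = 0)).card = 3 ↔ L p (dl d) = 1 := by
  have hp := (Fact.out : p.Prime)
  have : CharP K p := charP_of_injective_algebraMap (algebraMap (ZMod p) K).injective p
  obtain ⟨m, χ, hm, hg⟩ := good_dl d h3
  have hpn : ¬ (p : ℤ) ∣ (dl d).norm := by
    intro h
    rw [dl_norm] at h
    have h1 := dvd_sub hd h
    have e : d ^ 2 - 3 * d + 10 - (d ^ 2 - 3 * d + 9) = 1 := by ring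
    rw [e] at h1
    exact hp.one_lt.ne' (by exact_mod_cast (Int.natAbs_dvd_natAbs.mpr h1 |> Nat.dvd_one.mp))
  have hpm : ¬ p ∣ m := by
    intro hh; apply hpn; rw [← hm]; exact_mod_cast hh
  have hx := hg.cube p ((Nat.Prime.coprime_iff_not_dvd hp).mpr hpm)
  have hs := hg.sym p hp hp3 hpm
  rw [L_eq hp hp3 hpn hx hs]
  generalize χ p = x at *
  obtain ⟨φ⟩ := exists_hom (K := K)
  have hs' := hom_of_dvd (p := p) φ hs
  rw [map_sub, map_mul, map_pow, map_pow, map_pow, sub_eq_zero] at hs'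
  have hw := hom_om φ
  have hwne := hom_om_ne φ (p := p) hp hp3
  have hX : φ x ^ 3 = 1 := by rw [← map_pow, hx, map_one]
  have hD1 : φ (dl d) = d + 3 * φ om := by rw [hom_apply]; simp
  have hD1' : φ (star (dl d)) = d + 3 * φ om ^ 2 := by rw [hom_star]; simp
  have hdK : (d : K) ^ 2 - 3 * d + 10 = 0 := by
    have := (CharP.intCast_eq_zero_iff K p _).mpr hd
    push_cast at this; exact this
  have hX1 : φ x = 1 ↔ x = 1 := ⟨fun h => hom_cube_one φ hp hp3 hx h, fun h => by rw [h, map_one]⟩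
  have h31 : (31 : K) ≠ 0 := by
    intro h
    have := (CharP.cast_eq_zero_iff K p 31).mp (by exact_mod_cast h)
    exact hp31 ((Nat.prime_dvd_prime_iff_eq hp (by norm_num)).mp this)
  generalize φ (dl d) = D at *
  generalize φ (star (dl d)) = D' at *
  generalize φ om = w at *
  have hw3 : w ^ 3 = 1 := by linear_combination (w - 1) * hw
  obtain ⟨t, ht⟩ : ∃ t, t = 1 + 2 * w := ⟨_, rfl⟩
  have ht0 : t ≠ 0 := by
    intro h; apply hwne; rw [h] at ht; linear_combination - ht - hw
  have hD : D * D' = -1 := by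
    rw [hD1, hD1']
    linear_combination hdK + 9 * hw3 + 3 * d * hw
  have hsub : D - D' = 3 * t := by rw [hD1, hD1', ht]; linear_combination - 3 * hw
  have hadd : D + D' = 2 * d - 3 := by rw [hD1, hD1']; linear_combination 3 * hw
  obtain ⟨k, hk3, hk1, hkf⟩ := frob_f hp hp2 hp3 hw ht hD1 hD1' hD hX hs'
  obtain ⟨y, hy⟩ := IsAlgClosed.exists_pow_nat_eq D (n := 3) (by norm_num)
  rw [← hX1, ← hk1]
  have hroot : ∀ y : K, y ^ 3 = D → ((y + y⁻¹) / t) ^ 3 + (y + y⁻¹) / t + 1 = 0 :=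
    fun y hy => f_root hw ht ht0 hD hsub hy
  have hinj : ∀ y k : K, y ^ 3 = D → k ^ 3 = 1 → (k * y + (k * y)⁻¹) / t = (y + y⁻¹) / t → k = 1 :=
    fun y k hy hk h => f_inj ht0 hD hadd hdK h31 hy hk h
  have hinjA := (algebraMap (ZMod p) K).injective
  constructor
  · intro hc
    obtain ⟨a, b, c, hab, hac, hbc, hS⟩ := Finset.card_eq_three.mp hc
    have hr : ∀ r : ZMod p, r ∈ ({a, b, c} : Finset (ZMod p)) →
        (algebraMap (ZMod p) K r) ^ 3 + algebraMap (ZMod p) K r + 1 = 0 := by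
      intro r hr
      rw [← hS] at hr
      have := congrArg (algebraMap (ZMod p) K) (Finset.mem_filter.mp hr).2
      simpa using this
    have hf := cubic_roots (hr a (by simp)) (hr b (by simp)) (hr c (by simp)) (hroot y hy)
      (fun h => hab (hinjA h)) (fun h => hac (hinjA h)) (fun h => hbc (hinjA h))
    have hfix : ((y + y⁻¹) / t) ^ p = (y + y⁻¹) / t := by
      rcases hf with h | h | h <;> rw [h, ← map_pow, ZMod.pow_card]
    rw [hkf y hy] at hfix
    exact hinj y k hy hk3 hfix
  · intro hk
    subst hk
    have hex : ∀ y : K, y ^ 3 = D → ∃ a : ZMod p, algebraMap (ZMod p) K a = (y + y⁻¹) / t := by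
      intro y hy
      apply fixed
      rw [hkf y hy, one_mul]
    have hy1 : (w * y) ^ 3 = D := by rw [mul_pow, hw3, hy, one_mul]
    have hy2 : (w * (w * y)) ^ 3 = D := by rw [mul_pow, hw3, hy1, one_mul]
    obtain ⟨a, ha⟩ := hex _ hy
    obtain ⟨b, hb⟩ := hex _ hy1
    obtain ⟨c, hc⟩ := hex _ hy2
    have hr : ∀ y : K, y ^ 3 = D → ∀ a : ZMod p, algebraMap (ZMod p) K a = (y + y⁻¹) / t →
        a ^ 3 + a + 1 = 0 := by
      intro y hy a ha
      apply hinjA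
      have := hroot y hy
      rw [← ha] at this
      simpa using this
    have hw1 : w ≠ 1 := by
      intro h; apply hwne; rw [h]; ring
    have hw21 : w ^ 2 ≠ 1 := by
      intro h; apply hw1; linear_combination hw3 - w * h
    have hab : a ≠ b := by
      rintro rfl
      rw [ha] at hb
      exact hw1 (hinj y w hy hw3 hb.symm)
    have hbc : b ≠ c := by
      rintro rfl
      rw [hb] at hc
      exact hw1 (hinj _ w hy1 hw3 hc.symm)
    have hac : a ≠ c := by
      rintro rfl
      rw [ha, ← mul_assoc, ← pow_two] at hc
      exact hw21 (hinj y (w ^ 2) hy (by rw [← pow_mul, mul_comm, pow_mul, hw3, one_pow]) hc.symm)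
    have hra := hr _ hy a ha
    have hrb := hr _ hy1 b hb
    have hrc := hr _ hy2 c hc
    rw [Finset.card_eq_three]
    refine ⟨a, b, c, hab, hac, hbc, ?_⟩
    ext r
    simp only [Finset.mem_filter, Finset.mem_univ, true_and, Finset.mem_insert,
      Finset.mem_singleton]
    constructor
    · intro hr
      exact cubic_roots hra hrb hrc hr hab hac hbc
    · rintro (rfl | rfl | rfl) <;> assumption

lemma link (p : ℕ) [Fact p.Prime] (hp2 : p ≠ 2) (hp3 : p ≠ 3) (hp31 : p ≠ 31) (d : ℤ)
    (h3 : ¬ (3 : ℤ) ∣ d) (hd : (p : ℤ) ∣ d ^ 2 - 3 * d + 10) :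
    (Finset.univ.filter (fun a : ZMod p => a ^ 3 + a + 1 = 0)).card = 3 ↔ L p (dl d) = 1 :=
  link_aux p (AlgebraicClosure (ZMod p)) hp2 hp3 hp31 d h3 hd

/-- from a square root of -31 to the dichotomy -/
lemma dich (p : ℕ) [Fact p.Prime] (hp2 : p ≠ 2) (hp3 : p ≠ 3) (hp31 : p ≠ 31) (s : ZMod p)
    (hs : s ^ 2 = -31) :
    ((Finset.univ.filter (fun a : ZMod p => a ^ 3 + a + 1 = 0)).card = 3 ∧
      ∃ x y : ℤ, (p : ℤ) = x ^ 2 + x * y + 8 * y ^ 2) ∨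
    ((Finset.univ.filter (fun a : ZMod p => a ^ 3 + a + 1 = 0)).card ≠ 3 ∧
      ∃ x y : ℤ, (p : ℤ) = 2 * x ^ 2 + x * y + 4 * y ^ 2) := by
  have hp := (Fact.out : p.Prime)
  have h20 : (2 : ZMod p) ≠ 0 := by
    intro h
    have := (ZMod.natCast_eq_zero_iff 2 p).mp (by exact_mod_cast h)
    exact hp2 ((Nat.prime_dvd_prime_iff_eq hp Nat.prime_two).mp this)
  obtain ⟨d0, hd0⟩ := ZMod.intCast_surjective ((s + 3) / 2)
  have h2d : 2 * (d0 : ZMod p) = s + 3 := by rw [hd0]; field_simp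
  have hdiv : ∀ d : ℤ, (d : ZMod p) = d0 → (p : ℤ) ∣ d ^ 2 - 3 * d + 10 := by
    intro d hd
    rw [← ZMod.intCast_zmod_eq_zero_iff_dvd]
    push_cast
    rw [hd]
    have : (4 : ZMod p) * ((d0 : ZMod p) ^ 2 - 3 * d0 + 10) = 0 := by
      linear_combination hs + (2 * (d0 : ZMod p) - 6 + s + 3) * h2d
    have h4 : (4 : ZMod p) ≠ 0 := by
      have : (4 : ZMod p) = 2 * 2 := by norm_num
      rw [this]; exact mul_ne_zero h20 h20
    exact (mul_eq_zero.mp this).resolve_left h4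
  have hp3' : ¬ (3 : ℤ) ∣ p := by
    intro h
    have : 3 ∣ p := by exact_mod_cast h
    exact hp3 ((Nat.prime_dvd_prime_iff_eq Nat.prime_three hp).mp this).symm
  obtain ⟨d, hd, hd3⟩ : ∃ d : ℤ, (p : ℤ) ∣ d ^ 2 - 3 * d + 10 ∧ ¬ (3 : ℤ) ∣ d := by
    by_cases h : (3 : ℤ) ∣ d0
    · exact ⟨d0 + p, hdiv _ (by simp), by omega⟩
    · exact ⟨d0, hdiv _ rfl, h⟩
  rw [ne_eq, link p hp2 hp3 hp31 d hd3 hd, ← Ps_prime p hp]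
  obtain ⟨c, hc⟩ := hd
  rcases reduction _ p d c rfl (by exact_mod_cast hp.pos) hc.symm with ⟨h1, h2⟩ | ⟨h1, h2⟩
  · obtain ⟨x, y, _, _, h, _⟩ := h2
    exact Or.inl ⟨h1, x, y, by rw [h]; ring⟩
  · obtain ⟨x, y, _, _, h, _⟩ := h2
    exact Or.inr ⟨h1, x, y, h⟩

lemma no_eight (s t : ℤ) (h : s ^ 2 + 31 * t ^ 2 = 8) : False := by
  have ht : t = 0 := by
    by_contra h0
    have := sq_pos_of_ne_zero h0
    nlinarith [sq_nonneg s]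
  subst ht
  have h1 : s ≤ 2 := by nlinarith
  have h2 : -2 ≤ s := by nlinarith
  interval_cases s <;> omega

lemma not_both (p : ℕ) (hp : p.Prime) (X Y x y : ℤ) (h : (p : ℤ) = X ^ 2 + 31 * Y ^ 2)
    (h' : (p : ℤ) = 2 * x ^ 2 + x * y + 4 * y ^ 2) : False := by
  have hpp := Nat.prime_iff_prime_int.mp hp
  have hp0 : (p : ℤ) ≠ 0 := hpp.ne_zero
  obtain ⟨U, hU⟩ : ∃ U, U = 4 * x + y := ⟨_, rfl⟩
  have h8 : 8 * (p : ℤ) = U ^ 2 + 31 * y ^ 2 := by rw [hU]; linear_combination 8 * h'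
  have key : ∀ Y : ℤ, (p : ℤ) = X ^ 2 + 31 * Y ^ 2 → (p : ℤ) ∣ U * Y - X * y → False := by
    intro Y h hd
    obtain ⟨t, ht⟩ := hd
    have e : 8 * (p : ℤ) ^ 2 = (X * U + 31 * Y * y) ^ 2 + 31 * (U * Y - X * y) ^ 2 := by
      linear_combination p * h8 + (U ^ 2 + 31 * y ^ 2) * h
    have hd2 : (p : ℤ) ∣ X * U + 31 * Y * y := by
      apply hpp.dvd_of_dvd_pow (n := 2)
      refine ⟨8 * p - 31 * p * t ^ 2, ?_⟩
      rw [ht] at e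
      linear_combination - e
    obtain ⟨s, hs⟩ := hd2
    rw [ht, hs] at e
    apply no_eight s t
    have : (p : ℤ) ^ 2 * (s ^ 2 + 31 * t ^ 2) = p ^ 2 * 8 := by linear_combination - e
    exact mul_left_cancel₀ (pow_ne_zero 2 hp0) this
  have hprod : (p : ℤ) ∣ (U * Y - X * y) * (U * (-Y) - X * y) := by
    refine ⟨y ^ 2 - 8 * Y ^ 2, ?_⟩
    linear_combination Y ^ 2 * h8 - y ^ 2 * h
  rcases hpp.dvd_or_dvd hprod with hd | hd
  · exact key Y h hd
  · exact key (-Y) (by rw [h]; ring) hd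

end KCR

theorem kronecker_cubic_reciprocity (p : ℕ) [Fact p.Prime] (hpe : ¬ (p ∣ 2 * 3 * 31)) :
    (Finset.univ.filter (fun a : ZMod p => a ^ 3 + a + 1 = 0)).card = 3 ↔
      ∃ X Y : ℤ, (p : ℤ) = X ^ 2 + 31 * Y ^ 2 := by
  have hp := (Fact.out : p.Prime)
  have hp2 : p ≠ 2 := by rintro rfl; exact hpe (by norm_num)
  have hp3 : p ≠ 3 := by rintro rfl; exact hpe (by norm_num)
  have hp31 : p ≠ 31 := by rintro rfl; exact hpe (by norm_num)
  constructor
  · intro hc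
    obtain ⟨a, b, c, hab, hac, hbc, hS⟩ := Finset.card_eq_three.mp hc
    have hr : ∀ r : ZMod p, r ∈ ({a, b, c} : Finset (ZMod p)) → r ^ 3 + r + 1 = 0 := by
      intro r hr
      rw [← hS] at hr
      exact (Finset.mem_filter.mp hr).2
    have ha := hr a (by simp)
    have hb := hr b (by simp)
    have hc' := hr c (by simp)
    have h1 : a ^ 2 + a * b + b ^ 2 + 1 = 0 := by
      apply (mul_eq_zero.mp (_ : (a - b) * (a ^ 2 + a * b + b ^ 2 + 1) = 0)).resolve_left
        (sub_ne_zero.mpr hab)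
      linear_combination ha - hb
    have h2 : a ^ 2 + a * c + c ^ 2 + 1 = 0 := by
      apply (mul_eq_zero.mp (_ : (a - c) * (a ^ 2 + a * c + c ^ 2 + 1) = 0)).resolve_left
        (sub_ne_zero.mpr hac)
      linear_combination ha - hc'
    have h3 : a + b + c = 0 := by
      apply (mul_eq_zero.mp (_ : (b - c) * (a + b + c) = 0)).resolve_left
        (sub_ne_zero.mpr hbc)
      linear_combination h1 - h2
    have hcc : c = - a - b := by linear_combination h3
    have h4 : a * b * (a + b) = 1 := by linear_combination a * h1 - ha
    have hsq : ((a - b) * (b - c) * (c - a)) ^ 2 = -31 := by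
      have e1 : a ^ 2 + a * b + b ^ 2 = -1 := by linear_combination h1
      have e : ((a - b) * (b - c) * (c - a)) ^ 2
          = 4 * (a ^ 2 + a * b + b ^ 2) ^ 3 - 27 * (a * b * (a + b)) ^ 2 := by
        rw [hcc]; ring
      rw [e, e1, h4]; norm_num
    rcases KCR.dich p hp2 hp3 hp31 _ hsq with ⟨_, x, y, h⟩ | ⟨hn, _⟩
    · have hodd : (p : ℤ) % 2 = 1 := by
        have := hp.eq_two_or_odd.resolve_left hp2
        omega
      have hy : y % 2 = 0 := by
        by_contra hy
        have hy1 : y % 2 = 1 := by omega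
        rw [h] at hodd
        have hx : x % 2 = 0 ∨ x % 2 = 1 := by omega
        rcases hx with hx | hx <;>
          simp [pow_two, Int.add_emod, Int.mul_emod, hx, hy1] at hodd
      obtain ⟨z, rfl⟩ : ∃ z, y = 2 * z := ⟨y / 2, by omega⟩
      exact ⟨x + z, z, by rw [h]; ring⟩
    · exact (hn hc).elim
  · rintro ⟨X, Y, h⟩
    have hY : (Y : ZMod p) ≠ 0 := by
      intro h0
      rw [ZMod.intCast_zmod_eq_zero_iff_dvd] at h0
      have hpp := Nat.prime_iff_prime_int.mp hp
      have hX : (p : ℤ) ∣ X := by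
        apply hpp.dvd_of_dvd_pow (n := 2)
        have e : X ^ 2 = p - 31 * Y * Y := by rw [h]; ring
        rw [e]
        exact dvd_sub (dvd_refl _) (h0.mul_left _)
      obtain ⟨u, hu⟩ := hX
      obtain ⟨v, hv⟩ := h0
      have : (p : ℤ) ∣ 1 := by
        refine ⟨u ^ 2 + 31 * v ^ 2, ?_⟩
        apply mul_left_cancel₀ hpp.ne_zero
        rw [hu, hv] at h
        linear_combination h
      exact hp.one_lt.ne' (by exact_mod_cast (Int.natAbs_dvd_natAbs.mpr this |> Nat.dvd_one.mp))
    have hsq : ((X : ZMod p) / Y) ^ 2 = -31 := by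
      have := congrArg (Int.cast : ℤ → ZMod p) h
      push_cast at this
      rw [ZMod.natCast_self] at this
      field_simp
      linear_combination - this
    rcases KCR.dich p hp2 hp3 hp31 _ hsq with ⟨hc, _⟩ | ⟨_, x, y, h'⟩
    · exact hc
    · exact (KCR.not_both p hp X Y x y h h').elim
end
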